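/- Let T > 0, let q : ℝ → ℝ be T-periodic and locally integrable, let g ∈ C²([0,∞)) satisfy (g*), and let R > 0. Define h : ℝ × ℝ → ℝ by h(t,s) = 0 for s < 0, h(t,s) = q(t) g(s) for 0 ≤ s ≤ R, and h(t,s) = q(t)(g(R) + g'(R)(s − R)) for s > R. Suppose that: (i) there exists a T-periodic solution u* of u'' + h(t,u) = 0 such that the principal eigenvalue λ_0 of the T-periodic problem v'' + (λ + ∂_s h(t, u*(t))) v = 0 is negative, i.e. there exist λ < 0 and a T-periodic function v with v(t) > 0 for all t solving v'' + (λ + ∂_s h(t,u*(t))) v = 0 a.e.; (ii) there exists a T-periodic function α ∈ W^{2,1}_loc(ℝ) with α''(t) + h(t, α(t)) ≥ 0 for a.e. t and α(t) < u*(t) for all t. Then there exists an integer k* ≥ 1 such that for every integer k ≥ k* there exists an integer m_k ≥ 1 such that, for every integer j relatively prime with k and with 1 ≤ j ≤ m_k, the equation u'' + h(t,u) = 0 has two subharmonic solutions u_{k,j}^{(1)}, u_{k,j}^{(2)} of order k, not belonging to the same periodicity class, such that for i = 1,2 the function u_{k,j}^{(i)} − u* has exactly 2j zeros in [0, kT)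 and α(t) ≤ u_{k,j}^{(i)}(t) for all t ∈ ℝ. -/

import Mathlib

open MeasureTheory Set Filter

/-- `u` is a solution of `u'' + F(t,u) = 0`: `u` is of class `C¹` and its derivative `u'`
is locally absolutely continuous (it is the integral of a locally integrable function),
with `u'' + F(t, u(t)) = 0` for a.e. `t`. -/
def IsSol (F : ℝ → ℝ → ℝ) (u : ℝ → ℝ) : Prop :=
  ∃ u' : ℝ → ℝ,
    (∀ t, HasDerivAt u (u' t) t) ∧
    MeasureTheory.LocallyIntegrable (fun s => F s (u s)) MeasureTheory.volume ∧
    ∀ t, u' t = u' 0 - ∫ s in (0:ℝ)..t, F s (u s)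

/-- `q ≻ 0` on `I` : `q ≥ 0` a.e. on `I` and `q ≢ 0` on `I`. -/
def PosOn (q : ℝ → ℝ) (I : Set ℝ) : Prop :=
  (∀ᵐ t ∂(MeasureTheory.volume.restrict I), 0 ≤ q t) ∧
  ¬ (∀ᵐ t ∂(MeasureTheory.volume.restrict I), q t = 0)

/-- Condition `(q*)`: `[0,T]` splits into `m` closed intervals where `q ≻ 0`
separated by `m` closed intervals where `q ≺ 0`. -/
def SignCond (q : ℝ → ℝ) (T : ℝ) (m : ℕ) : Prop :=
  ∃ σ : ℕ → ℝ, σ 0 = 0 ∧ σ (2*m) = T ∧ (∀ i < 2*m, σ i < σ (i+1)) ∧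
    (∀ i < m, PosOn q (Set.Icc (σ (2*i)) (σ (2*i+1)))) ∧
    (∀ i < m, PosOn (fun t => - q t) (Set.Icc (σ (2*i+1)) (σ (2*i+2))))

/-- A subharmonic solution of order `k`: `kT`-periodic but not `ℓT`-periodic
for `ℓ = 1, …, k-1`. -/
def IsSubharmonic (u : ℝ → ℝ) (T : ℝ) (k : ℕ) : Prop :=
  Function.Periodic u (k * T) ∧ ∀ ℓ : ℕ, 1 ≤ ℓ → ℓ < k → ¬ Function.Periodic u (ℓ * T)

/-- `u` and `v` belong to the same periodicity class. -/
def SameClass (u v : ℝ → ℝ) (T : ℝ) : Prop :=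
  ∃ ℓ : ℤ, ∀ t, v t = u (t + ℓ * T)

/-- The truncated nonlinearity `h(t,s)`: `0` for `s < 0`, `q(t)g(s)` for `0 ≤ s ≤ R`,
and `q(t)(g(R) + g'(R)(s-R))` for `s > R`. -/
noncomputable def hExt (q g : ℝ → ℝ) (R : ℝ) : ℝ → ℝ → ℝ := fun t s =>
  if s < 0 then 0
  else if s ≤ R then q t * g s
  else q t * (g R + derivWithin g (Set.Ici 0) R * (s - R))


/-! ### Poincaré–Miranda in dimension two -/

theorem stay_between (g : ℝ → ℝ) (x y lo hi : ℝ)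
    (hc : Continuous g) (h0 : lo < g x ∧ g x < hi)
    (hne : ∀ t ∈ uIcc x y, g t ≠ lo ∧ g t ≠ hi) : lo < g y ∧ g y < hi := by
  have hiv := intermediate_value_uIcc (a := x) (b := y) hc.continuousOn
  constructor
  · by_contra h
    push Not at h
    obtain ⟨t, ht, h1⟩ := hiv (show lo ∈ uIcc (g x) (g y) from by
      rw [mem_uIcc]; right; exact ⟨h, h0.1.le⟩)
    exact (hne t ht).1 h1
  · by_contra h
    push Not at h
    obtain ⟨t, ht, h1⟩ := hiv (show hi ∈ uIcc (g x) (g y) from by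
      rw [mem_uIcc]; left; exact ⟨h0.2.le, h⟩)
    exact (hne t ht).2 h1

theorem cos_ne_of (m : ℤ) (a : ℝ) (h : Real.cos a ≠ 0) : a ≠ m * Real.pi + Real.pi / 2 := by
  rintro rfl
  apply h
  rw [Real.cos_eq_zero_iff]
  exact ⟨m, by ring⟩

theorem sin_ne_of (m : ℤ) (a : ℝ) (h : Real.sin a ≠ 0) : a ≠ m * Real.pi := by
  rintro rfl
  apply h
  exact Real.sin_int_mul_pi m

theorem poincare_miranda (A : ℝ) (hA : 0 < A) (F G : ℝ × ℝ → ℝ) (hF : Continuous F)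
    (hG : Continuous G)
    (hl : ∀ s ∈ Icc (-1:ℝ) 1, F (-A, s) < 0) (hr : ∀ s ∈ Icc (-1:ℝ) 1, 0 < F (A, s))
    (hb : ∀ x ∈ Icc (-A) A, G (x, -1) < 0) (ht : ∀ x ∈ Icc (-A) A, 0 < G (x, 1)) :
    ∃ p : ℝ × ℝ, p.1 ∈ Icc (-A) A ∧ p.2 ∈ Icc (-1:ℝ) 1 ∧ F p = 0 ∧ G p = 0 := by
  by_contra hcon
  push Not at hcon
  let c : ℝ × ℝ → ℝ × ℝ := fun p => (max (-A) (min A p.1), max (-1) (min 1 p.2))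
  have hc : Continuous c := by fun_prop
  have hcm : ∀ p, (c p).1 ∈ Icc (-A) A ∧ (c p).2 ∈ Icc (-1:ℝ) 1 := by
    intro p
    refine ⟨⟨le_max_left _ _, max_le (by linarith) (min_le_left _ _)⟩,
      ⟨le_max_left _ _, max_le (by norm_num) (min_le_left _ _)⟩⟩
  have hcid : ∀ p : ℝ × ℝ, p.1 ∈ Icc (-A) A → p.2 ∈ Icc (-1:ℝ) 1 → c p = p := by
    rintro ⟨x, y⟩ hx hy
    simp only [mem_Icc] at hx hy
    ext
    · simp [c, hx.1, hx.2]
    · simp [c, hy.1, hy.2]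
  let H : ℝ × ℝ → ℂ := fun p => ⟨F (c p), G (c p)⟩
  have hH : Continuous H := by
    have : H = fun p => ((F (c p) : ℝ) : ℂ) + ((G (c p) : ℝ) : ℂ) * Complex.I := by
      ext p; apply Complex.ext <;> simp [H]
    rw [this]
    fun_prop
  have hH0 : (0:ℂ) ∉ H '' univ := by
    rintro ⟨p, -, hp⟩
    have h1 := congrArg Complex.re hp
    have h2 := congrArg Complex.im hp
    exact hcon (c p) (hcm p).1 (hcm p).2 h1 h2
  have hsc : IsSimplyConnected (univ : Set (ℝ × ℝ)) := by
    have : ContractibleSpace (univ : Set (ℝ × ℝ)) :=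
      (Homeomorph.Set.univ (ℝ × ℝ)).toHomotopyEquiv.contractibleSpace
    show SimplyConnectedSpace (univ : Set (ℝ × ℝ))
    infer_instance
  obtain ⟨f, hfc, hf⟩ := Complex.exists_continuousOn_eqOn_exp_comp hsc isOpen_univ
    hH.continuousOn hH0
  rw [continuousOn_univ] at hfc
  have hre : ∀ x y, x ∈ Icc (-A) A → y ∈ Icc (-1:ℝ) 1 →
      Real.exp (f (x, y)).re * Real.cos (f (x, y)).im = F (x, y) := by
    intro x y hx hy
    have := congrArg Complex.re (hf (mem_univ (x, y)))
    simp only [Function.comp, Complex.exp_re, H] at this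
    rw [this, hcid (x, y) hx hy]
  have him : ∀ x y, x ∈ Icc (-A) A → y ∈ Icc (-1:ℝ) 1 →
      Real.exp (f (x, y)).re * Real.sin (f (x, y)).im = G (x, y) := by
    intro x y hx hy
    have := congrArg Complex.im (hf (mem_univ (x, y)))
    simp only [Function.comp, Complex.exp_im, H] at this
    rw [this, hcid (x, y) hx hy]
  let a : ℝ → ℝ → ℝ := fun x y => (f (x, y)).im
  have hac1 : ∀ y, Continuous fun x => a x y := fun y => by
    simp only [a]; fun_prop
  have hac2 : ∀ x, Continuous fun y => a x y := fun x => by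
    simp only [a]; fun_prop
  have mA : A ∈ Icc (-A) A := ⟨by linarith, le_rfl⟩
  have mA' : -A ∈ Icc (-A) A := ⟨le_rfl, by linarith⟩
  have m1 : (1:ℝ) ∈ Icc (-1:ℝ) 1 := by norm_num
  have m1' : (-1:ℝ) ∈ Icc (-1:ℝ) 1 := by norm_num
  have cr : ∀ y ∈ Icc (-1:ℝ) 1, 0 < Real.cos (a A y) := fun y hy => by
    have := hre A y mA hy
    exact (mul_pos_iff_of_pos_left (Real.exp_pos _)).1 (this ▸ hr y hy)
  have cl : ∀ y ∈ Icc (-1:ℝ) 1, Real.cos (a (-A) y) < 0 := fun y hy => by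
    have := hre (-A) y mA' hy
    exact (pos_iff_neg_of_mul_neg (this ▸ hl y hy)).1 (Real.exp_pos _)
  have st : ∀ x ∈ Icc (-A) A, 0 < Real.sin (a x 1) := fun x hx => by
    have := him x 1 hx m1
    exact (mul_pos_iff_of_pos_left (Real.exp_pos _)).1 (this ▸ ht x hx)
  have sb : ∀ x ∈ Icc (-A) A, Real.sin (a x (-1)) < 0 := fun x hx => by
    have := him x (-1) hx m1'
    exact (pos_iff_neg_of_mul_neg (this ▸ hb x hx)).1 (Real.exp_pos _)
  have pi0 := Real.pi_pos
  -- base corner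
  obtain ⟨m, hm⟩ : ∃ m : ℤ, (2*m) * Real.pi - Real.pi ≤ a A (-1) ∧
      a A (-1) < (2*m) * Real.pi + Real.pi := by
    refine ⟨⌊(a A (-1) + Real.pi) / (2 * Real.pi)⌋, ?_, ?_⟩
    · have := Int.floor_le ((a A (-1) + Real.pi) / (2 * Real.pi))
      rw [le_div_iff₀ (by positivity)] at this
      linarith
    · have := Int.lt_floor_add_one ((a A (-1) + Real.pi) / (2 * Real.pi))
      rw [div_lt_iff₀ (by positivity)] at this
      linarith
  have hsn : ∀ z : ℝ, Real.sin z = Real.sin (z - (2*m) * Real.pi) := fun z => by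
    rw [show z - (2*m) * Real.pi = z - m * (2 * Real.pi) by ring, Real.sin_sub_int_mul_two_pi]
  have hcn : ∀ z : ℝ, Real.cos z = Real.cos (z - (2*m) * Real.pi) := fun z => by
    rw [show z - (2*m) * Real.pi = z - m * (2 * Real.pi) by ring, Real.cos_sub_int_mul_two_pi]
  set M : ℝ := (2*m) * Real.pi with hM
  have h0 : -(Real.pi/2) < a A (-1) - M ∧ a A (-1) - M < 0 := by
    have h1 := sb A mA
    have h2 := cr (-1) m1'
    rw [hsn] at h1
    rw [hcn] at h2
    constructor
    · by_contra h
      push Not at h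
      have := Real.cos_nonneg_of_neg_pi_div_two_le_of_le
        (x := -(a A (-1) - M) - Real.pi) (by linarith) (by linarith)
      rw [Real.cos_sub_pi, Real.cos_neg] at this
      linarith
    · by_contra h
      push Not at h
      have := Real.sin_nonneg_of_nonneg_of_le_pi h (by linarith)
      linarith
  have cne : ∀ (j : ℤ) (z : ℝ), Real.cos z ≠ 0 → z ≠ M + j * Real.pi + Real.pi/2 := by
    intro j z hz h
    apply cos_ne_of (2*m+j) z hz
    rw [h, hM]; push_cast; ring
  have sne : ∀ (j : ℤ) (z : ℝ), Real.sin z ≠ 0 → z ≠ M + j * Real.pi := by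
    intro j z hz h
    apply sin_ne_of (2*m+j) z hz
    rw [h, hM]; push_cast; ring
  -- right edge
  have h1 := stay_between (fun y => a A y) (-1) 1 (M + (-1:ℤ) * Real.pi + Real.pi/2)
    (M + (0:ℤ) * Real.pi + Real.pi/2)
    (hac2 A) ⟨by push_cast; linarith, by push_cast; linarith⟩ (fun t ht' => by
      have := (cr t (by rwa [uIcc_of_le (by norm_num)] at ht')).ne'
      exact ⟨cne _ _ this, cne _ _ this⟩)
  push_cast at h1
  have h1' : 0 < a A 1 - M := by
    by_contra h
    push Not at h
    have h3 := st A mA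
    rw [hsn] at h3
    have := Real.sin_nonneg_of_nonneg_of_le_pi (x := -(a A 1 - M)) (by linarith) (by linarith)
    rw [Real.sin_neg] at this
    linarith
  have h2 := stay_between (fun x => a x 1) A (-A) (M + (0:ℤ) * Real.pi) (M + (1:ℤ) * Real.pi)
    (hac1 1) ⟨by push_cast; linarith, by push_cast; linarith⟩ (fun t ht' => by
      have := (st t (by rwa [uIcc_of_ge (by linarith)] at ht')).ne'
      exact ⟨sne _ _ this, sne _ _ this⟩)
  push_cast at h2
  have h2' : Real.pi/2 < a (-A) 1 - M := by
    by_contra h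
    push Not at h
    have h3 := cl 1 m1
    rw [hcn] at h3
    have := Real.cos_nonneg_of_neg_pi_div_two_le_of_le (x := (a (-A) 1 - M))
      (by linarith) (by linarith)
    linarith
  have h3 := stay_between (fun y => a (-A) y) 1 (-1) (M + (0:ℤ) * Real.pi + Real.pi/2)
    (M + (1:ℤ) * Real.pi + Real.pi/2)
    (hac2 (-A)) ⟨by push_cast; linarith, by push_cast; linarith⟩ (fun t ht' => by
      have := (cl t (by rwa [uIcc_of_ge (by norm_num)] at ht')).ne
      exact ⟨cne _ _ this, cne _ _ this⟩)
  push_cast at h3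
  have h3' : Real.pi < a (-A) (-1) - M := by
    by_contra h
    push Not at h
    have h3 := sb (-A) mA'
    rw [hsn] at h3
    have := Real.sin_nonneg_of_nonneg_of_le_pi (x := (a (-A) (-1) - M)) (by linarith) h
    linarith
  have h4 := stay_between (fun x => a x (-1)) (-A) A (M + (1:ℤ) * Real.pi) (M + (2:ℤ) * Real.pi)
    (hac1 (-1)) ⟨by push_cast; linarith, by push_cast; linarith⟩ (fun t ht' => by
      have := (sb t (by rwa [uIcc_of_le (by linarith)] at ht')).ne
      exact ⟨sne _ _ this, sne _ _ this⟩)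
  push_cast at h4
  linarith

/-! ### Functions with locally integrable second derivative -/

theorem LI.ii {ρ : ℝ → ℝ} (h : LocallyIntegrable ρ volume) (a b : ℝ) :
    IntervalIntegrable ρ volume a b :=
  (h.integrableOn_isCompact isCompact_uIcc).intervalIntegrable

theorem LI.of_cont {u : ℝ → ℝ} (hu : Continuous u) : LocallyIntegrable u volume :=
  hu.locallyIntegrable

theorem LI.mul_cont {ρ u : ℝ → ℝ} (h : LocallyIntegrable ρ volume) (hu : Continuous u) :
    LocallyIntegrable (fun t => ρ t * u t) volume := by
  rw [locallyIntegrable_iff]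
  intro k hk
  exact (h.integrableOn_isCompact hk).mul_continuousOn hu.continuousOn hk

theorem LI.abs {ρ : ℝ → ℝ} (h : LocallyIntegrable ρ volume) :
    LocallyIntegrable (fun t => |ρ t|) volume :=
  h.mono h.aestronglyMeasurable.norm (by simp)

theorem LI.cont_prim {ρ : ℝ → ℝ} (h : LocallyIntegrable ρ volume) (a : ℝ) :
    Continuous fun t => ∫ s in a..t, ρ s :=
  intervalIntegral.continuous_primitive (fun a b => LI.ii h a b) a

theorem LI.comp_neg {ρ : ℝ → ℝ} (h : LocallyIntegrable ρ volume) (c : ℝ) :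
    LocallyIntegrable (fun t => ρ (c - t)) volume := by
  have hmp : MeasurePreserving (fun t : ℝ => c - t) volume volume :=
    Measure.measurePreserving_sub_left volume c
  rw [locallyIntegrable_iff]
  intro k hk
  have h2 : IsCompact ((fun t : ℝ => c - t) '' k) := hk.image (by fun_prop)
  have := h.integrableOn_isCompact h2
  have h3 := (hmp.integrableOn_comp_preimage (Homeomorph.subLeft c).measurableEmbedding).2 this
  exact h3.mono_set (subset_preimage_image _ _)

theorem LI.comp_add {ρ : ℝ → ℝ} (h : LocallyIntegrable ρ volume) (c : ℝ) :
    LocallyIntegrable (fun t => ρ (t + c)) volume := by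
  have := LI.comp_neg (LI.comp_neg h c) 0
  convert this using 2 with t
  ring_nf

/-- `u` is `C¹` with derivative `u'`, which is an integral of `ρ`. -/
def D2 (u u' ρ : ℝ → ℝ) : Prop :=
  (∀ t, HasDerivAt u (u' t) t) ∧ LocallyIntegrable ρ volume ∧
    ∀ t, u' t = u' 0 + ∫ s in (0:ℝ)..t, ρ s

namespace D2
variable {u u' ρ v v' σ : ℝ → ℝ}

theorem diff (h : D2 u u' ρ) (a b : ℝ) : u' b - u' a = ∫ s in a..b, ρ s := by
  rw [h.2.2 b, h.2.2 a, ← intervalIntegral.integral_interval_sub_left (LI.ii h.2.1 0 b)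
    (LI.ii h.2.1 0 a)]
  ring

theorem cont (h : D2 u u' ρ) : Continuous u :=
  continuous_iff_continuousAt.2 fun t => (h.1 t).continuousAt

theorem cont' (h : D2 u u' ρ) : Continuous u' := by
  have : u' = fun t => u' 0 + ∫ s in (0:ℝ)..t, ρ s := funext h.2.2
  rw [this]
  exact continuous_const.add (LI.cont_prim h.2.1 0)

theorem add (h : D2 u u' ρ) (k : D2 v v' σ) :
    D2 (fun t => u t + v t) (fun t => u' t + v' t) (fun t => ρ t + σ t) := by
  refine ⟨fun t => (h.1 t).add (k.1 t), h.2.1.add k.2.1, fun t => ?_⟩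
  rw [intervalIntegral.integral_add (LI.ii h.2.1 _ _) (LI.ii k.2.1 _ _)]
  linarith [h.2.2 t, k.2.2 t]

theorem neg (h : D2 u u' ρ) :
    D2 (fun t => - u t) (fun t => - u' t) (fun t => - ρ t) := by
  refine ⟨fun t => (h.1 t).neg, h.2.1.neg, fun t => ?_⟩
  rw [intervalIntegral.integral_neg]
  linarith [h.2.2 t]

theorem sub (h : D2 u u' ρ) (k : D2 v v' σ) :
    D2 (fun t => u t - v t) (fun t => u' t - v' t) (fun t => ρ t - σ t) := by
  simpa [sub_eq_add_neg] using h.add k.neg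

theorem addc (h : D2 u u' ρ) (c : ℝ) : D2 (fun t => u t + c) u' ρ :=
  ⟨fun t => (h.1 t).add_const c, h.2⟩

theorem congr_ae (h : D2 u u' ρ) (e : ρ =ᵐ[volume] σ) : D2 u u' σ := by
  refine ⟨h.1, h.2.1.congr e, fun t => ?_⟩
  rw [h.2.2 t]
  congr 1
  apply intervalIntegral.integral_congr_ae
  filter_upwards [e] with x hx _ using hx

theorem refl (h : D2 u u' ρ) (c : ℝ) :
    D2 (fun t => u (c - t)) (fun t => - u' (c - t)) (fun t => ρ (c - t)) := by
  refine ⟨fun t => ?_, LI.comp_neg h.2.1 c, fun t => ?_⟩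
  · have := (h.1 (c - t)).comp t ((hasDerivAt_id t).const_sub c)
    simp only [mul_neg, mul_one] at this
    exact this
  · rw [intervalIntegral.integral_comp_sub_left (fun x => ρ x), ← h.diff]
    ring

theorem shift (h : D2 u u' ρ) (c : ℝ) :
    D2 (fun t => u (t + c)) (fun t => u' (t + c)) (fun t => ρ (t + c)) := by
  have := (h.refl c).refl 0
  convert this using 2 with t t
  · ring_nf
  · ring_nf
  · ring_nf

theorem per' (h : D2 u u' ρ) {P : ℝ} (hp : Function.Periodic u P) : Function.Periodic u' P := by
  intro t
  have h1 := h.1 (t + P)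
  have h2 : HasDerivAt (fun x => u (x + P)) (u' (t + P)) t := by
    simpa using h1.comp_add_const t P
  have : (fun x => u (x + P)) = u := funext hp
  rw [this] at h2
  exact h2.unique (h.1 t)
end D2

/-- integration by parts with an `L¹` derivative -/
theorem ibp {I ρ φ φ' : ℝ → ℝ} (hρ : LocallyIntegrable ρ volume)
    (hI : ∀ t, I t = I 0 + ∫ s in (0:ℝ)..t, ρ s) (hφ : ∀ t, HasDerivAt φ (φ' t) t)
    (hφ' : Continuous φ') (a b : ℝ) :
    ∫ s in a..b, (ρ s * φ s + I s * φ' s) = I b * φ b - I a * φ a := by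
  have h0 : I = fun t => I a + ∫ s in a..t, ρ s := by
    funext t
    rw [hI t, hI a, ← intervalIntegral.integral_interval_sub_left (LI.ii hρ 0 t) (LI.ii hρ 0 a)]
    ring
  have h1 : AbsolutelyContinuousOnInterval I a b := by
    have h2 := (LI.ii hρ a b).absolutelyContinuousOnInterval_intervalIntegral
      (c := a) left_mem_uIcc
    have h3 : AbsolutelyContinuousOnInterval (fun _ : ℝ => I a) a b :=
      (contDiff_const (n := 1)).contDiffOn.absolutelyContinuousOnInterval
    have := h3.add h2
    rw [h0]
    exact this
  have h2 : AbsolutelyContinuousOnInterval φ a b := by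
    apply ContDiffOn.absolutelyContinuousOnInterval
    apply ContDiff.contDiffOn
    rw [contDiff_one_iff_deriv]
    refine ⟨fun t => (hφ t).differentiableAt, ?_⟩
    have : deriv φ = φ' := funext fun t => (hφ t).deriv
    rwa [this]
  rw [← h1.integral_deriv_mul_eq_sub h2]
  apply intervalIntegral.integral_congr_ae
  have := LocallyIntegrable.ae_hasDerivAt_integral hρ
  filter_upwards [this] with x hx _
  have h3 : HasDerivAt I (ρ x) x := by
    rw [h0]
    exact (hx a).const_add _
  rw [h3.deriv, (hφ x).deriv]

theorem int_mono_ae {f g : ℝ → ℝ} (hf : LocallyIntegrable f volume)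
    (hg : LocallyIntegrable g volume) {a b : ℝ} (hab : a ≤ b)
    (h : ∀ᵐ s, s ∈ Icc a b → f s ≤ g s) : ∫ s in a..b, f s ≤ ∫ s in a..b, g s := by
  apply intervalIntegral.integral_mono_ae_restrict hab (LI.ii hf _ _) (LI.ii hg _ _)
  exact (ae_restrict_iff' measurableSet_Icc).2 h

theorem int_nonneg_ae {f : ℝ → ℝ} {a b : ℝ} (hab : a ≤ b)
    (h : ∀ᵐ s, s ∈ Icc a b → 0 ≤ f s) : 0 ≤ ∫ s in a..b, f s := by
  apply intervalIntegral.integral_nonneg_of_ae_restrict hab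
  exact (ae_restrict_iff' measurableSet_Icc).2 h

/-! ### Maximum principle -/

theorem pos_right {z z' ρ : ℝ → ℝ} {t0 : ℝ} (hz : D2 z z' ρ) (h0 : 0 < z t0) (h1 : 0 ≤ z' t0)
    (hρ : ∀ᵐ s, t0 ≤ s → (∀ x ∈ Icc t0 s, 0 < z x) → 0 ≤ ρ s) :
    ∀ t, t0 ≤ t → z t0 ≤ z t ∧ 0 ≤ z' t := by
  have key : ∀ t1, t0 ≤ t1 → (∀ x ∈ Ico t0 t1, 0 < z x) → z t0 ≤ z t1 ∧ 0 ≤ z' t1 := by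
    intro t1 ht1 hx
    have hd : ∀ x ∈ Icc t0 t1, 0 ≤ z' x := by
      intro x hxm
      have h2 := hz.diff t0 x
      have h3 : 0 ≤ ∫ s in t0..x, ρ s := by
        have hne : ∀ᵐ s : ℝ, s ≠ t1 := by
          simp [ae_iff]
        apply int_nonneg_ae hxm.1
        filter_upwards [hρ, hne] with s hs hs1 hsm
        exact hs hsm.1 fun y hy => hx y ⟨hy.1, lt_of_le_of_lt hy.2
            (lt_of_le_of_ne (hsm.2.trans hxm.2) hs1)⟩
      linarith
    refine ⟨?_, hd t1 ⟨ht1, le_rfl⟩⟩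
    have hm : MonotoneOn z (Icc t0 t1) := by
      apply monotoneOn_of_hasDerivWithinAt_nonneg (convex_Icc _ _) hz.cont.continuousOn
        (f' := z') (fun x _ => (hz.1 x).hasDerivWithinAt)
      intro x hx'
      exact hd x (interior_subset hx')
    exact hm ⟨le_rfl, ht1⟩ ⟨ht1, le_rfl⟩ ht1
  have hpos : ∀ t, t0 ≤ t → 0 < z t := by
    by_contra hcon
    push Not at hcon
    obtain ⟨t1, ht1, hzt⟩ := hcon
    let S := Icc t0 t1 ∩ {x | z x ≤ 0}
    have hSc : IsCompact S := isCompact_Icc.inter_right (isClosed_le hz.cont continuous_const)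
    obtain ⟨t2, ht2, hmin⟩ := hSc.exists_isLeast ⟨t1, ⟨ht1, le_rfl⟩, hzt⟩
    have := key t2 ht2.1.1 (fun x hx => by
      by_contra hc
      push Not at hc
      have := hmin (show x ∈ S from ⟨⟨hx.1, hx.2.le.trans ht2.1.2⟩, hc⟩)
      exact absurd hx.2 (not_lt.2 this))
    have h3 : z t2 ≤ 0 := ht2.2
    linarith [this.1]
  intro t ht
  exact key t ht fun x hx => hpos x hx.1

theorem core_right {z z' ρ : ℝ → ℝ} {t0 P κ : ℝ} (hP : 0 < P) (hz : D2 z z' ρ)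
    (hper : Function.Periodic z P) (h0 : 0 < z t0) (h1 : 0 ≤ z' t0) (hκ : 0 < κ)
    (hρ : ∀ᵐ s, t0 ≤ s → (∀ x ∈ Icc t0 s, 0 < z x) → κ * z s ≤ ρ s) : False := by
  have hpos := pos_right hz h0 h1 (by
    filter_upwards [hρ] with s hs h2 h3
    exact le_trans (mul_nonneg hκ.le (h3 s ⟨h2, le_rfl⟩).le) (hs h2 h3))
  have h2 := hz.diff t0 (t0 + P)
  rw [hz.per' hper t0, sub_self] at h2
  have h3 : ∫ s in t0..(t0+P), κ * z t0 ≤ ∫ s in t0..(t0+P), ρ s := by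
    apply int_mono_ae (LI.of_cont continuous_const) hz.2.1 (by linarith)
    filter_upwards [hρ] with s hs hsm
    refine le_trans ?_ (hs hsm.1 fun x hx => lt_of_lt_of_le h0 (hpos x hx.1).1)
    exact mul_le_mul_of_nonneg_left (hpos s hsm.1).1 hκ.le
  rw [← h2] at h3
  simp at h3
  have : 0 < P * (κ * z t0) := by positivity
  linarith

theorem ae_refl {p : ℝ → Prop} (c : ℝ) (h : ∀ᵐ s, p s) : ∀ᵐ s : ℝ, p (c - s) :=
  (Measure.measurePreserving_sub_left volume c).quasiMeasurePreserving.ae h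

theorem core {z z' ρ : ℝ → ℝ} {t0 P κ : ℝ} (hP : 0 < P) (hz : D2 z z' ρ)
    (hper : Function.Periodic z P) (h0 : 0 < z t0) (hκ : 0 < κ)
    (hρ : ∀ᵐ s, (∀ x ∈ uIcc t0 s, 0 < z x) → κ * z s ≤ ρ s) : False := by
  rcases le_total 0 (z' t0) with h1 | h1
  · apply core_right hP hz hper h0 h1 hκ
    filter_upwards [hρ] with s hs h2 h3
    rw [uIcc_of_le h2] at hs
    exact hs h3
  · apply core_right (t0 := t0) hP (hz.refl (2 * t0)) (κ := κ) ?_ ?_ ?_ hκ ?_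
    · intro t
      have := hper (2 * t0 - (t + P))
      simp only
      rw [← this]; ring_nf
    · ring_nf; exact h0
    · ring_nf; linarith
    · filter_upwards [ae_refl (2 * t0) hρ] with s hs h2 h3
      apply hs
      intro x hx
      rw [uIcc_of_ge (by linarith)] at hx
      have := h3 (2 * t0 - x) ⟨by linarith [hx.2], by linarith [hx.1]⟩
      simpa using this

theorem const_right {z z' ρ : ℝ → ℝ} {t0 P : ℝ} (hP : 0 < P) (hz : D2 z z' ρ)
    (hper : Function.Periodic z P) (h0 : 0 < z t0) (h1 : 0 ≤ z' t0)
    (hρ : ∀ᵐ s, 0 < z s → 0 ≤ ρ s) : ∀ t, z t = z t0 := by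
  have hpos := pos_right hz h0 h1 (by
    filter_upwards [hρ] with s hs h2 h3
    exact hs (h3 s ⟨h2, le_rfl⟩))
  have hm : MonotoneOn z (Ici t0) := by
    apply monotoneOn_of_hasDerivWithinAt_nonneg (convex_Ici _) hz.cont.continuousOn
      (f' := z') (fun x _ => (hz.1 x).hasDerivWithinAt)
    intro x hx'
    exact (hpos x (interior_subset hx')).2
  intro t
  obtain ⟨y, hy, hyt⟩ := hper.exists_mem_Ico hP t t0
  rw [hyt]
  apply le_antisymm
  · have := hm (show y ∈ Ici t0 from hy.1) (show t0 + P ∈ Ici t0 by simp [hP.le]) hy.2.le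
    rwa [hper t0] at this
  · exact (hpos y hy.1).1

theorem const_core {z z' ρ : ℝ → ℝ} {t0 P : ℝ} (hP : 0 < P) (hz : D2 z z' ρ)
    (hper : Function.Periodic z P) (h0 : 0 < z t0)
    (hρ : ∀ᵐ s, 0 < z s → 0 ≤ ρ s) : ∀ t, z t = z t0 := by
  rcases le_total 0 (z' t0) with h1 | h1
  · exact const_right hP hz hper h0 h1 hρ
  · have := const_right (t0 := t0) hP (hz.refl (2 * t0)) ?_ ?_ ?_ ?_
    · intro t
      have := this (2 * t0 - t)
      ring_nf at this
      exact this
    · intro t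
      have := hper (2 * t0 - (t + P))
      simp only
      rw [← this]; ring_nf
    · ring_nf; exact h0
    · ring_nf; linarith
    · exact ae_refl (2 * t0) hρ

/-! ### Gronwall -/

theorem gron_step {y y' ρ L : ℝ → ℝ} (hy : D2 y y' ρ) (hL : LocallyIntegrable L volume)
    (hL0 : ∀ t, 0 ≤ L t) (hρ : ∀ᵐ s, |ρ s| ≤ L s * |y s|) {a b : ℝ} (hab : a ≤ b)
    (hs : ∫ s in a..b, (1 + L s) ≤ 1 / 2) :
    |y b| + |y' b| ≤ 2 * (|y a| + |y' a|) := by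
  have c1 := hy.cont
  have c2 := hy.cont'
  obtain ⟨t, ht, hmax⟩ := isCompact_Icc.exists_isMaxOn (nonempty_Icc.2 hab)
    (show ContinuousOn (fun t => |y t| + |y' t|) (Icc a b) by fun_prop)
  have hL1 : LocallyIntegrable (fun s => 1 + L s) volume :=
    (LI.of_cont continuous_const).add hL
  set S := |y t| + |y' t| with hS
  have hSb : ∀ s ∈ Icc a b, |y s| + |y' s| ≤ S := fun s hs => hmax hs
  have hS0 : 0 ≤ S := by positivity
  have e1 : y t - y a = ∫ s in a..t, y' s :=
    (intervalIntegral.integral_eq_sub_of_hasDerivAt (fun x _ => hy.1 x)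
      (c2.intervalIntegrable _ _)).symm
  have e2 := hy.diff a t
  have b1 : |y t - y a| ≤ ∫ s in a..t, |y' s| := by
    rw [e1]; exact intervalIntegral.abs_integral_le_integral_abs ht.1
  have b2 : |y' t - y' a| ≤ ∫ s in a..t, |ρ s| := by
    rw [e2]; exact intervalIntegral.abs_integral_le_integral_abs ht.1
  have b3 : (∫ s in a..t, |y' s|) + (∫ s in a..t, |ρ s|) ≤ ∫ s in a..t, (1 + L s) * S := by
    rw [← intervalIntegral.integral_add (LI.ii (LI.of_cont c2.abs) _ _)
      (LI.ii (LI.abs hy.2.1) _ _)]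
    apply int_mono_ae ((LI.of_cont c2.abs).add (LI.abs hy.2.1))
      (LI.mul_cont hL1 continuous_const) ht.1
    filter_upwards [hρ] with s hs hsm
    have := hSb s ⟨hsm.1, hsm.2.trans ht.2⟩
    have h3 : L s * |y s| ≤ L s * S :=
      mul_le_mul_of_nonneg_left (by linarith [abs_nonneg (y' s)]) (hL0 s)
    have h4 : |y' s| ≤ S := by linarith [abs_nonneg (y s)]
    simp only [Pi.add_apply, Real.norm_eq_abs]
    linarith
  have b4 : ∫ s in a..t, (1 + L s) * S ≤ 1 / 2 * S := by
    rw [intervalIntegral.integral_mul_const]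
    apply mul_le_mul_of_nonneg_right _ hS0
    refine le_trans ?_ hs
    apply intervalIntegral.integral_mono_interval le_rfl ht.1 ht.2 _ (LI.ii hL1 _ _)
    exact Eventually.of_forall fun s => by have := hL0 s; simp; linarith
  have b5 := abs_sub_abs_le_abs_sub (y t) (y a)
  have b6 := abs_sub_abs_le_abs_sub (y' t) (y' a)
  have b7 := hSb b ⟨hab, le_rfl⟩
  linarith

theorem gron {y y' ρ L : ℝ → ℝ} (hy : D2 y y' ρ) (hL : LocallyIntegrable L volume)
    (hL0 : ∀ t, 0 ≤ L t) (hρ : ∀ᵐ s, |ρ s| ≤ L s * |y s|) {a : ℝ} (n : ℕ) :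
    ∀ b, a ≤ b → ∫ s in a..b, (1 + L s) ≤ n / 2 →
    |y b| + |y' b| ≤ 2 ^ n * (|y a| + |y' a|) := by
  have hL1 : LocallyIntegrable (fun s => 1 + L s) volume :=
    (LI.of_cont continuous_const).add hL
  induction n with
  | zero =>
    intro b hab h
    have h2 : ∫ s in a..b, (1:ℝ) ≤ ∫ s in a..b, (1 + L s) :=
      int_mono_ae (LI.of_cont continuous_const) hL1 hab
        (Eventually.of_forall fun s _ => by linarith [hL0 s])
    simp at h2 h
    have : b = a := by linarith
    subst this
    simp
  | succ n ih =>
    intro b hab h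
    obtain ⟨c, hc, hcn⟩ : ∃ c ∈ Icc a b, (∫ s in a..c, (1 + L s)) ≤ n / 2 ∧
        (∫ s in c..b, (1 + L s)) ≤ 1 / 2 := by
      by_cases h3 : ∫ s in a..b, (1 + L s) ≤ n / 2
      · exact ⟨b, ⟨hab, le_rfl⟩, h3, by simp⟩
      · push Not at h3
        obtain ⟨c, hc, h4⟩ := intermediate_value_Icc hab (LI.cont_prim hL1 a).continuousOn
          (show (n:ℝ)/2 ∈ _ from ⟨by simp; positivity, h3.le⟩)
        refine ⟨c, hc, h4.le, ?_⟩
        rw [← intervalIntegral.integral_interval_sub_left (LI.ii hL1 a b) (LI.ii hL1 a c)]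
        simp only at h4
        rw [h4]
        push_cast at h
        linarith
    have h5 := ih c hc.1 hcn.1
    have h6 := gron_step hy hL hL0 hρ hc.2 hcn.2
    rw [pow_succ]
    nlinarith

theorem uc {y y' ρ L : ℝ → ℝ} (hy : D2 y y' ρ) (hL : LocallyIntegrable L volume)
    (hL0 : ∀ t, 0 ≤ L t) (hρ : ∀ᵐ s, |ρ s| ≤ L s * |y s|) {a : ℝ} (h0 : y a = 0)
    (h1 : y' a = 0) : ∀ t, y t = 0 := by
  have key : ∀ {y y' ρ L : ℝ → ℝ} (hy : D2 y y' ρ) (hL : LocallyIntegrable L volume)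
    (hL0 : ∀ t, 0 ≤ L t) (hρ : ∀ᵐ s, |ρ s| ≤ L s * |y s|) {a : ℝ} (h0 : y a = 0)
    (h1 : y' a = 0), ∀ t, a ≤ t → y t = 0 := by
    intro y y' ρ L hy hL hL0 hρ a h0 h1 t hat
    obtain ⟨n, hn⟩ := exists_nat_ge (2 * ∫ s in a..t, (1 + L s))
    have := gron hy hL hL0 hρ n t hat (by linarith)
    rw [h0, h1] at this
    simp at this
    have h3 := abs_nonneg (y t)
    have h4 := abs_nonneg (y' t)
    exact abs_eq_zero.1 (by linarith)
  intro t
  rcases le_total a t with h | h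
  · exact key hy hL hL0 hρ h0 h1 t h
  · have := key (hy.refl (2 * a)) (LI.comp_neg hL (2 * a)) (fun t => hL0 _)
      (ae_refl (2 * a) hρ) (a := a) (by ring_nf; exact h0) (by ring_nf; simp [h1])
      (2 * a - t) (by linarith)
    simpa using this

/-! ### Periodic resolvent -/

theorem first_order {P : ℝ} {b r : ℝ → ℝ} (hb : Continuous b)
    (hbp : Function.Periodic b P) (hbP : ∫ s in (0:ℝ)..P, b s ≠ 0)
    (hr : LocallyIntegrable r volume) (hrp : Function.Periodic r P) :
    ∃ y : ℝ → ℝ, Continuous y ∧ Function.Periodic y P ∧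
      ∀ t, y t = y 0 + ∫ s in (0:ℝ)..t, (-r s - b s * y s) := by
  set β : ℝ → ℝ := fun t => ∫ s in (0:ℝ)..t, b s with hβ
  have hβd : ∀ t, HasDerivAt β (b t) t := fun t => hb.integral_hasStrictDerivAt 0 t |>.hasDerivAt
  have hβc : Continuous β := continuous_iff_continuousAt.2 fun t => (hβd t).continuousAt
  have hβ0 : β 0 = 0 := by simp [hβ]
  have hβp : ∀ t, β (t + P) = β t + β P := fun t => by
    have := hbp.intervalIntegral_add_eq_add 0 t (fun a c => hb.intervalIntegrable a c)
    rw [zero_add] at this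
    exact this
  have hk : LocallyIntegrable (fun s => -(r s * Real.exp (β s))) volume :=
    (LI.mul_cont hr (Real.continuous_exp.comp hβc)).neg
  set IP : ℝ := ∫ s in (0:ℝ)..P, -(r s * Real.exp (β s)) with hIP
  set C : ℝ := -IP / (1 - Real.exp (β P)) with hC
  have hne : 1 - Real.exp (β P) ≠ 0 := by
    intro h
    have : Real.exp (β P) = 1 := by linarith
    exact hbP ((Real.exp_eq_one_iff _).1 this)
  set I : ℝ → ℝ := fun t => C + ∫ s in (0:ℝ)..t, -(r s * Real.exp (β s)) with hI
  have hI0 : I 0 = C := by simp [hI]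
  have hIp : ∀ t, I (t + P) = Real.exp (β P) * I t := by
    intro t
    have h1 : ∫ s in (0:ℝ)..(t + P), -(r s * Real.exp (β s)) =
        IP + ∫ s in P..(t + P), -(r s * Real.exp (β s)) :=
      (intervalIntegral.integral_add_adjacent_intervals (LI.ii hk _ _) (LI.ii hk _ _)).symm
    have h2 : ∫ s in P..(t + P), -(r s * Real.exp (β s)) =
        Real.exp (β P) * ∫ s in (0:ℝ)..t, -(r s * Real.exp (β s)) := by
      rw [← intervalIntegral.integral_const_mul]
      have := intervalIntegral.integral_comp_add_right (a := 0) (b := t)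
        (fun s => -(r s * Real.exp (β s))) P
      rw [zero_add] at this
      rw [← this]
      congr 1
      funext x
      rw [hrp x, hβp x, Real.exp_add]
      ring
    have h3 : C * (1 - Real.exp (β P)) = -IP := by rw [hC]; field_simp
    simp only [hI]
    rw [h1, h2]
    linarith
  refine ⟨fun t => I t * Real.exp (-β t), ?_, ?_, ?_⟩
  · exact (continuous_const.add (LI.cont_prim hk 0)).mul (Real.continuous_exp.comp hβc.neg)
  · intro t
    simp only
    rw [hIp, hβp, neg_add, Real.exp_add, Real.exp_neg (β P)]
    have := Real.exp_pos (β P)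
    field_simp
  · intro t
    have hφ : ∀ t, HasDerivAt (fun t => Real.exp (-β t)) (Real.exp (-β t) * (- b t)) t :=
      fun t => (hβd t).neg.exp
    have := ibp hk (I := I) (fun t => by rw [hI0]) hφ
      ((Real.continuous_exp.comp hβc.neg).mul hb.neg) 0 t
    have h2 : I t * Real.exp (-β t) = I 0 * Real.exp (-β 0) +
      ∫ s in (0:ℝ)..t, (-(r s * Real.exp (β s)) * Real.exp (-β s) +
        I s * (Real.exp (-β s) * (- b s))) := by linarith
    simp only
    rw [h2]
    congr 2
    funext s
    have : Real.exp (β s) * Real.exp (-β s) = 1 := by rw [← Real.exp_add]; simp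
    linear_combination (-r s) * this

theorem per_bdd {u : ℝ → ℝ} {P : ℝ} (hP : 0 < P) (hu : Continuous u)
    (hp : Function.Periodic u P) : ∃ C, ∀ t, |u t| ≤ C := by
  have h1 := isCompact_Icc.exists_bound_of_continuousOn (s := Icc 0 P) hu.continuousOn
  obtain ⟨C, hC⟩ := h1
  refine ⟨C, fun t => ?_⟩
  obtain ⟨y, hy, e⟩ := hp.exists_mem_Ico₀ hP t
  rw [e]
  exact hC y ⟨hy.1, hy.2.le⟩

theorem per_resolvent {P : ℝ} (hP : 0 < P) {L : ℝ → ℝ} (hL : LocallyIntegrable L volume)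
    (hL0 : ∀ t, 0 ≤ L t) (hLp : Function.Periodic L P) :
    ∃ m : ℝ → ℝ, LocallyIntegrable m volume ∧ Function.Periodic m P ∧ (∀ t, L t + 1 ≤ m t) ∧
      ∀ r : ℝ → ℝ, LocallyIntegrable r volume → Function.Periodic r P →
        ∃ w w' : ℝ → ℝ, Function.Periodic w P ∧ D2 w w' (fun t => m t * w t - r t) := by
  set avg : ℝ := (∫ s in (0:ℝ)..P, L s) / P with havg
  have havg0 : 0 ≤ avg := by
    apply div_nonneg _ hP.le
    exact int_nonneg_ae hP.le (Eventually.of_forall fun s _ => hL0 s)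
  have hLa : LocallyIntegrable (fun s => L s - avg) volume :=
    hL.sub (LI.of_cont continuous_const)
  set b0 : ℝ → ℝ := fun t => ∫ s in (0:ℝ)..t, (L s - avg) with hb0
  have hb0c : Continuous b0 := LI.cont_prim hLa 0
  have hb0p : Function.Periodic b0 P := by
    intro t
    have hpp : Function.Periodic (fun s => L s - avg) P := fun s => by
      simp only; rw [hLp s]
    have := hpp.intervalIntegral_add_eq_add 0 t (fun a c => LI.ii hLa a c)
    have h0 : ∫ s in (0:ℝ)..P, (L s - avg) = 0 := by
      rw [intervalIntegral.integral_sub (LI.ii hL _ _) (by simp), intervalIntegral.integral_const,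
        havg]
      simp only [smul_eq_mul]
      field_simp
      ring
    simp only [hb0]
    rw [this, zero_add, h0, add_zero]
  obtain ⟨C, hC⟩ := per_bdd hP hb0c hb0p
  set B : ℝ := C + 1 + avg with hB
  set b : ℝ → ℝ := fun t => B + b0 t with hb
  have hbc : Continuous b := continuous_const.add hb0c
  have hbp : Function.Periodic b P := fun t => by simp only [hb]; rw [hb0p t]
  have hb1 : ∀ t, 1 + avg ≤ b t := fun t => by
    have := (abs_le.1 (hC t)).1
    simp only [hb]; linarith
  have hbP : 0 < ∫ s in (0:ℝ)..P, b s := by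
    have : ∫ s in (0:ℝ)..P, (1:ℝ) ≤ ∫ s in (0:ℝ)..P, b s :=
      int_mono_ae (LI.of_cont continuous_const) (LI.of_cont hbc) hP.le
        (Eventually.of_forall fun s _ => by linarith [hb1 s])
    simp at this
    linarith
  refine ⟨fun t => L t - avg + b t ^ 2, hLa.add (LI.of_cont (hbc.pow 2)), ?_, ?_, ?_⟩
  · intro t; simp only; rw [hLp t, hbp t]
  · intro t
    have := hb1 t
    simp only
    nlinarith
  intro r hr hrp
  obtain ⟨y, hyc, hyp, hy⟩ := first_order hbc hbp hbP.ne' hr hrp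
  obtain ⟨w, hwc, hwp, hw⟩ := first_order (b := fun t => - b t) (r := fun t => - y t)
    hbc.neg (fun t => by simp only; rw [hbp t])
    (by rw [intervalIntegral.integral_neg]; exact neg_ne_zero.2 hbP.ne')
    (LI.of_cont hyc.neg) (fun t => by simp only; rw [hyp t])
  have hwd : ∀ t, HasDerivAt w (y t + b t * w t) t := by
    intro t
    have e : w = fun t => w 0 + ∫ s in (0:ℝ)..t, (- -y s - -b s * w s) := funext hw
    have hc : Continuous fun s => (- -y s - -b s * w s) := by fun_prop
    have := (hc.integral_hasStrictDerivAt 0 t).hasDerivAt.const_add (w 0)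
    rw [← e] at this
    have e5 : - -y t - -b t * w t = y t + b t * w t := by ring
    rwa [e5] at this
  have hc2 : Continuous fun t => y t + b t * w t := by fun_prop
  refine ⟨w, fun t => y t + b t * w t, hwp, hwd, ?_, ?_⟩
  · exact (LI.mul_cont (hLa.add (LI.of_cont (hbc.pow 2))) hwc).sub hr
  · intro t
    have e1 := ibp hLa (I := b) (fun t => by simp [hb, hb0]) hwd hc2 0 t
    have e2 := hy t
    have i1 : IntervalIntegrable (fun s => (L s - avg) * w s + b s * (y s + b s * w s))
        volume 0 t :=
      (LI.ii (LI.mul_cont hLa hwc) _ _).add ((hbc.mul hc2).intervalIntegrable _ _)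
    have i2 : IntervalIntegrable (fun s => -r s - b s * y s) volume 0 t :=
      (LI.ii hr.neg _ _).sub ((hbc.mul hyc).intervalIntegrable _ _)
    have e3 := intervalIntegral.integral_add i1 i2
    have e4 : ∫ s in (0:ℝ)..t, ((L s - avg + b s ^ 2) * w s - r s) =
        ∫ s in (0:ℝ)..t, ((L s - avg) * w s + b s * (y s + b s * w s) +
          (-r s - b s * y s)) := by
      congr 1; funext s; ring
    simp only
    rw [e4, e3]
    linarith

/-! ### The abstract periodic problem -/

structure Sys where
  P : ℝ
  hP : 0 < P
  L : ℝ → ℝ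
  hL : LocallyIntegrable L volume
  hL0 : ∀ t, 0 ≤ L t
  hLp : Function.Periodic L P
  f : ℝ → ℝ → ℝ
  f0 : ∀ t, f t 0 = 0
  flip : ∀ t x y, |f t x - f t y| ≤ L t * |x - y|
  fper : ∀ t x, f (t + P) x = f t x
  fmeas : ∀ u : ℝ → ℝ, Continuous u → AEStronglyMeasurable (fun t => f t (u t)) volume
  F : ℝ → ℝ → ℝ
  F0 : ∀ t, F t 0 = 0
  hF : ∀ t x, HasDerivAt (F t) (f t x) x
  Fmeas : ∀ u : ℝ → ℝ, Continuous u → AEStronglyMeasurable (fun t => F t (u t)) volume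
  al : ℝ → ℝ
  al' : ℝ → ℝ
  wl : ℝ → ℝ
  hal : D2 al al' wl
  halp : Function.Periodic al P
  hlow : ∀ᵐ t, 0 ≤ wl t + f t (al t)
  halneg : ∀ t, al t < 0
  be : ℝ
  hbe : 0 < be
  fbe : ∀ t, f t be ≤ 0

namespace Sys
variable (S : Sys)

/-- continuous and periodic -/
def Adm (u : ℝ → ℝ) : Prop := Continuous u ∧ Function.Periodic u S.P

/-- between the lower and upper solution -/
def Bx (u : ℝ → ℝ) : Prop := S.Adm u ∧ ∀ t, S.al t ≤ u t ∧ u t ≤ S.be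

/-- at most two sign changes per period -/
def Two (u : ℝ → ℝ) : Prop :=
  ¬ ∃ t1 t2 t3 t4, t1 < t2 ∧ t2 < t3 ∧ t3 < t4 ∧ t4 < t1 + S.P ∧
    0 < u t1 ∧ u t2 < 0 ∧ 0 < u t3 ∧ u t4 < 0

noncomputable def m : ℝ → ℝ := Classical.choose (per_resolvent S.hP S.hL S.hL0 S.hLp)

theorem m_spec : LocallyIntegrable S.m volume ∧ Function.Periodic S.m S.P ∧
    (∀ t, S.L t + 1 ≤ S.m t) ∧
      ∀ r : ℝ → ℝ, LocallyIntegrable r volume → Function.Periodic r S.P →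
        ∃ w w' : ℝ → ℝ, Function.Periodic w S.P ∧ D2 w w' (fun t => S.m t * w t - r t) :=
  Classical.choose_spec (per_resolvent S.hP S.hL S.hL0 S.hLp)
theorem mLI : LocallyIntegrable S.m volume := S.m_spec.1
theorem mper : Function.Periodic S.m S.P := S.m_spec.2.1
theorem mge (t : ℝ) : S.L t + 1 ≤ S.m t := S.m_spec.2.2.1 t
theorem mge1 (t : ℝ) : 1 ≤ S.m t := by linarith [S.mge t, S.hL0 t]

noncomputable def r (u : ℝ → ℝ) (t : ℝ) : ℝ := S.m t * u t + S.f t (u t)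

theorem f_abs (t x : ℝ) : |S.f t x| ≤ S.L t * |x| := by
  have := S.flip t x 0
  simpa [S.f0] using this

theorem fLI {u : ℝ → ℝ} (hu : Continuous u) :
    LocallyIntegrable (fun t => S.f t (u t)) volume := by
  apply (LI.mul_cont S.hL hu).mono (S.fmeas u hu)
  apply Eventually.of_forall
  intro t
  have := S.f_abs t (u t)
  simp only [Real.norm_eq_abs, abs_mul, abs_of_nonneg (S.hL0 t)]
  exact this

theorem rLI {u : ℝ → ℝ} (hu : Continuous u) : LocallyIntegrable (S.r u) volume :=
  (LI.mul_cont S.mLI hu).add (S.fLI hu)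

theorem rper {u : ℝ → ℝ} (hu : S.Adm u) : Function.Periodic (S.r u) S.P := by
  intro t
  simp only [r]
  rw [S.mper t, hu.2 t, S.fper]

theorem r_mono (t : ℝ) {x y : ℝ} (h : x ≤ y) :
    S.m t * x + S.f t x ≤ S.m t * y + S.f t y := by
  have h1 := (abs_le.1 (S.flip t y x)).1
  have h2 := S.mge t
  rw [abs_of_nonneg (by linarith : 0 ≤ y - x)] at h1
  nlinarith

theorem r_lip (t : ℝ) {x y : ℝ} (h : x ≤ y) :
    S.m t * y + S.f t y ≤ S.m t * x + S.f t x + 2 * S.m t * (y - x) := by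
  have h1 := (abs_le.1 (S.flip t y x)).2
  have h2 := S.mge t
  rw [abs_of_nonneg (by linarith : 0 ≤ y - x)] at h1
  nlinarith

theorem r_abs (t x : ℝ) : |S.m t * x + S.f t x| ≤ 2 * S.m t * |x| := by
  have h1 := S.f_abs t x
  have h2 := S.mge t
  have h3 : 0 ≤ S.m t := by linarith [S.mge1 t]
  calc _ ≤ |S.m t * x| + |S.f t x| := abs_add_le _ _
    _ ≤ S.m t * |x| + S.L t * |x| := by rw [abs_mul, abs_of_nonneg h3]; linarith
    _ ≤ _ := by nlinarith [abs_nonneg x]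

open Classical in
/-- the solution operator -/
noncomputable def Phi (u : ℝ → ℝ) : ℝ → ℝ :=
  if h : S.Adm u then Classical.choose (S.m_spec.2.2.2 (S.r u) (S.rLI h.1) (S.rper h)) else 0

theorem Phi_spec0 {u : ℝ → ℝ} (h : S.Adm u) : ∃ w', Function.Periodic (S.Phi u) S.P ∧
    D2 (S.Phi u) w' (fun t => S.m t * S.Phi u t - S.r u t) := by
  have := Classical.choose_spec (S.m_spec.2.2.2 (S.r u) (S.rLI h.1) (S.rper h))
  simp only [Phi, h, dite_true]
  exact this

theorem Phi_D2 {u : ℝ → ℝ} (h : S.Adm u) :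
    D2 (S.Phi u) (deriv (S.Phi u)) (fun t => S.m t * S.Phi u t - S.r u t) := by
  obtain ⟨w', h1, h2⟩ := S.Phi_spec0 h
  have : deriv (S.Phi u) = w' := funext fun t => (h2.1 t).deriv
  rwa [this]

theorem Phi_Adm {u : ℝ → ℝ} (h : S.Adm u) : S.Adm (S.Phi u) := by
  obtain ⟨w', h1, h2⟩ := S.Phi_spec0 h
  exact ⟨h2.cont, h1⟩

theorem Phi_lip {u v : ℝ → ℝ} (hu : S.Adm u) (hv : S.Adm v) {d : ℝ}
    (h : ∀ t, u t ≤ v t + d) (hd : 0 ≤ d) : ∀ t, S.Phi u t ≤ S.Phi v t + 2 * d := by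
  by_contra hcon
  push Not at hcon
  obtain ⟨t0, ht0⟩ := hcon
  refine core (t0 := t0) (κ := 1) S.hP (((S.Phi_D2 hu).sub (S.Phi_D2 hv)).addc (-(2*d))) ?_ ?_ one_pos ?_
  · intro t
    simp only
    rw [(S.Phi_Adm hu).2 t, (S.Phi_Adm hv).2 t]
  · linarith
  · apply Eventually.of_forall
    intro s hs
    have hs := hs s right_mem_uIcc
    simp only [r] at *
    have h1 : S.m s * u s + S.f s (u s) ≤ S.m s * (v s + d) + S.f s (v s + d) :=
      S.r_mono s (h s)
    have h2 := S.r_lip s (show v s ≤ v s + d by linarith)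
    have h3 := S.mge1 s
    nlinarith

theorem Phi_lip_abs {u v : ℝ → ℝ} (hu : S.Adm u) (hv : S.Adm v) {d : ℝ}
    (h : ∀ t, |u t - v t| ≤ d) : ∀ t, |S.Phi u t - S.Phi v t| ≤ 2 * d := by
  intro t
  have hd : 0 ≤ d := (abs_nonneg _).trans (h 0)
  have h1 := S.Phi_lip hu hv (fun t => by linarith [(abs_le.1 (h t)).2]) hd t
  have h2 := S.Phi_lip hv hu (fun t => by linarith [(abs_le.1 (h t)).1]) hd t
  rw [abs_le]
  constructor <;> linarith

theorem reach_pos {u : ℝ → ℝ} (hu : S.Adm u) {t1 : ℝ} (h : 0 < S.Phi u t1) :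
    ∃ s, 0 < u s ∧ ∀ x ∈ uIcc t1 s, 0 < S.Phi u x := by
  by_contra hcon
  push Not at hcon
  refine core (t0 := t1) (κ := 1) S.hP (S.Phi_D2 hu) (S.Phi_Adm hu).2 h one_pos ?_
  apply Eventually.of_forall
  intro s hs
  have h1 : u s ≤ 0 := by
    by_contra h2
    push Not at h2
    obtain ⟨x, hx, h3⟩ := hcon s h2
    exact absurd (hs x hx) (not_lt.2 h3)
  have h2 := S.r_mono s h1
  rw [S.f0] at h2
  have h3 := S.mge1 s
  have h4 := hs s right_mem_uIcc
  simp only [r]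
  nlinarith

theorem reach_neg {u : ℝ → ℝ} (hu : S.Adm u) {t1 : ℝ} (h : S.Phi u t1 < 0) :
    ∃ s, u s < 0 ∧ ∀ x ∈ uIcc t1 s, S.Phi u x < 0 := by
  by_contra hcon
  push Not at hcon
  refine core (t0 := t1) (κ := 1) S.hP (S.Phi_D2 hu).neg ?_ (neg_pos.2 h) one_pos ?_
  · intro t; simp only; rw [(S.Phi_Adm hu).2]
  apply Eventually.of_forall
  intro s hs
  have h1 : 0 ≤ u s := by
    by_contra h2
    push Not at h2
    obtain ⟨x, hx, h3⟩ := hcon s h2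
    have := hs x hx
    linarith
  have h2 := S.r_mono s h1
  rw [S.f0] at h2
  have h3 := S.mge1 s
  have h4 := hs s right_mem_uIcc
  simp only [r]
  nlinarith

theorem Phi_nonneg {u : ℝ → ℝ} (hu : S.Adm u) (h : ∀ t, 0 ≤ u t) (t : ℝ) : 0 ≤ S.Phi u t := by
  by_contra hc
  push Not at hc
  obtain ⟨s, hs, -⟩ := S.reach_neg hu hc
  exact absurd (h s) (not_le.2 hs)

theorem Phi_nonpos {u : ℝ → ℝ} (hu : S.Adm u) (h : ∀ t, u t ≤ 0) (t : ℝ) : S.Phi u t ≤ 0 := by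
  by_contra hc
  push Not at hc
  obtain ⟨s, hs, -⟩ := S.reach_pos hu hc
  exact absurd (h s) (not_le.2 hs)

theorem Phi_Bx {u : ℝ → ℝ} (hu : S.Bx u) : S.Bx (S.Phi u) := by
  refine ⟨S.Phi_Adm hu.1, fun t => ⟨?_, ?_⟩⟩
  · by_contra hc
    push Not at hc
    refine core (t0 := t) (κ := 1) S.hP (S.hal.sub (S.Phi_D2 hu.1)) ?_ (sub_pos.2 hc) one_pos ?_
    · intro t; simp only; rw [(S.Phi_Adm hu.1).2, S.halp]
    filter_upwards [S.hlow] with s hs1 hs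
    have h1 := S.r_mono s (hu.2 s).1
    have h3 := S.mge1 s
    have h4 := hs s right_mem_uIcc
    simp only [r]
    nlinarith
  · by_contra hc
    push Not at hc
    refine core (t0 := t) (κ := 1) S.hP ((S.Phi_D2 hu.1).addc (-S.be)) ?_ (by linarith)
      one_pos ?_
    · intro t; simp only; rw [(S.Phi_Adm hu.1).2]
    apply Eventually.of_forall
    intro s hs
    have h1 := S.r_mono s (hu.2 s).2
    have h2 := S.fbe s
    have h3 := S.mge1 s
    have h4 := hs s right_mem_uIcc
    simp only [r]
    nlinarith

theorem Phi_Two {u : ℝ → ℝ} (hu : S.Adm u) (h : S.Two u) : S.Two (S.Phi u) := by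
  rintro ⟨t1, t2, t3, t4, h12, h23, h34, h41, p1, p2, p3, p4⟩
  have hper := (S.Phi_Adm hu).2
  obtain ⟨s1, q1, k1⟩ := S.reach_pos hu p1
  obtain ⟨s2, q2, k2⟩ := S.reach_neg hu p2
  obtain ⟨s3, q3, k3⟩ := S.reach_pos hu p3
  obtain ⟨s4, q4, k4⟩ := S.reach_neg hu p4
  have kk : ∀ {a b x : ℝ}, a ≤ x → x ≤ b → x ∈ uIcc a b :=
    fun h1 h2 => by rw [mem_uIcc]; exact Or.inl ⟨h1, h2⟩
  have kk' : ∀ {a b x : ℝ}, b ≤ x → x ≤ a → x ∈ uIcc a b :=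
    fun h1 h2 => by rw [mem_uIcc]; exact Or.inr ⟨h1, h2⟩
  have a2 : t1 < s2 := by
    by_contra hc; push Not at hc
    linarith [k2 t1 (kk' hc h12.le)]
  have a3 : t2 < s3 := by
    by_contra hc; push Not at hc
    linarith [k3 t2 (kk' hc h23.le)]
  have a4 : t3 < s4 := by
    by_contra hc; push Not at hc
    linarith [k4 t3 (kk' hc h34.le)]
  have a1 : t4 < s1 + S.P := by
    by_contra hc; push Not at hc
    have := k1 (t4 - S.P) (kk' (by linarith) (by linarith))
    rw [← hper] at this
    simp at this
    linarith
  refine h ⟨s1, s2, s3, s4, ?_, ?_, ?_, ?_, q1, q2, q3, q4⟩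
  · by_contra hc; push Not at hc
    linarith [k1 s2 (kk a2.le hc), k2 s2 right_mem_uIcc]
  · by_contra hc; push Not at hc
    linarith [k2 s3 (kk a3.le hc), k3 s3 right_mem_uIcc]
  · by_contra hc; push Not at hc
    linarith [k3 s4 (kk a4.le hc), k4 s4 right_mem_uIcc]
  · by_contra hc; push Not at hc
    have := k4 (s1 + S.P) (kk a1.le hc)
    rw [hper] at this
    linarith [k1 s1 right_mem_uIcc]

theorem al_bdd : ∃ B, 0 < B ∧ (∀ u, S.Bx u → ∀ t, |u t| ≤ B) := by
  obtain ⟨C, hC⟩ := per_bdd S.hP S.hal.cont S.halp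
  have hC0 : 0 ≤ C := (abs_nonneg _).trans (hC 0)
  refine ⟨C + S.be, by linarith [S.hbe], fun u hu t => ?_⟩
  have h1 := (abs_le.1 (hC t)).1
  have h2 := hu.2 t
  rw [abs_le]
  constructor <;> linarith [S.hbe]

noncomputable def B : ℝ := Classical.choose S.al_bdd
theorem B_pos : 0 < S.B := (Classical.choose_spec S.al_bdd).1
theorem B_spec {u : ℝ → ℝ} (hu : S.Bx u) (t : ℝ) : |u t| ≤ S.B :=
  (Classical.choose_spec S.al_bdd).2 u hu t

noncomputable def K1 : ℝ := ∫ s in (0:ℝ)..S.P, 3 * S.B * S.m s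

theorem Phi_deriv_bdd {u : ℝ → ℝ} (hu : S.Bx u) (t : ℝ) : |deriv (S.Phi u) t| ≤ S.K1 := by
  have hw := S.Phi_D2 hu.1
  have hper := (S.Phi_Adm hu.1).2
  have hper' := hw.per' hper
  -- critical point
  obtain ⟨t0, h0⟩ : ∃ t0, deriv (S.Phi u) t0 = 0 := by
    obtain ⟨c, -, hc⟩ := exists_deriv_eq_zero (f := S.Phi u) S.hP hw.cont.continuousOn (by
      have := hper 0; rw [zero_add] at this; exact this.symm)
    exact ⟨c, hc⟩
  obtain ⟨y, hy, e⟩ := hper'.exists_mem_Ico S.hP t t0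
  rw [e]
  have h1 := hw.diff t0 y
  rw [h0, sub_zero] at h1
  rw [h1]
  have hmB : LocallyIntegrable (fun s => 3 * S.B * S.m s) volume := by
    have := LI.mul_cont S.mLI (continuous_const (y := 3 * S.B))
    simpa [mul_comm] using this
  have hm0 : ∀ s, 0 ≤ 3 * S.B * S.m s := fun s => by
    have := S.B_pos; have := S.mge1 s; positivity
  calc |∫ s in t0..y, (S.m s * S.Phi u s - S.r u s)|
      ≤ ∫ s in t0..y, |S.m s * S.Phi u s - S.r u s| :=
        intervalIntegral.abs_integral_le_integral_abs hy.1
    _ ≤ ∫ s in t0..y, 3 * S.B * S.m s := by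
        apply int_mono_ae (LI.abs hw.2.1) hmB hy.1
        apply Eventually.of_forall
        intro s _
        have b1 := S.B_spec hu s
        have b2 := S.B_spec (S.Phi_Bx hu) s
        have b3 := S.r_abs s (u s)
        have b4 := S.mge1 s
        have b5 := abs_sub (S.m s * S.Phi u s) (S.r u s)
        rw [abs_mul, abs_of_nonneg (by linarith : 0 ≤ S.m s)] at b5
        have b6 : |S.r u s| ≤ 2 * S.m s * |u s| := b3
        nlinarith
    _ ≤ ∫ s in t0..(t0 + S.P), 3 * S.B * S.m s := by
        apply intervalIntegral.integral_mono_interval le_rfl hy.1 hy.2.le _ (LI.ii hmB _ _)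
        exact Eventually.of_forall fun s => hm0 s
    _ = S.K1 := by
        have hp : Function.Periodic (fun s => 3 * S.B * S.m s) S.P := fun s => by
          simp only; rw [S.mper s]
        have := hp.intervalIntegral_add_eq t0 0
        rw [zero_add] at this
        exact this
end Sys

/-! ### The action functional and compactness -/

theorem arzela {P K B : ℝ} (hP : 0 < P) (y : ℕ → ℝ → ℝ)
    (hper : ∀ j, Function.Periodic (y j) P) (hlip : ∀ j s t, |y j s - y j t| ≤ K * |s - t|)
    (hB : ∀ j t, |y j t| ≤ B) :
    ∃ (e : ℝ → ℝ) (φ : ℕ → ℕ), StrictMono φ ∧ TendstoUniformly (fun j => y (φ j)) e atTop := by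
  have hK : 0 ≤ K := by
    have := (abs_nonneg _).trans (hlip 0 0 1)
    simpa using this
  have hcont : ∀ j, LipschitzWith K.toNNReal (y j) := fun j =>
    LipschitzWith.of_dist_le_mul fun s t => by
      rw [Real.dist_eq, Real.dist_eq, Real.coe_toNNReal K hK]; exact hlip j s t
  let Y : ℕ → BoundedContinuousFunction (Icc (0:ℝ) P) ℝ := fun j =>
    BoundedContinuousFunction.mkOfCompact ⟨fun x => y j x, (hcont j).continuous.comp continuous_subtype_val⟩
  have hc := BoundedContinuousFunction.arzela_ascoli (Icc (-B) B) isCompact_Icc (range Y)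
    (by
      rintro f x ⟨j, rfl⟩
      exact abs_le.1 (hB j x))
    (by
      apply UniformEquicontinuous.equicontinuous
      apply LipschitzWith.uniformEquicontinuous _ K.toNNReal
      rintro ⟨f, j, rfl⟩
      have h := (hcont j).comp (LipschitzWith.subtype_val (Icc (0:ℝ) P))
      rw [mul_one] at h
      exact h)
  obtain ⟨g, -, φ, hφ, hg⟩ := hc.tendsto_subseq (x := Y) (fun j => subset_closure ⟨j, rfl⟩)
  have hrep : ∀ t : ℝ, ∃ x : Icc (0:ℝ) P, ∀ j, y j t = y j x := by
    intro t
    refine ⟨⟨toIcoMod hP 0 t, ?_⟩, fun j => ?_⟩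
    · have := toIcoMod_mem_Ico hP 0 t
      rw [zero_add] at this
      exact ⟨this.1, this.2.le⟩
    · have := (hper j).sub_zsmul_eq (x := t) (toIcoDiv hP 0 t)
      exact this.symm
  choose ρ hρ using hrep
  refine ⟨fun t => g (ρ t), φ, hφ, ?_⟩
  have h2 := BoundedContinuousFunction.tendsto_iff_tendstoUniformly.1 hg
  have h3 := h2.comp ρ
  intro v hv
  filter_upwards [h3 v hv] with j hj t
  have h4 := hj t
  rw [hρ t (φ j)]
  exact h4

namespace Sys
variable (S : Sys)

theorem F_taylor (t x y : ℝ) : |S.F t y - S.F t x - S.f t x * (y - x)| ≤ S.L t * (y - x) ^ 2 := by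
  rcases eq_or_ne x y with h | h
  · subst h; simp
  obtain ⟨ξ, hξ, e⟩ : ∃ ξ ∈ uIcc x y, S.F t y - S.F t x = S.f t ξ * (y - x) := by
    rcases lt_or_gt_of_ne h with h | h
    · obtain ⟨c, hc, e⟩ := exists_hasDerivAt_eq_slope (S.F t) (S.f t) h
        (fun z _ => (S.hF t z).continuousAt.continuousWithinAt) (fun z _ => S.hF t z)
      refine ⟨c, ?_, ?_⟩
      · rw [uIcc_of_le h.le]; exact Ioo_subset_Icc_self hc
      · rw [e]; field_simp [sub_ne_zero.2 h.ne']
    · obtain ⟨c, hc, e⟩ := exists_hasDerivAt_eq_slope (S.F t) (S.f t) h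
        (fun z _ => (S.hF t z).continuousAt.continuousWithinAt) (fun z _ => S.hF t z)
      refine ⟨c, ?_, ?_⟩
      · rw [uIcc_of_ge h.le]; exact Ioo_subset_Icc_self hc
      · rw [e]
        have : x - y ≠ 0 := sub_ne_zero.2 h.ne'
        field_simp
        ring
  rw [e, show S.f t ξ * (y - x) - S.f t x * (y - x) = (S.f t ξ - S.f t x) * (y - x) by ring,
    abs_mul]
  have h1 := S.flip t ξ x
  have h2 : |ξ - x| ≤ |y - x| := by
    exact Set.abs_sub_left_of_mem_uIcc hξ |>.trans (by rw [abs_sub_comm])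
  have h3 := S.hL0 t
  calc |S.f t ξ - S.f t x| * |y - x| ≤ (S.L t * |ξ - x|) * |y - x| := by gcongr
    _ ≤ (S.L t * |y - x|) * |y - x| := by gcongr
    _ = S.L t * (y - x) ^ 2 := by rw [mul_assoc, ← sq, sq_abs]

theorem F_abs (t x : ℝ) : |S.F t x| ≤ S.L t * x ^ 2 := by
  have := S.F_taylor t 0 x
  simpa [S.F0, S.f0] using this

theorem FLI {u : ℝ → ℝ} (hu : Continuous u) :
    LocallyIntegrable (fun t => S.F t (u t)) volume := by
  apply (LI.mul_cont S.hL (u := fun t => u t ^ 2) (by fun_prop)).mono (S.Fmeas u hu)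
  apply Eventually.of_forall
  intro t
  have := S.F_abs t (u t)
  simp only [Real.norm_eq_abs, abs_mul, abs_of_nonneg (S.hL0 t), abs_pow, sq_abs]
  exact this

noncomputable def J (u : ℝ → ℝ) : ℝ :=
  ∫ t in (0:ℝ)..S.P, (1 / 2 * (deriv u t) ^ 2 - S.F t (u t))

theorem J_zero : S.J 0 = 0 := by
  have : deriv (0 : ℝ → ℝ) = 0 := by funext t; simp
  simp [J, S.F0, this]

theorem J_descent {u u' : ℝ → ℝ} (hu : S.Adm u) (hd : ∀ t, HasDerivAt u (u' t) t)
    (hc : Continuous u') :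
    S.J (S.Phi u) + ∫ t in (0:ℝ)..S.P, (S.Phi u t - u t) ^ 2 ≤ S.J u := by
  have hw := S.Phi_D2 hu
  set w := S.Phi u with hwdef
  set w' := deriv w with hw'
  have hdu : deriv u = u' := funext fun t => (hd t).deriv
  have cw := hw.cont
  have cw' := hw.cont'
  have cu := hu.1
  have e0 := ibp hw.2.1 hw.2.2 (fun t => (hw.1 t).sub (hd t)) (cw'.sub hc) 0 S.P
  have hz : w' S.P * (w - u) S.P - w' 0 * (w - u) 0 = 0 := by
    have h1 := hw.per' (S.Phi_Adm hu).2 0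
    have h2 := (S.Phi_Adm hu).2 0
    have h3 := hu.2 0
    rw [zero_add] at h1 h2 h3
    simp only [Pi.sub_apply]
    rw [h1, h3, ← hwdef] at *
    rw [h2]; ring
  rw [hz] at e0
  unfold J
  rw [hdu]
  have i1 : LocallyIntegrable (fun t => 1 / 2 * (w' t) ^ 2 - S.F t (w t)) volume :=
    (LI.of_cont (by fun_prop)).sub (S.FLI cw)
  have i2 : LocallyIntegrable (fun t => (w t - u t) ^ 2) volume := LI.of_cont (by fun_prop)
  have i3 : LocallyIntegrable (fun t => 1 / 2 * (u' t) ^ 2 - S.F t (u t)) volume :=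
    (LI.of_cont (by fun_prop)).sub (S.FLI cu)
  have i4 : LocallyIntegrable (fun t => (S.m t * w t - S.r u t) * (w - u) t +
      w' t * (w' t - u' t)) volume :=
    (LI.mul_cont hw.2.1 (cw.sub cu)).add (LI.of_cont (by fun_prop))
  have e1 := intervalIntegral.integral_add (LI.ii i1 0 S.P) (LI.ii i2 0 S.P)
  have e2 := intervalIntegral.integral_add (LI.ii i3 0 S.P) (LI.ii i4 0 S.P)
  suffices hmain : (∫ t in (0:ℝ)..S.P, (1 / 2 * (w' t) ^ 2 - S.F t (w t))) +
      (∫ t in (0:ℝ)..S.P, (w t - u t) ^ 2) ≤ (∫ t in (0:ℝ)..S.P, (1 / 2 * (u' t) ^ 2 - S.F t (u t))) +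
      ∫ t in (0:ℝ)..S.P, ((S.m t * w t - S.r u t) * (w - u) t + w' t * (w' t - u' t)) by
    have e0' : ∫ t in (0:ℝ)..S.P, ((S.m t * w t - S.r u t) * (w - u) t + w' t * (w' t - u' t)) = 0 := e0
    linarith
  rw [← e1, ← e2]
  apply int_mono_ae (i1.add i2) (i3.add i4) S.hP.le
  apply Eventually.of_forall
  intro t _
  have h1 := (abs_le.1 (S.F_taylor t (u t) (w t))).1
  have h2 := S.mge t
  simp only [r, Pi.sub_apply, Pi.add_apply]
  nlinarith [sq_nonneg (w' t - u' t), sq_nonneg (w t - u t)]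

theorem J_Phi {u : ℝ → ℝ} (hu : S.Adm u) :
    S.J (S.Phi u) = ∫ t in (0:ℝ)..S.P,
      (1 / 2 * ((S.r u t - S.m t * S.Phi u t) * S.Phi u t) - S.F t (S.Phi u t)) := by
  have hw := S.Phi_D2 hu
  set w := S.Phi u with hwdef
  set w' := deriv w with hw'
  have cw := hw.cont
  have cw' := hw.cont'
  have e0 := ibp hw.2.1 hw.2.2 hw.1 cw' 0 S.P
  have hz : w' S.P * w S.P - w' 0 * w 0 = 0 := by
    have h1 := hw.per' (S.Phi_Adm hu).2 0
    have h2 := (S.Phi_Adm hu).2 0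
    rw [zero_add] at h1 h2
    rw [h1, ← hwdef] at *
    rw [h2]; ring
  rw [hz] at e0
  unfold J
  have i1 : LocallyIntegrable (fun t => (S.m t * w t - S.r u t) * w t +
      w' t * w' t) volume :=
    (LI.mul_cont hw.2.1 cw).add (LI.of_cont (by fun_prop))
  have i2 : LocallyIntegrable (fun t => 1 / 2 * ((S.r u t - S.m t * w t) * w t) -
      S.F t (w t)) volume := by
    refine LocallyIntegrable.sub ?_ (S.FLI cw)
    have := LI.mul_cont hw.2.1 (u := fun t => w t * (-(1/2))) (by fun_prop)
    refine this.congr (Eventually.of_forall fun t => ?_)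
    simp only; ring
  have i1' : LocallyIntegrable (fun t => 1/2 * ((S.m t * w t - S.r u t) * w t +
      w' t * w' t)) volume := by
    have := LI.mul_cont i1 (continuous_const (y := (1/2 : ℝ)))
    refine this.congr (Eventually.of_forall fun t => ?_)
    simp only; ring
  have e3 : ∫ t in (0:ℝ)..S.P, 1/2 * ((S.m t * w t - S.r u t) * w t + w' t * w' t) = 0 := by
    rw [intervalIntegral.integral_const_mul, e0, mul_zero]
  have e2 := intervalIntegral.integral_add (LI.ii i2 0 S.P) (LI.ii i1' 0 S.P)
  rw [e3, add_zero] at e2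
  rw [← e2]
  congr 1
  funext t
  ring

theorem f_cont (t : ℝ) : Continuous (S.f t) := by
  apply LipschitzWith.continuous (K := (S.L t).toNNReal)
  apply LipschitzWith.of_dist_le_mul
  intro x y
  rw [Real.dist_eq, Real.dist_eq, Real.coe_toNNReal _ (S.hL0 t)]
  exact S.flip t x y

theorem F_cont (t : ℝ) : Continuous (S.F t) :=
  continuous_iff_continuousAt.2 fun x => (S.hF t x).continuousAt

theorem J_cont {ι : Type*} {l : Filter ι} [l.IsCountablyGenerated] {v : ι → ℝ → ℝ} {u : ℝ → ℝ}
    (hv : ∀ i, S.Bx (v i)) (hu : S.Bx u) (h1 : ∀ t, Tendsto (fun i => v i t) l (nhds (u t)))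
    (h2 : ∀ t, Tendsto (fun i => S.Phi (v i) t) l (nhds (S.Phi u t))) :
    Tendsto (fun i => S.J (S.Phi (v i))) l (nhds (S.J (S.Phi u))) := by
  rw [S.J_Phi hu.1]
  have : (fun i => S.J (S.Phi (v i))) = fun i => ∫ t in (0:ℝ)..S.P,
      (1 / 2 * ((S.r (v i) t - S.m t * S.Phi (v i) t) * S.Phi (v i) t) -
        S.F t (S.Phi (v i) t)) := funext fun i => S.J_Phi (hv i).1
  rw [this]
  have cB : LocallyIntegrable (fun t => S.m t * (3 * S.B ^ 2) + S.L t * S.B ^ 2) volume :=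
    (LI.mul_cont S.mLI continuous_const).add (LI.mul_cont S.hL continuous_const)
  apply intervalIntegral.tendsto_integral_filter_of_dominated_convergence
    (fun t => S.m t * (3 * S.B ^ 2) + S.L t * S.B ^ 2)
  · apply Eventually.of_forall
    intro i
    have c := (S.Phi_Adm (hv i).1).1
    have m1 : AEStronglyMeasurable (fun t => S.r (v i) t - S.m t * S.Phi (v i) t) volume :=
      ((S.rLI (hv i).1.1).sub (LI.mul_cont S.mLI c)).aestronglyMeasurable
    exact (((m1.mul c.aestronglyMeasurable).const_mul (1/2)).sub (S.Fmeas _ c)).restrict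
  · apply Eventually.of_forall
    intro i
    apply Eventually.of_forall
    intro t _
    have b1 := S.B_spec (hv i) t
    have b2 := S.B_spec (S.Phi_Bx (hv i)) t
    have b3 : |S.r (v i) t| ≤ 2 * S.m t * |v i t| := S.r_abs t (v i t)
    have b4 := S.mge1 t
    have b5 := S.F_abs t (S.Phi (v i) t)
    have b6 := S.hL0 t
    have b7 := abs_sub (S.r (v i) t) (S.m t * S.Phi (v i) t)
    rw [abs_mul, abs_of_nonneg (by linarith : 0 ≤ S.m t)] at b7
    have b8 : |S.r (v i) t - S.m t * S.Phi (v i) t| ≤ 3 * S.m t * S.B := by nlinarith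
    have b9 : |S.Phi (v i) t| ^ 2 ≤ S.B ^ 2 := by gcongr
    rw [sq_abs] at b9
    have b10 : |(S.r (v i) t - S.m t * S.Phi (v i) t) * S.Phi (v i) t| ≤
        (3 * S.m t * S.B) * S.B := by
      rw [abs_mul]
      exact mul_le_mul b8 b2 (abs_nonneg _) (by have := S.B_pos; positivity)
    have b11 : S.L t * S.Phi (v i) t ^ 2 ≤ S.L t * S.B ^ 2 := by gcongr
    rw [Real.norm_eq_abs]
    refine (abs_sub _ _).trans ?_
    rw [abs_mul, abs_of_pos (by norm_num : (0:ℝ) < 1/2)]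
    have := S.B_pos
    have : 0 ≤ S.m t * S.B ^ 2 := by positivity
    nlinarith
  · exact LI.ii cB _ _
  · apply Eventually.of_forall
    intro t _
    have c1 := ((S.f_cont t).tendsto (u t)).comp (h1 t)
    have c2 := ((S.F_cont t).tendsto (S.Phi u t)).comp (h2 t)
    have c3 : Tendsto (fun i => S.r (v i) t) l (nhds (S.r u t)) :=
      ((h1 t).const_mul (S.m t)).add c1
    exact (((c3.sub ((h2 t).const_mul (S.m t))).mul (h2 t)).const_mul (1/2)).sub c2
end Sys

namespace Sys
variable (S : Sys)

theorem fix_D2 {e : ℝ → ℝ} (he : S.Adm e) (h : S.Phi e = e) :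
    D2 e (deriv e) (fun t => - S.f t (e t)) := by
  have := S.Phi_D2 he
  rw [h] at this
  refine this.congr_ae (Eventually.of_forall fun t => ?_)
  simp only [r]; ring

theorem fix_uc {e : ℝ → ℝ} (he : S.Adm e) (h : S.Phi e = e) {a : ℝ} (h0 : e a = 0)
    (h1 : deriv e a = 0) : ∀ t, e t = 0 :=
  uc (S.fix_D2 he h) S.hL S.hL0 (Eventually.of_forall fun t => by
    rw [abs_neg]; exact S.f_abs t (e t)) h0 h1

theorem fix_pos {e : ℝ → ℝ} (he : S.Adm e) (h : S.Phi e = e) (hJ : S.J e < 0)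
    (hn : ∀ t, 0 ≤ e t) : ∃ c > 0, ∀ t, c ≤ e t := by
  have hp : ∀ t, 0 < e t := by
    intro a
    rcases (hn a).lt_or_eq with h1 | h1
    · exact h1
    exfalso
    have h2 : deriv e a = 0 := by
      apply IsLocalMin.deriv_eq_zero
      apply Eventually.of_forall
      intro t; rw [← h1]; exact hn t
    have h3 := S.fix_uc he h h1.symm h2
    have : e = 0 := funext h3
    rw [this, S.J_zero] at hJ
    exact lt_irrefl _ hJ
  obtain ⟨x, hx, hmin⟩ := isCompact_Icc.exists_isMinOn (nonempty_Icc.2 S.hP.le) he.1.continuousOn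
  refine ⟨e x, hp x, fun t => ?_⟩
  have h1 := toIcoMod_mem_Ico S.hP 0 t
  rw [zero_add] at h1
  have h2 : e (toIcoMod S.hP 0 t) = e t := he.2.sub_zsmul_eq (x := t) (toIcoDiv S.hP 0 t)
  rw [← h2]
  exact hmin ⟨h1.1, h1.2.le⟩

theorem fix_neg {e : ℝ → ℝ} (he : S.Adm e) (h : S.Phi e = e) (hJ : S.J e < 0)
    (hn : ∀ t, e t ≤ 0) : ∃ c > 0, ∀ t, e t ≤ -c := by
  have hp : ∀ t, e t < 0 := by
    intro a
    rcases (hn a).lt_or_eq with h1 | h1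
    · exact h1
    exfalso
    have h2 : deriv e a = 0 := by
      apply IsLocalMax.deriv_eq_zero
      apply Eventually.of_forall
      intro t; rw [h1]; exact hn t
    have h3 := S.fix_uc he h h1 h2
    have : e = 0 := funext h3
    rw [this, S.J_zero] at hJ
    exact lt_irrefl _ hJ
  obtain ⟨x, hx, hmin⟩ := isCompact_Icc.exists_isMaxOn (nonempty_Icc.2 S.hP.le) he.1.continuousOn
  refine ⟨-e x, neg_pos.2 (hp x), fun t => ?_⟩
  have h1 := toIcoMod_mem_Ico S.hP 0 t
  rw [zero_add] at h1
  have h2 : e (toIcoMod S.hP 0 t) = e t := he.2.sub_zsmul_eq (x := t) (toIcoDiv S.hP 0 t)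
  rw [← h2, neg_neg]
  exact hmin ⟨h1.1, h1.2.le⟩

/-- sign changing solutions with two nodal arcs -/
def E2 : Set (ℝ → ℝ) :=
  {e | S.Bx e ∧ S.Phi e = e ∧ S.Two e ∧ (∃ t, 0 < e t) ∧ ∃ t, e t < 0}

theorem lemmaK {z : ℕ → ℝ → ℝ} (hz : ∀ j, S.Bx (z j)) {j0 : ℝ} (hj0 : 0 < j0)
    (hJ : ∀ j, S.J (S.Phi (z j)) ≤ -j0)
    (hgap : Tendsto (fun j => S.J (S.Phi (z j)) - S.J (S.Phi (S.Phi (z j)))) atTop (nhds 0))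
    (h2 : ∀ j, S.Two (S.Phi (z j))) (hnp : ∀ j, ¬ ∀ t, 0 < S.Phi (z j) t)
    (hnn : ∀ j, ¬ ∀ t, S.Phi (z j) t < 0) :
    ∃ e ∈ S.E2, ∃ φ : ℕ → ℕ, StrictMono φ ∧
      TendstoUniformly (fun j => S.Phi (z (φ j))) e atTop ∧
      Tendsto (fun j => S.J (S.Phi (S.Phi (z (φ j))))) atTop (nhds (S.J e)) := by
  have hy : ∀ j, S.Bx (S.Phi (z j)) := fun j => S.Phi_Bx (hz j)
  obtain ⟨e, φ, hφ, hu⟩ := arzela (K := S.K1) (B := S.B) S.hP (fun j => S.Phi (z j))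
    (fun j => (hy j).1.2)
    (fun j s t => by
      have := Convex.norm_image_sub_le_of_norm_deriv_le (f := S.Phi (z j)) (s := univ) (x := t)
        (y := s) (C := S.K1) (fun x _ => ((S.Phi_D2 (hz j).1).1 x).differentiableAt)
        (fun x _ => S.Phi_deriv_bdd (hz j) x) convex_univ trivial trivial
      exact this)
    (fun j t => S.B_spec (hy j) t)
  have hpt : ∀ t, Tendsto (fun j => S.Phi (z (φ j)) t) atTop (nhds (e t)) := fun t => hu.tendsto_at t
  have hec : Continuous e := hu.continuous (Eventually.of_forall fun j => (hy (φ j)).1.1).frequently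
  have heB : S.Bx e := by
    refine ⟨⟨hec, fun t => ?_⟩, fun t => ⟨?_, ?_⟩⟩
    · refine tendsto_nhds_unique (hpt (t + S.P)) ((hpt t).congr fun j => ?_)
      exact ((hy (φ j)).1.2 t).symm
    · exact ge_of_tendsto (hpt t) (Eventually.of_forall fun j => ((hy (φ j)).2 t).1)
    · exact le_of_tendsto (hpt t) (Eventually.of_forall fun j => ((hy (φ j)).2 t).2)
  have hu2 : TendstoUniformly (fun j => S.Phi (S.Phi (z (φ j)))) (S.Phi e) atTop := by
    rw [Metric.tendstoUniformly_iff] at hu ⊢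
    intro ε hε
    filter_upwards [hu (ε / 3) (by positivity)] with j hj t
    have := S.Phi_lip_abs heB.1 (hy (φ j)).1 (d := ε / 3) (fun t => (hj t).le) t
    rw [Real.dist_eq]
    linarith
  have hpt2 : ∀ t, Tendsto (fun j => S.Phi (S.Phi (z (φ j))) t) atTop (nhds (S.Phi e t)) :=
    fun t => hu2.tendsto_at t
  have hJc := S.J_cont (fun j => hy (φ j)) heB hpt hpt2
  have hint : Tendsto (fun j => ∫ t in (0:ℝ)..S.P, (S.Phi (S.Phi (z (φ j))) t - S.Phi (z (φ j)) t) ^ 2)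
      atTop (nhds (∫ t in (0:ℝ)..S.P, (S.Phi e t - e t) ^ 2)) := by
    apply intervalIntegral.tendsto_integral_filter_of_dominated_convergence
      (fun _ => (2 * S.B) ^ 2)
    · apply Eventually.of_forall
      intro j
      have c1 := (hy (φ j)).1.1
      have c2 := (S.Phi_Bx (hy (φ j))).1.1
      exact (by fun_prop : Continuous fun t => (S.Phi (S.Phi (z (φ j))) t - S.Phi (z (φ j)) t) ^ 2).aestronglyMeasurable
    · refine Eventually.of_forall fun j => Eventually.of_forall fun t _ => ?_
      have c1 := S.B_spec (hy (φ j)) t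
      have c2 := S.B_spec (S.Phi_Bx (hy (φ j))) t
      rw [Real.norm_eq_abs, abs_pow]
      have := abs_sub (S.Phi (S.Phi (z (φ j))) t) (S.Phi (z (φ j)) t)
      gcongr
      linarith
    · exact intervalIntegrable_const
    · refine Eventually.of_forall fun t _ => ?_
      exact ((hpt2 t).sub (hpt t)).pow 2
  have hint0 : ∫ t in (0:ℝ)..S.P, (S.Phi e t - e t) ^ 2 ≤ 0 := by
    refine le_of_tendsto_of_tendsto hint (hgap.comp hφ.tendsto_atTop) (Eventually.of_forall fun j => ?_)
    have hw := S.Phi_D2 (hz (φ j)).1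
    have := S.J_descent (hy (φ j)).1 hw.1 hw.cont'
    simp only [Function.comp]
    linarith
  have hce : Continuous (S.Phi e) := (S.Phi_Adm heB.1).1
  have hfix : S.Phi e = e := by
    by_contra hne
    have : ∃ t, S.Phi e t ≠ e t := by
      by_contra hh; push Not at hh; exact hne (funext hh)
    obtain ⟨t, ht⟩ := this
    have h1 := toIcoMod_mem_Ico S.hP 0 t
    rw [zero_add] at h1
    have e1 : e (toIcoMod S.hP 0 t) = e t := heB.1.2.sub_zsmul_eq (x := t) (toIcoDiv S.hP 0 t)
    have e2 : S.Phi e (toIcoMod S.hP 0 t) = S.Phi e t :=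
      (S.Phi_Adm heB.1).2.sub_zsmul_eq (x := t) (toIcoDiv S.hP 0 t)
    have : 0 < ∫ t in (0:ℝ)..S.P, (S.Phi e t - e t) ^ 2 := by
      apply intervalIntegral.integral_pos S.hP (by fun_prop) (fun x _ => sq_nonneg _)
      refine ⟨toIcoMod S.hP 0 t, ⟨h1.1, h1.2.le⟩, ?_⟩
      rw [e1, e2]
      have := sub_ne_zero.2 ht
      positivity
    linarith
  rw [hfix] at hJc
  have hJe : S.J e ≤ -j0 := by
    refine le_of_tendsto hJc (Eventually.of_forall fun j => ?_)
    have hw := S.Phi_D2 (hz (φ j)).1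
    have h3 := S.J_descent (hy (φ j)).1 hw.1 hw.cont'
    have h4 := hJ (φ j)
    have h5 : 0 ≤ ∫ t in (0:ℝ)..S.P, (S.Phi (S.Phi (z (φ j))) t - S.Phi (z (φ j)) t) ^ 2 :=
      intervalIntegral.integral_nonneg S.hP.le fun _ _ => sq_nonneg _
    linarith
  refine ⟨e, ⟨heB, hfix, ?_, ?_, ?_⟩, φ, hφ, hu, hJc⟩
  · rintro ⟨t1, t2, t3, t4, h12, h23, h34, h41, p1, p2, p3, p4⟩
    have := ((hpt t1).eventually (lt_mem_nhds p1)).and (((hpt t2).eventually (gt_mem_nhds p2)).and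
      (((hpt t3).eventually (lt_mem_nhds p3)).and ((hpt t4).eventually (gt_mem_nhds p4))))
    obtain ⟨j, a1, a2, a3, a4⟩ := this.exists
    exact h2 (φ j) ⟨t1, t2, t3, t4, h12, h23, h34, h41, a1, a2, a3, a4⟩
  · by_contra hc
    push Not at hc
    obtain ⟨c, hc0, hc1⟩ := S.fix_neg heB.1 hfix (by linarith) hc
    rw [Metric.tendstoUniformly_iff] at hu
    obtain ⟨j, hj⟩ := (hu c hc0).exists
    apply hnn (φ j)
    intro t
    have h1 := hj t
    rw [Real.dist_eq, abs_lt] at h1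
    linarith [hc1 t, h1.1]
  · by_contra hc
    push Not at hc
    obtain ⟨c, hc0, hc1⟩ := S.fix_pos heB.1 hfix (by linarith) hc
    rw [Metric.tendstoUniformly_iff] at hu
    obtain ⟨j, hj⟩ := (hu c hc0).exists
    apply hnp (φ j)
    intro t
    have h1 := hj t
    rw [Real.dist_eq, abs_lt] at h1
    linarith [hc1 t, h1.2]
end Sys

/-! ### Geometry of angles -/

theorem cos_two_red {x1 x2 x3 x4 κ : ℝ} (h0 : 0 ≤ x1) (h1 : x1 < 2 * Real.pi) (h12 : x1 < x2)
    (h23 : x2 < x3) (h34 : x3 < x4) (h41 : x4 < x1 + 2 * Real.pi)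
    (p1 : κ < Real.cos x1) (p2 : Real.cos x2 < κ) (p3 : κ < Real.cos x3)
    (p4 : Real.cos x4 < κ) : False := by
  have hpi := Real.pi_pos
  have anti : ∀ x y, 0 ≤ x → x ≤ y → y ≤ Real.pi → Real.cos y ≤ Real.cos x := fun x y a b c =>
    Real.cos_le_cos_of_nonneg_of_le_pi a c b
  have mono : ∀ x y, Real.pi ≤ x → x ≤ y → y ≤ 2 * Real.pi → Real.cos x ≤ Real.cos y := by
    intro x y a b c
    rw [← Real.cos_two_pi_sub x, ← Real.cos_two_pi_sub y]
    exact anti _ _ (by linarith) (by linarith) (by linarith)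
  rcases le_total x1 Real.pi with hx | hx
  · have h3 : Real.pi < x3 := by
      by_contra hc
      push Not at hc
      linarith [anti x2 x3 (by linarith) h23.le hc]
    have h4 : 2 * Real.pi < x4 := by
      by_contra hc
      push Not at hc
      linarith [mono x3 x4 h3.le h34.le hc]
    have := anti (x4 - 2 * Real.pi) x1 (by linarith) (by linarith) hx
    rw [Real.cos_sub_two_pi] at this
    linarith
  · have h2 : 2 * Real.pi < x2 := by
      by_contra hc
      push Not at hc
      linarith [mono x1 x2 hx h12.le hc]
    have h3 : 3 * Real.pi < x3 := by
      by_contra hc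
      push Not at hc
      have := anti (x2 - 2 * Real.pi) (x3 - 2 * Real.pi) (by linarith) (by linarith) (by linarith)
      rw [Real.cos_sub_two_pi, Real.cos_sub_two_pi] at this
      linarith
    have := mono (x3 - 2 * Real.pi) (x4 - 2 * Real.pi) (by linarith) (by linarith) (by linarith)
    rw [Real.cos_sub_two_pi, Real.cos_sub_two_pi] at this
    linarith

theorem cos_two {x1 x2 x3 x4 κ : ℝ} (h12 : x1 < x2)
    (h23 : x2 < x3) (h34 : x3 < x4) (h41 : x4 < x1 + 2 * Real.pi)
    (p1 : κ < Real.cos x1) (p2 : Real.cos x2 < κ) (p3 : κ < Real.cos x3)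
    (p4 : Real.cos x4 < κ) : False := by
  have h := toIcoMod_mem_Ico Real.two_pi_pos 0 x1
  set n := toIcoDiv Real.two_pi_pos 0 x1
  have e : toIcoMod Real.two_pi_pos 0 x1 = x1 - n * (2 * Real.pi) := by
    rw [toIcoMod, zsmul_eq_mul]
  rw [e, zero_add] at h
  refine cos_two_red (κ := κ) (x1 := x1 - n * (2 * Real.pi)) (x2 := x2 - n * (2 * Real.pi))
    (x3 := x3 - n * (2 * Real.pi)) (x4 := x4 - n * (2 * Real.pi)) h.1 h.2 ?_ ?_ ?_ ?_ ?_ ?_ ?_ ?_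
  · linarith
  · linarith
  · linarith
  · linarith
  all_goals rw [Real.cos_sub_int_mul_two_pi]; assumption

namespace Sys
variable (S : Sys)

theorem arcs {u : ℝ → ℝ} (hu : S.Adm u) (h2 : S.Two u) {t1 : ℝ} (hp : 0 < u t1)
    (hn : ∃ t, u t < 0) : ∃ b a, t1 < b ∧ b < a ∧ a < t1 + S.P ∧ (∀ t ∈ Icc t1 b, 0 ≤ u t) ∧
      (∀ t ∈ Icc b a, u t ≤ 0) ∧ (∀ t ∈ Icc a (t1 + S.P), 0 ≤ u t) ∧ u b = 0 ∧ u a = 0 := by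
  obtain ⟨t, ht⟩ := hn
  have h1 := toIcoMod_mem_Ico S.hP t1 t
  have e1 : u (toIcoMod S.hP t1 t) = u t := hu.2.sub_zsmul_eq (x := t) (toIcoDiv S.hP t1 t)
  set s := toIcoMod S.hP t1 t
  have hP := S.hP
  have hs : u s < 0 := by rw [e1]; exact ht
  let N : Set ℝ := {x | x ∈ Icc t1 (t1 + S.P) ∧ u x < 0}
  have hsN : s ∈ N := ⟨⟨h1.1, h1.2.le⟩, hs⟩
  have hNb : BddBelow N := ⟨t1, fun x hx => hx.1.1⟩
  have hNa : BddAbove N := ⟨t1 + S.P, fun x hx => hx.1.2⟩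
  have hne : N.Nonempty := ⟨s, hsN⟩
  set b := sInf N
  set a := sSup N
  have hc := hu.1
  have hb1 : t1 ≤ b := le_csInf hne fun x hx => hx.1.1
  have ha1 : a ≤ t1 + S.P := csSup_le hne fun x hx => hx.1.2
  have hcl : N ⊆ {x | u x ≤ 0} := fun x hx => hx.2.le
  have hclosed : IsClosed {x | u x ≤ 0} := isClosed_le hc continuous_const
  have hub : u b ≤ 0 := hclosed.closure_subset_iff.2 hcl (csInf_mem_closure hne hNb)
  have hua : u a ≤ 0 := hclosed.closure_subset_iff.2 hcl (csSup_mem_closure hne hNa)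
  have hbt : t1 < b := lt_of_le_of_ne hb1 (by intro e; rw [← e] at hub; linarith)
  have hat : a < t1 + S.P := lt_of_le_of_ne ha1 (by intro e; rw [e, hu.2] at hua; linarith)
  have hbs : b ≤ s := csInf_le hNb hsN
  have hsa : s ≤ a := le_csSup hNa hsN
  have hge1 : ∀ t ∈ Ico t1 b, 0 ≤ u t := by
    intro t ht
    by_contra hneg
    push Not at hneg
    have := csInf_le hNb (show t ∈ N from ⟨⟨ht.1, by linarith [ht.2]⟩, hneg⟩)
    linarith [ht.2]
  have hge2 : ∀ t ∈ Ioc a (t1 + S.P), 0 ≤ u t := by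
    intro t ht
    by_contra hneg
    push Not at hneg
    have := le_csSup hNa (show t ∈ N from ⟨⟨by linarith [ht.1], ht.2⟩, hneg⟩)
    linarith [ht.1]
  have hub0 : 0 ≤ u b := by
    have : Icc t1 b ⊆ {x | 0 ≤ u x} := by
      rw [← closure_Ico hbt.ne]
      exact (isClosed_le continuous_const hc).closure_subset_iff.2 hge1
    exact this ⟨hbt.le, le_rfl⟩
  have hua0 : 0 ≤ u a := by
    have : Icc a (t1 + S.P) ⊆ {x | 0 ≤ u x} := by
      rw [← closure_Ioc hat.ne]
      exact (isClosed_le continuous_const hc).closure_subset_iff.2 hge2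
    exact this ⟨le_rfl, hat.le⟩
  have eb : u b = 0 := le_antisymm hub hub0
  have ea : u a = 0 := le_antisymm hua hua0
  have hbs' : b < s := lt_of_le_of_ne hbs (by intro e; rw [← e, eb] at hs; exact lt_irrefl _ hs)
  have hsa' : s < a := lt_of_le_of_ne hsa (by intro e; rw [e, ea] at hs; exact lt_irrefl _ hs)
  refine ⟨b, a, hbt, hbs'.trans hsa', hat, ?_, ?_, ?_, eb, ea⟩
  · intro t ht
    rcases ht.2.lt_or_eq with h | h
    · exact hge1 t ⟨ht.1, h⟩
    · rw [h, eb]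
  · intro t ht
    by_contra hpos
    push Not at hpos
    have hbt' : b < t := lt_of_le_of_ne ht.1 (by intro e; rw [← e, eb] at hpos; exact lt_irrefl _ hpos)
    have hta' : t < a := lt_of_le_of_ne ht.2 (by intro e; rw [e, ea] at hpos; exact lt_irrefl _ hpos)
    obtain ⟨x, hx, hxt⟩ := exists_lt_of_csInf_lt hne hbt'
    obtain ⟨y, hy, hty⟩ := exists_lt_of_lt_csSup hne hta'
    have hx1 : t1 < x := lt_of_lt_of_le hbt (csInf_le hNb hx)
    have hy1 : y < t1 + S.P := lt_of_le_of_lt (le_csSup hNa hy) hat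
    exact h2 ⟨t1, x, t, y, hx1, hxt, hty, hy1, hp, hx.2, hpos, hy.2⟩
  · intro t ht
    rcases ht.1.lt_or_eq with h | h
    · exact hge2 t ⟨h, ht.2⟩
    · rw [← h, ea]

noncomputable def om : ℝ := 2 * Real.pi / S.P
theorem om_pos : 0 < S.om := div_pos Real.two_pi_pos S.hP
theorem om_P : S.om * S.P = 2 * Real.pi := by
  unfold om; field_simp [S.hP.ne']

/-- separation of signs by the first harmonic -/
def Sep (u : ℝ → ℝ) (γ κ : ℝ) : Prop :=
  ∀ t, (0 < u t → Real.cos (S.om * t - γ) < κ) ∧ (u t < 0 → κ < Real.cos (S.om * t - γ))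

theorem exists_sep {u : ℝ → ℝ} (hu : S.Adm u) (h2 : S.Two u) (hp : ∃ t, 0 < u t)
    (hn : ∃ t, u t < 0) : ∃ γ κ, S.Sep u γ κ := by
  obtain ⟨t1, hp⟩ := hp
  obtain ⟨b, a, h1b, hba, ha1, k1, k2, k3, eb, ea⟩ := S.arcs hu h2 hp hn
  have hP := S.hP
  have ho := S.om_pos
  have hoP := S.om_P
  have hpi := Real.pi_pos
  set ω := S.om
  have anti : ∀ x y, 0 ≤ x → x < y → y ≤ Real.pi → Real.cos y < Real.cos x := fun x y a b c =>
    Real.cos_lt_cos_of_nonneg_of_le_pi a c b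
  have hb' : ω * (a - b) < 2 * Real.pi := by rw [← hoP]; gcongr; linarith
  have outer : ∀ x, ω * (a - b) / 2 < x → x < 2 * Real.pi - ω * (a - b) / 2 →
      Real.cos x < Real.cos (ω * (a - b) / 2) := by
    intro x h1 h2
    have : 0 < ω * (a - b) := mul_pos ho (by linarith)
    rcases le_total x Real.pi with h | h
    · exact anti _ _ (by linarith) h1 h
    · rw [← Real.cos_two_pi_sub x]
      exact anti _ _ (by linarith) (by linarith) (by linarith)
  refine ⟨ω * (a + b) / 2, Real.cos (ω * (a - b) / 2), fun t => ?_⟩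
  have h1 := toIcoMod_mem_Ico S.hP t1 t
  have e1 : u (toIcoMod S.hP t1 t) = u t := hu.2.sub_zsmul_eq (x := t) (toIcoDiv S.hP t1 t)
  have e2 : Real.cos (ω * (toIcoMod S.hP t1 t) - ω * (a + b) / 2) =
      Real.cos (ω * t - ω * (a + b) / 2) := by
    rw [toIcoMod, zsmul_eq_mul, show ω * (t - (toIcoDiv S.hP t1 t) * S.P) - ω * (a + b) / 2 =
      ω * t - ω * (a + b) / 2 - (toIcoDiv S.hP t1 t) * (ω * S.P) by ring, hoP,
      Real.cos_sub_int_mul_two_pi]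
  rw [← e1, ← e2]
  set s := toIcoMod S.hP t1 t
  constructor
  · intro hs
    rcases lt_or_ge s b with h | h
    · rw [← Real.cos_neg]
      apply outer
      · nlinarith
      · rw [← hoP]; nlinarith [h1.1]
    rcases le_or_gt s a with h' | h'
    · exact absurd (k2 s ⟨h, h'⟩) (not_le.2 hs)
    · apply outer
      · nlinarith
      · rw [← hoP]; nlinarith [h1.2]
  · intro hs
    have hbs : b < s := by
      by_contra hc
      push Not at hc
      linarith [k1 s ⟨h1.1, hc⟩]
    have hsa : s < a := by
      by_contra hc
      push Not at hc
      linarith [k3 s ⟨hc, h1.2.le⟩]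
    rw [← Real.cos_abs (ω * s - _)]
    apply anti _ _ (abs_nonneg _)
    · rw [abs_lt]; constructor <;> nlinarith
    · linarith

noncomputable def Psi (p q : ℝ → ℝ) : ℂ :=
  ⟨(∫ t in (0:ℝ)..S.P, p t * Real.cos (S.om * t)) * (∫ t in (0:ℝ)..S.P, q t) -
    (∫ t in (0:ℝ)..S.P, q t * Real.cos (S.om * t)) * (∫ t in (0:ℝ)..S.P, p t),
   (∫ t in (0:ℝ)..S.P, p t * Real.sin (S.om * t)) * (∫ t in (0:ℝ)..S.P, q t) -
    (∫ t in (0:ℝ)..S.P, q t * Real.sin (S.om * t)) * (∫ t in (0:ℝ)..S.P, p t)⟩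

theorem psi_pos {u p q : ℝ → ℝ} {γ κ : ℝ} (hs : S.Sep u γ κ) (hp : Continuous p)
    (hq : Continuous q) (hp0 : ∀ t, 0 ≤ p t) (hq0 : ∀ t, 0 ≤ q t) (hpu : ∀ t, 0 < p t → 0 < u t)
    (hqu : ∀ t, 0 < q t → u t < 0) (hp1 : ∃ t ∈ Icc 0 S.P, 0 < p t)
    (hq1 : ∃ t ∈ Icc 0 S.P, 0 < q t) :
    Real.cos γ * (S.Psi p q).re + Real.sin γ * (S.Psi p q).im < 0 := by
  have key : ∀ p : ℝ → ℝ, Continuous p → Real.cos γ * (∫ t in (0:ℝ)..S.P, p t * Real.cos (S.om * t)) +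
      Real.sin γ * (∫ t in (0:ℝ)..S.P, p t * Real.sin (S.om * t)) - κ * (∫ t in (0:ℝ)..S.P, p t) =
      ∫ t in (0:ℝ)..S.P, p t * (Real.cos (S.om * t - γ) - κ) := by
    intro p hp
    rw [← intervalIntegral.integral_const_mul, ← intervalIntegral.integral_const_mul,
      ← intervalIntegral.integral_const_mul, ← intervalIntegral.integral_add,
      ← intervalIntegral.integral_sub]
    · congr 1
      funext t
      rw [Real.cos_sub]; ring
    all_goals exact Continuous.intervalIntegrable (by fun_prop) _ _
  have ip : 0 < ∫ t in (0:ℝ)..S.P, p t := by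
    obtain ⟨t, ht, h⟩ := hp1
    exact intervalIntegral.integral_pos S.hP hp.continuousOn (fun x _ => hp0 x) ⟨t, ht, h⟩
  have iq : 0 < ∫ t in (0:ℝ)..S.P, q t := by
    obtain ⟨t, ht, h⟩ := hq1
    exact intervalIntegral.integral_pos S.hP hq.continuousOn (fun x _ => hq0 x) ⟨t, ht, h⟩
  have jp : 0 < ∫ t in (0:ℝ)..S.P, -(p t * (Real.cos (S.om * t - γ) - κ)) := by
    obtain ⟨t, ht, h⟩ := hp1
    refine intervalIntegral.integral_pos S.hP (by fun_prop) (fun x _ => ?_) ⟨t, ht, ?_⟩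
    · rcases (hp0 x).lt_or_eq with h | h
      · have := (hs x).1 (hpu x h)
        nlinarith
      · rw [← h]; simp
    · have := (hs t).1 (hpu t h)
      nlinarith
  have jq : 0 < ∫ t in (0:ℝ)..S.P, (q t * (Real.cos (S.om * t - γ) - κ)) := by
    obtain ⟨t, ht, h⟩ := hq1
    refine intervalIntegral.integral_pos S.hP (by fun_prop) (fun x _ => ?_) ⟨t, ht, ?_⟩
    · rcases (hq0 x).lt_or_eq with h | h
      · have := (hs x).2 (hqu x h)
        nlinarith
      · rw [← h]; simp
    · have := (hs t).2 (hqu t h)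
      nlinarith
  rw [intervalIntegral.integral_neg] at jp
  rw [← key p hp] at jp
  rw [← key q hq] at jq
  simp only [Psi]
  nlinarith
end Sys

theorem slit {z w : ℂ} {γ : ℝ} (hz : Real.cos γ * z.re + Real.sin γ * z.im < 0)
    (hw : Real.cos γ * w.re + Real.sin γ * w.im < 0) :
    z * (starRingEnd ℂ) w ∈ Complex.slitPlane := by
  rw [Complex.mem_slitPlane_iff]
  by_cases him : (z * (starRingEnd ℂ) w).im = 0
  · left
    simp only [Complex.mul_re, Complex.mul_im, Complex.conj_re, Complex.conj_im] at *
    have h1 := Real.cos_sq_add_sin_sq γ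
    set x := Real.cos γ
    set y := Real.sin γ
    have e1 : (x * z.re + y * z.im) * (-y * w.re + x * w.im) =
        (-y * z.re + x * z.im) * (x * w.re + y * w.im) := by
      linear_combination -(x^2 + y^2) * him
    have e2 : z.re * w.re - z.im * -w.im = (x * z.re + y * z.im) * (x * w.re + y * w.im) +
        (-y * z.re + x * z.im) * (-y * w.re + x * w.im) := by
      linear_combination -(z.re * w.re + z.im * w.im) * h1
    rw [e2]
    have e3 : 0 < (x * z.re + y * z.im) * (x * w.re + y * w.im) := mul_pos_of_neg_of_neg hz hw
    have e4 : 0 ≤ (-y * z.re + x * z.im) * (-y * w.re + x * w.im) := by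
      by_contra hc
      push Not at hc
      have := mul_neg_of_pos_of_neg e3 hc
      have h5 : (x * z.re + y * z.im) * (x * w.re + y * w.im) * ((-y * z.re + x * z.im) *
        (-y * w.re + x * w.im)) = ((-y * z.re + x * z.im) * (x * w.re + y * w.im)) ^ 2 := by
        linear_combination ((-y * z.re + x * z.im) * (x * w.re + y * w.im)) * e1
      nlinarith [sq_nonneg ((-y * z.re + x * z.im) * (x * w.re + y * w.im))]
    linarith
  · exact Or.inr him

theorem arg_step {z w : ℂ} {A : ℝ} (hz : z = ‖z‖ * Complex.exp (A * Complex.I))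
    (h : w * (starRingEnd ℂ) z ∈ Complex.slitPlane) :
    w = ‖w‖ * Complex.exp ((A + Complex.arg (w * (starRingEnd ℂ) z) : ℝ) * Complex.I) := by
  have h0 : w * (starRingEnd ℂ) z ≠ 0 := Complex.slitPlane_ne_zero h
  have hz0 : z ≠ 0 := by rintro rfl; simp at h0
  have e1 := Complex.norm_mul_exp_arg_mul_I (w * (starRingEnd ℂ) z)
  set β := Complex.arg (w * (starRingEnd ℂ) z)
  rw [norm_mul, RCLike.norm_conj] at e1
  have hn : (‖z‖ : ℂ) ≠ 0 := by exact_mod_cast norm_ne_zero_iff.2 hz0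
  have e2 : z * (starRingEnd ℂ) z = (‖z‖ : ℂ) ^ 2 := Complex.mul_conj' z
  have e3 : w * (‖z‖ : ℂ) ^ 2 = (‖w‖ * Complex.exp ((A + β : ℝ) * Complex.I)) * (‖z‖ : ℂ) ^ 2 := by
    rw [← e2]
    calc w * (z * (starRingEnd ℂ) z) = z * (w * (starRingEnd ℂ) z) := by ring
      _ = (‖z‖ * Complex.exp (A * Complex.I)) * (((‖w‖ * ‖z‖ : ℝ) : ℂ) * Complex.exp (β * Complex.I)) := by
        rw [← hz, e1]
      _ = _ := by
        rw [e2]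
        push_cast
        rw [add_mul, Complex.exp_add]
        ring
  exact mul_right_cancel₀ (pow_ne_zero 2 hn) e3

theorem lift_angle {Γ : Set (ℝ × ℝ)} {Z W : ℕ → ℝ × ℝ → ℂ} (hZ : ∀ n, Continuous (Z n))
    (hW : ∀ n, Continuous (W n))
    (h0 : ∀ p ∈ Γ, Z 0 p * (starRingEnd ℂ) (Complex.exp (p.1 * Complex.I)) ∈ Complex.slitPlane)
    (h1 : ∀ n, ∀ p ∈ Γ, W n p * (starRingEnd ℂ) (Z n p) ∈ Complex.slitPlane)
    (h2 : ∀ n, ∀ p ∈ Γ, Z (n + 1) p * (starRingEnd ℂ) (W n p) ∈ Complex.slitPlane) (n : ℕ) :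
    ∃ (A : ℝ × ℝ → ℝ) (C : ℝ), ContinuousOn A Γ ∧ (∀ p ∈ Γ, |A p - p.1| ≤ C) ∧
      ∀ p ∈ Γ, Z n p = ‖Z n p‖ * Complex.exp (A p * Complex.I) := by
  have cont : ∀ z w : ℝ × ℝ → ℂ, Continuous z → Continuous w →
      (∀ p ∈ Γ, w p * (starRingEnd ℂ) (z p) ∈ Complex.slitPlane) →
      ContinuousOn (fun p => Complex.arg (w p * (starRingEnd ℂ) (z p))) Γ := by
    intro z w hz hw h p hp
    have : ContinuousAt (fun p => w p * (starRingEnd ℂ) (z p)) p :=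
      (hw.mul (Complex.continuous_conj.comp hz)).continuousAt
    exact ((Complex.continuousAt_arg (h p hp)).comp (f := fun p => w p * (starRingEnd ℂ) (z p)) this).continuousWithinAt
  induction n with
  | zero =>
    refine ⟨fun p => p.1 + Complex.arg (Z 0 p * (starRingEnd ℂ) (Complex.exp (p.1 * Complex.I))),
      Real.pi, ?_, ?_, ?_⟩
    · refine continuous_fst.continuousOn.add (cont _ _ ?_ (hZ 0) h0)
      fun_prop
    · intro p hp
      simp only [add_sub_cancel_left]
      exact Complex.abs_arg_le_pi _
    · intro p hp
      refine arg_step ?_ (h0 p hp)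
      rw [Complex.norm_exp_ofReal_mul_I]; simp
  | succ n ih =>
    obtain ⟨A, C, c, b, e⟩ := ih
    refine ⟨fun p => A p + Complex.arg (W n p * (starRingEnd ℂ) (Z n p)) +
      Complex.arg (Z (n + 1) p * (starRingEnd ℂ) (W n p)), C + Real.pi + Real.pi, ?_, ?_, ?_⟩
    · exact (c.add (cont _ _ (hZ n) (hW n) (h1 n))).add (cont _ _ (hW n) (hZ (n + 1)) (h2 n))
    · intro p hp
      have a1 := abs_le.1 (b p hp)
      have a2 := abs_le.1 (Complex.abs_arg_le_pi (W n p * (starRingEnd ℂ) (Z n p)))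
      have a3 := abs_le.1 (Complex.abs_arg_le_pi (Z (n + 1) p * (starRingEnd ℂ) (W n p)))
      rw [abs_le]
      constructor <;> linarith [a1.1, a1.2, a2.1, a2.2, a3.1, a3.2]
    · intro p hp
      exact arg_step (arg_step (e p hp) (h1 n p hp)) (h2 n p hp)

theorem topo {U V : Set (ℝ × ℝ)} (hU : IsOpen U) (hV : IsOpen V) (hUV : Disjoint U V)
    (h1 : ∀ θ, (θ, (1:ℝ)) ∈ U) (h2 : ∀ θ, (θ, (-1:ℝ)) ∈ V) {A : ℝ × ℝ → ℝ} {C : ℝ}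
    (hA : ContinuousOn A (U ∪ V)ᶜ) (hC : ∀ p ∈ (U ∪ V)ᶜ, |A p - p.1| ≤ C) (c0 : ℝ) :
    ∃ p ∈ (U ∪ V)ᶜ, p.2 ∈ Icc (-1:ℝ) 1 ∧ A p = c0 := by
  by_contra hcon
  push Not at hcon
  set M := |c0| + |C| + 1 with hM
  have hM0 : 0 < M := by positivity
  have hc0 := abs_le.1 (le_refl |c0|)
  have hC1 := le_abs_self C
  set Q : Set (ℝ × ℝ) := (U ∪ V)ᶜ ∩ {p | p.2 ∈ Icc (-1:ℝ) 1} with hQ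
  have hQc : IsClosed Q := (hU.union hV).isClosed_compl.inter (isClosed_Icc.preimage continuous_snd)
  have hAQ : ContinuousOn A Q := hA.mono inter_subset_left
  set CL : Set (ℝ × ℝ) := (Q ∩ A ⁻¹' Iic c0) ∪ {p | p.1 = -M}
  set CR : Set (ℝ × ℝ) := (Q ∩ A ⁻¹' Ici c0) ∪ {p | p.1 = M}
  have hCL : IsClosed CL := (hAQ.preimage_isClosed_of_isClosed hQc isClosed_Iic).union
    (isClosed_eq continuous_fst continuous_const)
  have hCR : IsClosed CR := (hAQ.preimage_isClosed_of_isClosed hQc isClosed_Ici).union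
    (isClosed_eq continuous_fst continuous_const)
  have hCLn : CL.Nonempty := ⟨(-M, 0), Or.inr rfl⟩
  have hCRn : CR.Nonempty := ⟨(M, 0), Or.inr rfl⟩
  have hdis : ∀ p, p ∈ CL → p ∈ CR → False := by
    rintro p (⟨a1, a2⟩ | a1) (⟨b1, b2⟩ | b1)
    · exact hcon p a1.1 a1.2 (le_antisymm a2 b2)
    · have := abs_le.1 (hC p a1.1)
      have a2 : A p ≤ c0 := a2
      have b1 : p.1 = M := b1
      linarith [this.1, this.2]
    · have := abs_le.1 (hC p b1.1)
      have b2 : c0 ≤ A p := b2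
      have a1 : p.1 = -M := a1
      linarith [this.1, this.2]
    · have b1 : p.1 = M := b1
      have a1 : p.1 = -M := a1
      linarith
  have hUn : Uᶜ.Nonempty := ⟨(0, -1), fun h => hUV.le_bot ⟨h, h2 0⟩⟩
  have hVn : Vᶜ.Nonempty := ⟨(0, 1), fun h => hUV.le_bot ⟨h1 0, h⟩⟩
  have dpos : ∀ {X : Set (ℝ × ℝ)} {p}, IsClosed X → X.Nonempty → p ∉ X → 0 < Metric.infDist p X :=
    fun hX hn hp => (hX.notMem_iff_infDist_pos hn).1 hp
  obtain ⟨p, hp1, hp2, hF, hG⟩ := poincare_miranda M hM0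
    (fun p => Metric.infDist p CL - Metric.infDist p CR)
    (fun p => Metric.infDist p Uᶜ - Metric.infDist p Vᶜ)
    ((Metric.continuous_infDist_pt _).sub (Metric.continuous_infDist_pt _))
    ((Metric.continuous_infDist_pt _).sub (Metric.continuous_infDist_pt _))
    (fun s _ => by
      have a : (-M, s) ∈ CL := Or.inr rfl
      have := dpos hCR hCRn (fun h => hdis _ a h)
      simp only [Metric.infDist_zero_of_mem a]
      linarith)
    (fun s _ => by
      have a : (M, s) ∈ CR := Or.inr rfl
      have := dpos hCL hCLn (fun h => hdis _ h a)
      simp only [Metric.infDist_zero_of_mem a]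
      linarith)
    (fun x _ => by
      have a : (x, (-1:ℝ)) ∈ Uᶜ := fun h => hUV.le_bot ⟨h, h2 x⟩
      have := dpos hV.isClosed_compl hVn (fun h : (x, (-1:ℝ)) ∈ Vᶜ => h (h2 x))
      simp only [Metric.infDist_zero_of_mem a]
      linarith)
    (fun x _ => by
      have a : (x, (1:ℝ)) ∈ Vᶜ := fun h => hUV.le_bot ⟨h1 x, h⟩
      have := dpos hU.isClosed_compl hUn (fun h : (x, (1:ℝ)) ∈ Uᶜ => h (h1 x))
      simp only [Metric.infDist_zero_of_mem a]
      linarith)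
  have hpΓ : p ∈ (U ∪ V)ᶜ := by
    rintro (h | h)
    · have a : p ∈ Vᶜ := fun h' => hUV.le_bot ⟨h, h'⟩
      have := dpos hU.isClosed_compl hUn (fun h' : p ∈ Uᶜ => h' h)
      rw [Metric.infDist_zero_of_mem a] at hG
      linarith
    · have a : p ∈ Uᶜ := fun h' => hUV.le_bot ⟨h', h⟩
      have := dpos hV.isClosed_compl hVn (fun h' : p ∈ Vᶜ => h' h)
      rw [Metric.infDist_zero_of_mem a] at hG
      linarith
  rcases le_total (A p) c0 with h | h
  · have a : p ∈ CL := Or.inl ⟨⟨hpΓ, hp2⟩, h⟩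
    have := dpos hCR hCRn (fun h => hdis _ a h)
    rw [Metric.infDist_zero_of_mem a] at hF
    linarith
  · have a : p ∈ CR := Or.inl ⟨⟨hpΓ, hp2⟩, h⟩
    have := dpos hCL hCLn (fun h => hdis _ h a)
    rw [Metric.infDist_zero_of_mem a] at hF
    linarith

namespace Sys
variable (S : Sys)

theorem J_lower : ∃ C, ∀ u u' : ℝ → ℝ, S.Bx u → (∀ t, HasDerivAt u (u' t) t) → Continuous u' →
    -C ≤ S.J u := by
  refine ⟨∫ t in (0:ℝ)..S.P, S.L t * S.B ^ 2, fun u u' hu hd hc => ?_⟩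
  have hdu : deriv u = u' := funext fun t => (hd t).deriv
  unfold J
  rw [hdu, ← intervalIntegral.integral_neg]
  apply int_mono_ae
  · exact (LI.mul_cont S.hL continuous_const).neg
  · exact (LI.of_cont (by fun_prop)).sub (S.FLI hu.1.1)
  · exact S.hP.le
  · refine Eventually.of_forall fun t _ => ?_
    have h1 := (abs_le.1 (S.F_abs t (u t))).2
    have h2 : u t ^ 2 ≤ S.B ^ 2 := by rw [← sq_abs]; have := S.B_spec hu t; gcongr
    have h3 := S.hL0 t
    have : S.L t * u t ^ 2 ≤ S.L t * S.B ^ 2 := by gcongr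
    nlinarith [sq_nonneg (u' t)]

theorem Psi_tendsto {ι : Type*} {l : Filter ι} [l.IsCountablyGenerated] {p q : ι → ℝ → ℝ}
    {p0 q0 : ℝ → ℝ} {B : ℝ} (hp : ∀ i, Continuous (p i)) (hq : ∀ i, Continuous (q i))
    (bp : ∀ i t, |p i t| ≤ B) (bq : ∀ i t, |q i t| ≤ B)
    (lp : ∀ t, Tendsto (fun i => p i t) l (nhds (p0 t)))
    (lq : ∀ t, Tendsto (fun i => q i t) l (nhds (q0 t))) :
    Tendsto (fun i => S.Psi (p i) (q i)) l (nhds (S.Psi p0 q0)) := by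
  have key : ∀ (c : ℝ → ℝ), Continuous c → (∀ t, |c t| ≤ 1) → ∀ {p : ι → ℝ → ℝ} {p0 : ℝ → ℝ},
      (∀ i, Continuous (p i)) → (∀ i t, |p i t| ≤ B) →
      (∀ t, Tendsto (fun i => p i t) l (nhds (p0 t))) →
      Tendsto (fun i => ∫ t in (0:ℝ)..S.P, p i t * c t) l (nhds (∫ t in (0:ℝ)..S.P, p0 t * c t)) := by
    intro c hc hc1 p p0 hp bp lp
    apply intervalIntegral.tendsto_integral_filter_of_dominated_convergence (fun _ => B)
    · refine Eventually.of_forall fun i => ?_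
      exact ((hp i).mul hc).aestronglyMeasurable
    · refine Eventually.of_forall fun i => Eventually.of_forall fun t _ => ?_
      rw [Real.norm_eq_abs, abs_mul]
      calc |p i t| * |c t| ≤ |p i t| * 1 := by gcongr; exact hc1 t
        _ ≤ B := by rw [mul_one]; exact bp i t
    · exact intervalIntegrable_const
    · exact Eventually.of_forall fun t _ => (lp t).mul_const _
  have k1 := key (fun t => Real.cos (S.om * t)) (by fun_prop) (fun t => Real.abs_cos_le_one _) hp bp lp
  have k2 := key (fun t => Real.cos (S.om * t)) (by fun_prop) (fun t => Real.abs_cos_le_one _) hq bq lq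
  have k3 := key (fun t => Real.sin (S.om * t)) (by fun_prop) (fun t => Real.abs_sin_le_one _) hp bp lp
  have k4 := key (fun t => Real.sin (S.om * t)) (by fun_prop) (fun t => Real.abs_sin_le_one _) hq bq lq
  have k5 := key (fun t => 1) (by fun_prop) (fun t => by simp) hp bp lp
  have k6 := key (fun t => 1) (by fun_prop) (fun t => by simp) hq bq lq
  simp only [mul_one] at k5 k6
  have k7 := (k1.mul k6).sub (k2.mul k5)
  have k8 := (k3.mul k6).sub (k4.mul k5)
  have k9 := (Complex.equivRealProdCLM.symm.continuous.tendsto _).comp (k7.prodMk_nhds k8)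
  exact k9

/-- positive part, negative part -/
noncomputable def ppart (u : ℝ → ℝ) (t : ℝ) : ℝ := max (u t) 0
noncomputable def npart (u : ℝ → ℝ) (t : ℝ) : ℝ := max (-u t) 0

theorem exists_Icc {u : ℝ → ℝ} (hu : Function.Periodic u S.P) {Q : ℝ → Prop} (h : ∃ t, Q (u t)) :
    ∃ t ∈ Icc 0 S.P, Q (u t) := by
  obtain ⟨t, ht⟩ := h
  have h1 := toIcoMod_mem_Ico S.hP 0 t
  rw [zero_add] at h1
  have e1 : u (toIcoMod S.hP 0 t) = u t := hu.sub_zsmul_eq (x := t) (toIcoDiv S.hP 0 t)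
  exact ⟨_, ⟨h1.1, h1.2.le⟩, by rw [e1]; exact ht⟩

noncomputable def Ps (u : ℝ → ℝ) : ℂ := S.Psi (ppart u) (npart u)

theorem Ps_neg {u : ℝ → ℝ} (hu : S.Adm u) {γ κ : ℝ} (hs : S.Sep u γ κ) (hp : ∃ t, 0 < u t)
    (hn : ∃ t, u t < 0) : Real.cos γ * (S.Ps u).re + Real.sin γ * (S.Ps u).im < 0 := by
  have hc := hu.1
  apply S.psi_pos hs (by
               try unfold ppart
               fun_prop) (by
               try unfold npart
               fun_prop)
    (fun t => le_max_right _ _) (fun t => le_max_right _ _)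
  · intro t ht; simpa [ppart] using ht
  · intro t ht; simpa [npart] using ht
  · obtain ⟨t, h1, h2⟩ := S.exists_Icc hu.2 (Q := fun x => 0 < x) hp
    exact ⟨t, h1, by simpa [ppart] using h2⟩
  · obtain ⟨t, h1, h2⟩ := S.exists_Icc hu.2 (Q := fun x => x < 0) hn
    exact ⟨t, h1, by simpa [npart] using h2⟩

noncomputable def Pm (u w : ℝ → ℝ) : ℂ :=
  S.Psi (fun t => min (ppart u t) (ppart w t)) (fun t => min (npart u t) (npart w t))

theorem Pm_neg {u w y : ℝ → ℝ} (hu : S.Adm u) (hw : S.Adm w) {γ κ : ℝ} (hy : y = u ∨ y = w)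
    (hs : S.Sep y γ κ) (hp : ∃ t, 0 < u t ∧ 0 < w t) (hn : ∃ t, u t < 0 ∧ w t < 0) :
    Real.cos γ * (S.Pm u w).re + Real.sin γ * (S.Pm u w).im < 0 := by
  have hc := hu.1
  have hc' := hw.1
  have per : Function.Periodic (fun t => (u t, w t)) S.P := fun t => by simp only [hu.2 t, hw.2 t]
  have q1 : ∀ t, 0 < min (ppart u t) (ppart w t) ↔ 0 < u t ∧ 0 < w t := by
    intro t; simp [ppart]
  have q2 : ∀ t, 0 < min (npart u t) (npart w t) ↔ u t < 0 ∧ w t < 0 := by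
    intro t; simp [npart]
  apply S.psi_pos hs (by
               try unfold ppart
               fun_prop) (by
               try unfold npart
               fun_prop)
    (fun t => le_min (le_max_right _ _) (le_max_right _ _))
    (fun t => le_min (le_max_right _ _) (le_max_right _ _))
  · intro t ht
    have := (q1 t).1 ht
    rcases hy with rfl | rfl
    · exact this.1
    · exact this.2
  · intro t ht
    have := (q2 t).1 ht
    rcases hy with rfl | rfl
    · exact this.1
    · exact this.2
  · obtain ⟨t, h2⟩ := hp
    have h1 := toIcoMod_mem_Ico S.hP 0 t
    rw [zero_add] at h1
    have e1 : u (toIcoMod S.hP 0 t) = u t := hu.2.sub_zsmul_eq (x := t) (toIcoDiv S.hP 0 t)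
    have e2 : w (toIcoMod S.hP 0 t) = w t := hw.2.sub_zsmul_eq (x := t) (toIcoDiv S.hP 0 t)
    exact ⟨_, ⟨h1.1, h1.2.le⟩, (q1 _).2 (by rw [e1, e2]; exact h2)⟩
  · obtain ⟨t, h2⟩ := hn
    have h1 := toIcoMod_mem_Ico S.hP 0 t
    rw [zero_add] at h1
    have e1 : u (toIcoMod S.hP 0 t) = u t := hu.2.sub_zsmul_eq (x := t) (toIcoDiv S.hP 0 t)
    have e2 : w (toIcoMod S.hP 0 t) = w t := hw.2.sub_zsmul_eq (x := t) (toIcoDiv S.hP 0 t)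
    exact ⟨_, ⟨h1.1, h1.2.le⟩, (q2 _).2 (by rw [e1, e2]; exact h2)⟩

theorem part_bdd {u : ℝ → ℝ} {B : ℝ} {t : ℝ} (h : |u t| ≤ B) : |ppart u t| ≤ B ∧ |npart u t| ≤ B := by
  have h1 := abs_le.1 h
  have h2 := (abs_nonneg _).trans h
  unfold ppart npart
  rw [abs_of_nonneg (le_max_right _ _), abs_of_nonneg (le_max_right _ _)]
  exact ⟨max_le h1.2 h2, max_le (by linarith [h1.1]) h2⟩

theorem theoremA {X0 : ℝ × ℝ → ℝ → ℝ} {j0 : ℝ} (hj0 : 0 < j0) (hB : ∀ p, S.Bx (X0 p))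
    (h2 : ∀ p, S.Two (X0 p))
    (hC1 : ∀ p, ∃ u', (∀ t, HasDerivAt (X0 p) (u' t) t) ∧ Continuous u')
    (hJ : ∀ p, S.J (X0 p) ≤ -j0)
    (hcont : ∀ p, ∀ ε > 0, ∀ᶠ p' in nhds p, ∀ t, |X0 p' t - X0 p t| ≤ ε)
    (htop : ∀ θ t, 0 < X0 (θ, 1) t) (hbot : ∀ θ t, X0 (θ, -1) t < 0)
    (hper : ∀ (n : ℤ) θ s, X0 (θ - n * (2 * Real.pi), s) = X0 (θ, s))
    (hsep : ∀ p, (∃ t, 0 < X0 p t) → (∃ t, X0 p t < 0) → ∃ κ, S.Sep (X0 p) (p.1 + Real.pi) κ)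
    (hcount : S.E2.Countable) {c : ℝ} (hEc : ∀ e ∈ S.E2, S.J e = c) : False := by
  set x : ℕ → ℝ × ℝ → ℝ → ℝ := fun n p => S.Phi^[n] (X0 p) with hx
  have x0 : ∀ p, x 0 p = X0 p := fun p => rfl
  have xs : ∀ n p, x (n + 1) p = S.Phi (x n p) := fun n p => Function.iterate_succ_apply' _ _ _
  have xB : ∀ n p, S.Bx (x n p) := by
    intro n p
    induction n with
    | zero => exact hB p
    | succ n ih => rw [xs]; exact S.Phi_Bx ih
  have xT : ∀ n p, S.Two (x n p) := by
    intro n p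
    induction n with
    | zero => exact h2 p
    | succ n ih => rw [xs]; exact S.Phi_Two (xB n p).1 ih
  have xper : ∀ n (m : ℤ) θ s, x n (θ - m * (2 * Real.pi), s) = x n (θ, s) := by
    intro n m θ s
    simp only [hx, hper]
  have xC1 : ∀ n p, ∃ u', (∀ t, HasDerivAt (x n p) (u' t) t) ∧ Continuous u' := by
    intro n p
    cases n with
    | zero => exact hC1 p
    | succ n =>
      rw [xs]
      have := S.Phi_D2 (xB n p).1
      exact ⟨_, this.1, this.cont'⟩
  have xJ : ∀ n p, S.J (x (n + 1) p) ≤ S.J (x n p) := by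
    intro n p
    obtain ⟨u', h1, h3⟩ := xC1 n p
    have := S.J_descent (xB n p).1 h1 h3
    have h5 : 0 ≤ ∫ t in (0:ℝ)..S.P, (S.Phi (x n p) t - x n p t) ^ 2 :=
      intervalIntegral.integral_nonneg S.hP.le fun _ _ => sq_nonneg _
    rw [xs]
    linarith
  have xanti : ∀ p, Antitone fun n => S.J (x n p) := fun p => antitone_nat_of_succ_le (xJ · p)
  have xJ0 : ∀ n p, S.J (x n p) ≤ -j0 := fun n p => (xanti p (Nat.zero_le n)).trans (hJ p)
  obtain ⟨C, hC⟩ := S.J_lower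
  have xlow : ∀ n p, -C ≤ S.J (x n p) := by
    intro n p
    obtain ⟨u', h1, h3⟩ := xC1 n p
    exact hC _ u' (xB n p) h1 h3
  have xcont : ∀ n p, ∀ ε > 0, ∀ᶠ p' in nhds p, ∀ t, |x n p' t - x n p t| ≤ ε := by
    intro n p
    induction n with
    | zero => exact hcont p
    | succ n ih =>
      intro ε hε
      filter_upwards [ih (ε / 2) (by positivity)] with p' hp' t
      rw [xs, xs]
      have := S.Phi_lip_abs (xB n p').1 (xB n p).1 hp' t
      linarith
  have xlim : ∀ n p t, Tendsto (fun p' => x n p' t) (nhds p) (nhds (x n p t)) := by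
    intro n p t
    rw [Metric.tendsto_nhds]
    intro ε hε
    filter_upwards [xcont n p (ε / 2) (by positivity)] with p' hp'
    rw [Real.dist_eq]
    linarith [hp' t]
  have xJc : ∀ n p, Tendsto (fun p' => S.J (x (n + 1) p')) (nhds p) (nhds (S.J (x (n + 1) p))) := by
    intro n p
    simp only [xs]
    refine S.J_cont (fun p' => xB n p') (xB n p) (xlim n p) (fun t => ?_)
    have := xlim (n + 1) p t
    simp only [xs] at this
    exact this
  -- the two open sets
  set U : Set (ℝ × ℝ) := {p | ∃ n, ∀ t, 0 < x n p t}
  set V : Set (ℝ × ℝ) := {p | ∃ n, ∀ t, x n p t < 0}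
  have minpos : ∀ {u : ℝ → ℝ}, S.Adm u → (∀ t, 0 < u t) → ∃ d > 0, ∀ t, d ≤ u t := by
    intro u hu h
    obtain ⟨s, hs, hmin⟩ := isCompact_Icc.exists_isMinOn (nonempty_Icc.2 S.hP.le) hu.1.continuousOn
    refine ⟨u s, h s, fun t => ?_⟩
    by_contra hc
    push Not at hc
    obtain ⟨t', h1, h3⟩ := S.exists_Icc hu.2 (Q := fun y => y < u s) ⟨t, hc⟩
    exact absurd (hmin h1) (not_le.2 h3)
  have hU : IsOpen U := by
    rw [isOpen_iff_mem_nhds]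
    rintro p ⟨n, hn⟩
    obtain ⟨d, hd, hd'⟩ := minpos (xB n p).1 hn
    filter_upwards [xcont n p (d / 2) (by positivity)] with p' hp'
    refine ⟨n, fun t => ?_⟩
    have := (abs_le.1 (hp' t)).1
    linarith [hd' t]
  have hV : IsOpen V := by
    rw [isOpen_iff_mem_nhds]
    rintro p ⟨n, hn⟩
    have hA : S.Adm (fun t => - x n p t) := ⟨(xB n p).1.1.neg, fun t => by simp only [(xB n p).1.2 t]⟩
    obtain ⟨d, hd, hd'⟩ := minpos hA (fun t => neg_pos.2 (hn t))
    filter_upwards [xcont n p (d / 2) (by positivity)] with p' hp'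
    refine ⟨n, fun t => ?_⟩
    have := (abs_le.1 (hp' t)).2
    linarith [hd' t]
  have stay_pos : ∀ n p, (∀ t, 0 ≤ x n p t) → ∀ k, ∀ t, 0 ≤ x (n + k) p t := by
    intro n p h k
    induction k with
    | zero => exact h
    | succ k ih => intro t; rw [← add_assoc, xs]; exact S.Phi_nonneg (xB _ p).1 ih t
  have stay_neg : ∀ n p, (∀ t, x n p t ≤ 0) → ∀ k, ∀ t, x (n + k) p t ≤ 0 := by
    intro n p h k
    induction k with
    | zero => exact h
    | succ k ih => intro t; rw [← add_assoc, xs]; exact S.Phi_nonpos (xB _ p).1 ih t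
  have hUV : Disjoint U V := by
    rw [Set.disjoint_left]
    rintro p ⟨n, hn⟩ ⟨m, hm⟩
    rcases le_total n m with h | h
    · obtain ⟨k, rfl⟩ := Nat.exists_eq_add_of_le h
      linarith [stay_pos n p (fun t => (hn t).le) k 0, hm 0]
    · obtain ⟨k, rfl⟩ := Nat.exists_eq_add_of_le h
      linarith [stay_neg m p (fun t => (hm t).le) k 0, hn 0]
  set Γ := (U ∪ V)ᶜ with hΓ
  have gnp : ∀ p ∈ Γ, ∀ n, ¬ ∀ t, 0 < x n p t := fun p hp n h => hp (Or.inl ⟨n, h⟩)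
  have gnn : ∀ p ∈ Γ, ∀ n, ¬ ∀ t, x n p t < 0 := fun p hp n h => hp (Or.inr ⟨n, h⟩)
  have xconv : ∀ p, ∃ d, Tendsto (fun n => S.J (x n p)) atTop (nhds d) := by
    intro p
    exact ⟨_, tendsto_atTop_ciInf (xanti p) ⟨-C, by rintro _ ⟨n, rfl⟩; exact xlow n p⟩⟩
  have gK : ∀ p ∈ Γ, ∃ e ∈ S.E2, ∃ φ : ℕ → ℕ, StrictMono φ ∧
      TendstoUniformly (fun j => x (φ j + 1) p) e atTop ∧
      Tendsto (fun j => S.J (x (φ j + 2) p)) atTop (nhds (S.J e)) := by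
    intro p hp
    obtain ⟨d, hd⟩ := xconv p
    have g1 := hd.comp (tendsto_add_atTop_nat 1)
    have g2 := hd.comp (tendsto_add_atTop_nat 2)
    have g3 := g1.sub g2
    rw [sub_self] at g3
    have := S.lemmaK (z := fun j => x j p) (fun j => xB j p) hj0
      (fun j => by rw [← xs]; exact xJ0 _ _)
      (by simp only [← xs]; exact g3)
      (fun j => by rw [← xs]; exact xT _ _)
      (fun j => by rw [← xs]; exact gnp p hp _)
      (fun j => by rw [← xs]; exact gnn p hp _)
    simp only [← xs] at this
    exact this
  have gc : ∀ p ∈ Γ, Tendsto (fun n => S.J (x n p)) atTop (nhds c) := by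
    intro p hp
    obtain ⟨e, he, φ, hφ, -, h3⟩ := gK p hp
    obtain ⟨d, hd⟩ := xconv p
    have h4 : Tendsto (fun j => φ j + 2) atTop atTop :=
      (tendsto_add_atTop_nat 2).comp hφ.tendsto_atTop
    have := tendsto_nhds_unique (hd.comp h4) h3
    rw [this, hEc e he] at hd
    exact hd
  have gcle : ∀ p ∈ Γ, ∀ n, c ≤ S.J (x n p) := fun p hp n => (xanti p).le_of_tendsto (gc p hp) n
  have gpos : ∀ p ∈ Γ, ∀ n, ∃ t, 0 < x n p t := by
    intro p hp n
    by_contra hcon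
    push Not at hcon
    obtain ⟨e, he, φ, hφ, h3, -⟩ := gK p hp
    obtain ⟨t, ht⟩ := he.2.2.2.1
    have h5 : e t ≤ 0 := by
      refine le_of_tendsto (h3.tendsto_at t) ?_
      filter_upwards [hφ.tendsto_atTop.eventually_ge_atTop n] with j hj
      obtain ⟨k, hk⟩ := Nat.exists_eq_add_of_le hj
      have := stay_neg n p hcon (k + 1) t
      rw [hk, add_assoc]; exact this
    linarith
  have gneg : ∀ p ∈ Γ, ∀ n, ∃ t, x n p t < 0 := by
    intro p hp n
    by_contra hcon
    push Not at hcon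
    obtain ⟨e, he, φ, hφ, h3, -⟩ := gK p hp
    obtain ⟨t, ht⟩ := he.2.2.2.2
    have h5 : 0 ≤ e t := by
      refine ge_of_tendsto (h3.tendsto_at t) ?_
      filter_upwards [hφ.tendsto_atTop.eventually_ge_atTop n] with j hj
      obtain ⟨k, hk⟩ := Nat.exists_eq_add_of_le hj
      have := stay_pos n p hcon (k + 1) t
      rw [hk, add_assoc]; exact this
    linarith
  -- the angle functions
  have Zc : ∀ n, Continuous fun p => S.Ps (x n p) := by
    intro n
    rw [continuous_iff_continuousAt]
    intro p
    refine S.Psi_tendsto (B := S.B) (fun i => ?_) (fun i => ?_) (fun i t => ?_) (fun i t => ?_)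
      (fun t => ?_) (fun t => ?_)
    · have := (xB n i).1.1; unfold ppart; fun_prop
    · have := (xB n i).1.1; unfold npart; fun_prop
    · exact (part_bdd (S.B_spec (xB n i) t)).1
    · exact (part_bdd (S.B_spec (xB n i) t)).2
    · exact (xlim n p t).max tendsto_const_nhds
    · exact (xlim n p t).neg.max tendsto_const_nhds
  have minb : ∀ {a b B : ℝ}, |a| ≤ B → |b| ≤ B → |min a b| ≤ B := by
    intro a b B ha hb
    rcases min_choice a b with h | h <;> rw [h] <;> assumption
  have Wc : ∀ n, Continuous fun p => S.Pm (x n p) (x (n + 1) p) := by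
    intro n
    rw [continuous_iff_continuousAt]
    intro p
    refine S.Psi_tendsto (B := S.B) (fun i => ?_) (fun i => ?_) (fun i t => ?_) (fun i t => ?_)
      (fun t => ?_) (fun t => ?_)
    · have := (xB n i).1.1
      have := (xB (n + 1) i).1.1
      unfold ppart; fun_prop
    · have := (xB n i).1.1
      have := (xB (n + 1) i).1.1
      unfold npart; fun_prop
    · exact minb (part_bdd (S.B_spec (xB n i) t)).1 (part_bdd (S.B_spec (xB (n + 1) i) t)).1
    · exact minb (part_bdd (S.B_spec (xB n i) t)).2 (part_bdd (S.B_spec (xB (n + 1) i) t)).2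
    · exact ((xlim n p t).max tendsto_const_nhds).min ((xlim (n + 1) p t).max tendsto_const_nhds)
    · exact ((xlim n p t).neg.max tendsto_const_nhds).min
        ((xlim (n + 1) p t).neg.max tendsto_const_nhds)
  have common_pos : ∀ p ∈ Γ, ∀ n, ∃ t, 0 < x n p t ∧ 0 < x (n + 1) p t := by
    intro p hp n
    obtain ⟨t, ht⟩ := gpos p hp (n + 1)
    rw [xs] at ht ⊢
    obtain ⟨s, h1, h3⟩ := S.reach_pos (xB n p).1 ht
    exact ⟨s, h1, h3 s right_mem_uIcc⟩
  have common_neg : ∀ p ∈ Γ, ∀ n, ∃ t, x n p t < 0 ∧ x (n + 1) p t < 0 := by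
    intro p hp n
    obtain ⟨t, ht⟩ := gneg p hp (n + 1)
    rw [xs] at ht ⊢
    obtain ⟨s, h1, h3⟩ := S.reach_neg (xB n p).1 ht
    exact ⟨s, h1, h3 s right_mem_uIcc⟩
  have lift := lift_angle (Γ := Γ) (Z := fun n p => S.Ps (x n p))
    (W := fun n p => S.Pm (x n p) (x (n + 1) p)) Zc Wc
    (by
      intro p hp
      obtain ⟨κ, hs⟩ := hsep p (gpos p hp 0) (gneg p hp 0)
      refine slit (γ := p.1 + Real.pi) (S.Ps_neg (xB 0 p).1 hs (gpos p hp 0) (gneg p hp 0)) ?_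
      rw [Complex.exp_ofReal_mul_I_re, Complex.exp_ofReal_mul_I_im, Real.cos_add_pi, Real.sin_add_pi]
      nlinarith [Real.cos_sq_add_sin_sq p.1])
    (by
      intro n p hp
      obtain ⟨γ, κ, hs⟩ := S.exists_sep (xB n p).1 (xT n p) (gpos p hp n) (gneg p hp n)
      exact slit (S.Pm_neg (xB n p).1 (xB (n + 1) p).1 (Or.inl rfl) hs (common_pos p hp n)
        (common_neg p hp n)) (S.Ps_neg (xB n p).1 hs (gpos p hp n) (gneg p hp n)))
    (by
      intro n p hp
      obtain ⟨γ, κ, hs⟩ := S.exists_sep (xB (n + 1) p).1 (xT (n + 1) p) (gpos p hp (n + 1))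
        (gneg p hp (n + 1))
      exact slit (S.Ps_neg (xB (n + 1) p).1 hs (gpos p hp (n + 1)) (gneg p hp (n + 1)))
        (S.Pm_neg (xB n p).1 (xB (n + 1) p).1 (Or.inr rfl) hs (common_pos p hp n)
        (common_neg p hp n)))
  -- a free direction
  obtain ⟨c0, hc0, hc1⟩ : ∃ c0 ∈ Ioo (0:ℝ) 1, c0 ∉ (fun e => Complex.arg (S.Ps e)) '' S.E2 := by
    by_contra hcon
    push Not at hcon
    have h1 : (Ioo (0:ℝ) 1).Countable := (hcount.image _).mono hcon
    have h3 := h1.measure_zero volume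
    rw [Real.volume_Ioo] at h3
    simp at h3
  have hP : ∀ N : ℕ, ∃ p ∈ Γ, p ∈ Icc (0:ℝ) (2 * Real.pi) ×ˢ Icc (-1:ℝ) 1 ∧
      S.Ps (x (N + 1) p) = ‖S.Ps (x (N + 1) p)‖ * Complex.exp (c0 * Complex.I) := by
    intro N
    obtain ⟨A, CA, a1, a2, a3⟩ := lift (N + 1)
    obtain ⟨p, hp, hp2, hpA⟩ := topo hU hV hUV (fun θ => ⟨0, htop θ⟩) (fun θ => ⟨0, hbot θ⟩) a1 a2 c0
    have h1 := toIcoMod_mem_Ico Real.two_pi_pos 0 p.1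
    rw [zero_add] at h1
    set n := toIcoDiv Real.two_pi_pos 0 p.1
    have e : toIcoMod Real.two_pi_pos 0 p.1 = p.1 - n * (2 * Real.pi) := by
      rw [toIcoMod, zsmul_eq_mul]
    rw [e] at h1
    have e2 : ∀ m, x m (p.1 - n * (2 * Real.pi), p.2) = x m p := fun m => xper m n p.1 p.2
    refine ⟨(p.1 - n * (2 * Real.pi), p.2), ?_, ⟨⟨h1.1, h1.2.le⟩, hp2⟩, ?_⟩
    · rintro (⟨m, h⟩ | ⟨m, h⟩)
      · rw [e2] at h; exact gnp p hp m h
      · rw [e2] at h; exact gnn p hp m h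
    · rw [e2]
      have := a3 p hp
      rw [hpA] at this
      exact this
  choose p hpΓ hpK hpR using hP
  obtain ⟨p0, -, φ, hφ, hlim⟩ := (isCompact_Icc.prod isCompact_Icc).tendsto_subseq hpK
  have hp0 : p0 ∈ Γ := by
    have : IsClosed Γ := (hU.union hV).isClosed_compl
    exact this.mem_of_tendsto hlim (Eventually.of_forall fun j => hpΓ _)
  have hJlim : ∀ i : ℕ, Tendsto (fun j => S.J (x (φ j + i) (p (φ j)))) atTop (nhds c) := by
    intro i
    rw [Metric.tendsto_nhds]
    intro δ hδ
    have h1 := (gc p0 hp0).comp (tendsto_add_atTop_nat 1)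
    obtain ⟨n, hn⟩ := (h1.eventually (gt_mem_nhds (show c < c + δ by linarith))).exists
    simp only [Function.comp] at hn
    have h3 := ((xJc n p0).comp hlim).eventually (gt_mem_nhds hn)
    filter_upwards [h3, hφ.tendsto_atTop.eventually_ge_atTop (n + 1)] with j h4 h5
    have h6 := gcle _ (hpΓ (φ j)) (φ j + i)
    have h7 : S.J (x (φ j + i) (p (φ j))) ≤ S.J (x (n + 1) (p (φ j))) :=
      xanti (p (φ j)) (by omega)
    simp only [Function.comp] at h4
    rw [Real.dist_eq, abs_lt]
    constructor <;> linarith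
  have hK := S.lemmaK (z := fun j => x (φ j) (p (φ j))) (fun j => xB _ _) hj0
      (fun j => by rw [← xs]; exact xJ0 _ _)
      (by
        simp only [← xs]
        have := (hJlim 1).sub (hJlim 2)
        rw [sub_self] at this
        exact this)
      (fun j => by rw [← xs]; exact xT _ _)
      (fun j => by rw [← xs]; exact gnp _ (hpΓ _) _)
      (fun j => by rw [← xs]; exact gnn _ (hpΓ _) _)
  simp only [← xs] at hK
  obtain ⟨e, he, ψ, hψ, hu, -⟩ := hK
  have hl : Tendsto (fun j => S.Ps (x (φ (ψ j) + 1) (p (φ (ψ j))))) atTop (nhds (S.Ps e)) := by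
    refine S.Psi_tendsto (B := S.B) (fun i => ?_) (fun i => ?_) (fun i t => ?_) (fun i t => ?_)
      (fun t => ?_) (fun t => ?_)
    · have := (xB (φ (ψ i) + 1) (p (φ (ψ i)))).1.1; unfold ppart; fun_prop
    · have := (xB (φ (ψ i) + 1) (p (φ (ψ i)))).1.1; unfold npart; fun_prop
    · exact (part_bdd (S.B_spec (xB _ _) t)).1
    · exact (part_bdd (S.B_spec (xB _ _) t)).2
    · exact (hu.tendsto_at t).max tendsto_const_nhds
    · exact (hu.tendsto_at t).neg.max tendsto_const_nhds
  have hl2 : Tendsto (fun j => (‖S.Ps (x (φ (ψ j) + 1) (p (φ (ψ j))))‖ : ℂ) *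
      Complex.exp (c0 * Complex.I)) atTop (nhds (‖S.Ps e‖ * Complex.exp (c0 * Complex.I))) :=
    ((Complex.continuous_ofReal.tendsto _).comp hl.norm).mul_const _
  have hfin : S.Ps e = ‖S.Ps e‖ * Complex.exp (c0 * Complex.I) :=
    tendsto_nhds_unique hl (hl2.congr fun j => (hpR _).symm)
  obtain ⟨γ, κ, hs⟩ := S.exists_sep he.1.1 he.2.2.1 he.2.2.2.1 he.2.2.2.2
  have hne : S.Ps e ≠ 0 := by
    intro h
    have := S.Ps_neg he.1.1 hs he.2.2.2.1 he.2.2.2.2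
    rw [h] at this
    simp at this
  apply hc1
  refine ⟨e, he, ?_⟩
  simp only
  have hpi := Real.pi_gt_three
  rw [hfin, Complex.exp_mul_I, Complex.arg_mul_cos_add_sin_mul_I (norm_pos_iff.2 hne)
    ⟨by linarith [hc0.1], by linarith [hc0.2]⟩]
end Sys

namespace Sys
variable (S : Sys)

theorem E2_zeros {e : ℝ → ℝ} (he : e ∈ S.E2) :
    {t | t ∈ Ico (0:ℝ) S.P ∧ e t = 0}.ncard = 2 := by
  obtain ⟨hB, hfix, h2, ⟨t1, hp⟩, hn⟩ := he
  obtain ⟨b, a, h1b, hba, ha1, k1, k2, k3, eb, ea⟩ := S.arcs hB.1 h2 hp hn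
  have hP := S.hP
  have hne : ¬ ∀ t, e t = 0 := fun h => by rw [h t1] at hp; exact lt_irrefl _ hp
  have key : ∀ t ∈ Ico t1 (t1 + S.P), e t = 0 → t = b ∨ t = a := by
    intro t ht h0
    by_contra hcon
    push Not at hcon
    obtain ⟨n1, n2⟩ := hcon
    have ht1 : t1 < t := lt_of_le_of_ne ht.1 (by rintro rfl; rw [h0] at hp; exact lt_irrefl _ hp)
    apply hne
    apply S.fix_uc hB.1 hfix h0
    rcases lt_or_gt_of_ne n1 with h | h
    · apply IsLocalMin.deriv_eq_zero
      filter_upwards [Ioo_mem_nhds ht1 h] with x hx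
      rw [h0]; exact k1 x ⟨hx.1.le, hx.2.le⟩
    rcases lt_or_gt_of_ne n2 with h' | h'
    · apply IsLocalMax.deriv_eq_zero
      filter_upwards [Ioo_mem_nhds h h'] with x hx
      rw [h0]; exact k2 x ⟨hx.1.le, hx.2.le⟩
    · apply IsLocalMin.deriv_eq_zero
      filter_upwards [Ioo_mem_nhds h' ht.2] with x hx
      rw [h0]; exact k3 x ⟨hx.1.le, hx.2.le⟩
  have per : ∀ c t, e (toIcoMod hP c t) = e t := fun c t =>
    hB.1.2.sub_zsmul_eq (x := t) (toIcoDiv hP c t)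
  have self : ∀ {c t}, t ∈ Ico c (c + S.P) → toIcoMod hP c t = t := fun h =>
    (toIcoMod_eq_self hP).2 h
  have hset : {t | t ∈ Ico (0:ℝ) S.P ∧ e t = 0} = {toIcoMod hP 0 b, toIcoMod hP 0 a} := by
    ext t
    constructor
    · rintro ⟨h1, h3⟩
      have h4 : toIcoMod hP 0 (toIcoMod hP t1 t) = t := by
        rw [toIcoMod_toIcoMod]; exact self (by rwa [zero_add])
      have := key (toIcoMod hP t1 t) (toIcoMod_mem_Ico hP t1 t) (by rw [per]; exact h3)
      rcases this with h | h
      · left; rw [← h4, h]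
      · right; rw [← h4, h]; rfl
    · have m : ∀ c, toIcoMod hP 0 c ∈ Ico (0:ℝ) S.P := fun c => by
        have := toIcoMod_mem_Ico hP 0 c
        rwa [zero_add] at this
      rintro (h | h)
      · rw [h]; exact ⟨m b, by rw [per]; exact eb⟩
      · rw [mem_singleton_iff.1 h]; exact ⟨m a, by rw [per]; exact ea⟩
  rw [hset]
  apply Set.ncard_pair
  intro h
  have h5 : toIcoMod hP t1 (toIcoMod hP 0 b) = toIcoMod hP t1 (toIcoMod hP 0 a) := by rw [h]
  rw [toIcoMod_toIcoMod, toIcoMod_toIcoMod, self ⟨h1b.le, by linarith⟩,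
    self ⟨by linarith, ha1⟩] at h5
  linarith

theorem E2_order {e : ℝ → ℝ} (he : e ∈ S.E2) {D : ℝ} (h0 : 0 < D) (h1 : D < S.P) :
    ¬ Function.Periodic e D := by
  intro hD
  obtain ⟨hB, hfix, h2, ⟨t1, hp⟩, ⟨t, hn⟩⟩ := he
  have gen : ∀ D : ℝ, 0 < D → Function.Periodic e D → ∀ c, 0 < e c → ∃ s, c < s ∧ s < c + D ∧ e s < 0 := by
    intro D h0 hD c hc
    have hm := toIcoMod_mem_Ico h0 c t
    have hp' : e (toIcoMod h0 c t) = e t := hD.sub_zsmul_eq (x := t) (toIcoDiv h0 c t)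
    refine ⟨toIcoMod h0 c t, lt_of_le_of_ne hm.1 ?_, hm.2, by rw [hp']; exact hn⟩
    intro h
    rw [← h] at hp'
    linarith
  obtain ⟨s, s1, s2, s3⟩ := gen D h0 hD t1 hp
  have hD2 : Function.Periodic e (S.P - D) := hB.1.2.sub_period hD
  have hp3 : 0 < e (t1 + D) := by rw [hD]; exact hp
  obtain ⟨r, r1, r2, r3⟩ := gen (S.P - D) (by linarith) hD2 (t1 + D) hp3
  exact h2 ⟨t1, s, t1 + D, r, s1, s2, r1, by linarith, hp, s3, hp3, r3⟩

/-- profile -/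
noncomputable def clp (s : ℝ) : ℝ := max (-1) (min s 1)
theorem clp_abs (s : ℝ) : |clp s| ≤ 1 := by
  unfold clp
  rw [abs_le]
  exact ⟨le_max_left _ _, max_le (by norm_num) (min_le_right _ _)⟩
noncomputable def prof (σ θ t : ℝ) : ℝ := σ + (1 - |σ|) * Real.cos (S.om * t - θ)

theorem prof_abs {σ : ℝ} (h : |σ| ≤ 1) (θ t : ℝ) : |S.prof σ θ t| ≤ 1 := by
  unfold prof
  calc _ ≤ |σ| + |(1 - |σ|) * Real.cos (S.om * t - θ)| := abs_add_le _ _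
    _ ≤ |σ| + (1 - |σ|) * 1 := by
      rw [abs_mul, abs_of_nonneg (by linarith : 0 ≤ 1 - |σ|)]
      have := Real.abs_cos_le_one (S.om * t - θ)
      have : 0 ≤ 1 - |σ| := by linarith
      gcongr
    _ = 1 := by ring

theorem prof_sign {σ : ℝ} (h : |σ| ≤ 1) {θ t s : ℝ} (ht : 0 < S.prof σ θ t) (hs : S.prof σ θ s < 0) :
    0 < 1 - |σ| := by
  by_contra hc
  have : 1 - |σ| = 0 := by linarith
  simp only [prof, this, zero_mul, add_zero] at ht hs
  linarith

theorem prof_sep {σ : ℝ} (h : 0 < 1 - |σ|) (θ t : ℝ) :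
    (0 < S.prof σ θ t → -σ / (1 - |σ|) < Real.cos (S.om * t - θ)) ∧
    (S.prof σ θ t < 0 → Real.cos (S.om * t - θ) < -σ / (1 - |σ|)) := by
  unfold prof
  constructor
  · intro h1
    rw [div_lt_iff₀ h]; linarith
  · intro h1
    rw [lt_div_iff₀ h]; linarith

theorem no_single_class {v v' : ℝ → ℝ} {ε v2 j0 c : ℝ} (hj0 : 0 < j0) (hv : ∀ t, 0 < v t)
    (hv2 : ∀ t, v t ≤ v2) (hd : ∀ t, HasDerivAt v (v' t) t) (hc : Continuous v')
    (hvp : Function.Periodic v S.P) (hε : 0 < ε) (hal : ∀ t, S.al t ≤ -(ε * v2))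
    (hbe : ε * v2 ≤ S.be)
    (hJ : ∀ σ θ, |σ| ≤ 1 → S.J (fun t => ε * v t * S.prof σ θ t) ≤ -j0)
    (hcount : S.E2.Countable) (hEc : ∀ e ∈ S.E2, S.J e = c) : False := by
  have hcv : Continuous v := continuous_iff_continuousAt.2 fun t => (hd t).continuousAt
  have sgn : ∀ σ θ t, (0 < ε * v t * S.prof σ θ t ↔ 0 < S.prof σ θ t) ∧
      (ε * v t * S.prof σ θ t < 0 ↔ S.prof σ θ t < 0) := by
    intro σ θ t
    have : 0 < ε * v t := mul_pos hε (hv t)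
    exact ⟨mul_pos_iff_of_pos_left this, by
      constructor
      · intro h; by_contra hc; push Not at hc; linarith [mul_nonneg this.le hc]
      · intro h; exact mul_neg_of_pos_of_neg this h⟩
  have hbd : ∀ σ θ t, |σ| ≤ 1 → |ε * v t * S.prof σ θ t| ≤ ε * v2 := by
    intro σ θ t h
    have h1 := S.prof_abs h θ t
    have h2 : 0 < ε * v t := mul_pos hε (hv t)
    rw [abs_mul, abs_of_pos h2]
    calc _ ≤ ε * v t * 1 := by gcongr
      _ ≤ ε * v2 := by rw [mul_one]; gcongr; exact hv2 t
  have homP := S.om_P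
  refine S.theoremA (X0 := fun p t => ε * v t * S.prof (clp p.2) p.1 t) hj0 ?_ ?_ ?_
    (fun p => hJ _ _ (clp_abs _)) ?_ ?_ ?_ ?_ ?_ hcount hEc
  · intro p
    refine ⟨⟨by unfold prof; fun_prop, fun t => ?_⟩, fun t => ?_⟩
    · simp only [hvp t, prof]
      rw [show S.om * (t + S.P) - p.1 = S.om * t - p.1 + 2 * Real.pi by rw [← homP]; ring,
        Real.cos_add_two_pi]
    · have := abs_le.1 (hbd (clp p.2) p.1 t (clp_abs _))
      exact ⟨(hal t).trans this.1, this.2.trans hbe⟩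
  · rintro p ⟨t1, t2, t3, t4, h12, h23, h34, h41, p1, p2, p3, p4⟩
    simp only [(sgn _ _ _).1, (sgn _ _ _).2] at p1 p2 p3 p4
    have hρ := S.prof_sign (clp_abs _) p1 p2
    have ho := S.om_pos
    refine cos_two (x1 := S.om * t1 - p.1) (x2 := S.om * t2 - p.1) (x3 := S.om * t3 - p.1)
      (x4 := S.om * t4 - p.1) ?_ ?_ ?_ ?_ ((S.prof_sep hρ _ _).1 p1) ((S.prof_sep hρ _ _).2 p2)
      ((S.prof_sep hρ _ _).1 p3) ((S.prof_sep hρ _ _).2 p4)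
    · have := mul_lt_mul_of_pos_left h12 ho; linarith
    · have := mul_lt_mul_of_pos_left h23 ho; linarith
    · have := mul_lt_mul_of_pos_left h34 ho; linarith
    · have := mul_lt_mul_of_pos_left h41 ho
      rw [mul_add, homP] at this; linarith
  · intro p
    refine ⟨fun t => ε * v' t * S.prof (clp p.2) p.1 t +
      ε * v t * ((1 - |clp p.2|) * (-Real.sin (S.om * t - p.1) * S.om)), fun t => ?_,
      by unfold prof; fun_prop⟩
    have h1 : HasDerivAt (fun t => S.om * t - p.1) S.om t := by
      simpa using ((hasDerivAt_id t).const_mul S.om).sub_const p.1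
    have h2 : HasDerivAt (S.prof (clp p.2) p.1)
        ((1 - |clp p.2|) * (-Real.sin (S.om * t - p.1) * S.om)) t :=
      (h1.cos.const_mul (1 - |clp p.2|)).const_add (clp p.2)
    exact ((hd t).const_mul ε).mul h2
  · intro p δ hδ
    have hcl : Continuous clp := by unfold clp; fun_prop
    have hD : Tendsto (fun p' : ℝ × ℝ => ε * v2 * (2 * |clp p'.2 - clp p.2| + |p'.1 - p.1|))
        (nhds p) (nhds 0) := by
      have : Continuous (fun p' : ℝ × ℝ => ε * v2 * (2 * |clp p'.2 - clp p.2| + |p'.1 - p.1|)) := by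
        fun_prop
      have := this.tendsto p
      simpa using this
    filter_upwards [hD.eventually (gt_mem_nhds hδ)] with p' hp' t
    refine le_trans ?_ hp'.le
    have e1 : ε * v t * S.prof (clp p'.2) p'.1 t - ε * v t * S.prof (clp p.2) p.1 t =
      ε * v t * (S.prof (clp p'.2) p'.1 t - S.prof (clp p.2) p.1 t) := by ring
    have h2 : 0 < ε * v t := mul_pos hε (hv t)
    rw [e1, abs_mul, abs_of_pos h2]
    have e2 : |S.prof (clp p'.2) p'.1 t - S.prof (clp p.2) p.1 t| ≤
        2 * |clp p'.2 - clp p.2| + |p'.1 - p.1| := by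
      set a := clp p'.2
      set b := clp p.2
      have hb : |b| ≤ 1 := clp_abs _
      have c1 : |Real.cos (S.om * t - p'.1) - Real.cos (S.om * t - p.1)| ≤ |p'.1 - p.1| := by
        have := Real.abs_cos_sub_cos_le (S.om * t - p'.1) (S.om * t - p.1)
        rwa [show S.om * t - p'.1 - (S.om * t - p.1) = -(p'.1 - p.1) by ring, abs_neg] at this
      have c2 := Real.abs_cos_le_one (S.om * t - p'.1)
      have c3 : |(|b| - |a|)| ≤ |a - b| := by
        rw [abs_sub_comm a b]; exact abs_abs_sub_abs_le _ _
      have e3 : S.prof a p'.1 t - S.prof b p.1 t = (a - b) + ((|b| - |a|) * Real.cos (S.om * t - p'.1)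
          + (1 - |b|) * (Real.cos (S.om * t - p'.1) - Real.cos (S.om * t - p.1))) := by
        unfold prof; ring
      rw [e3]
      have d1 : |(|b| - |a|) * Real.cos (S.om * t - p'.1)| ≤ |a - b| * 1 := by
        rw [abs_mul]; gcongr
      have d2 : |(1 - |b|) * (Real.cos (S.om * t - p'.1) - Real.cos (S.om * t - p.1))| ≤
          1 * |p'.1 - p.1| := by
        rw [abs_mul]
        gcongr
        rw [abs_of_nonneg (by linarith)]
        linarith [abs_nonneg b]
      have d3 := abs_add_le (a - b) ((|b| - |a|) * Real.cos (S.om * t - p'.1)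
          + (1 - |b|) * (Real.cos (S.om * t - p'.1) - Real.cos (S.om * t - p.1)))
      have d4 := abs_add_le ((|b| - |a|) * Real.cos (S.om * t - p'.1))
          ((1 - |b|) * (Real.cos (S.om * t - p'.1) - Real.cos (S.om * t - p.1)))
      linarith
    have h3 := hv2 t
    have h4 : 0 ≤ ε * v2 := mul_nonneg hε.le ((hv t).le.trans h3)
    exact mul_le_mul (mul_le_mul_of_nonneg_left h3 hε.le) e2 (abs_nonneg _) h4
  · intro θ t
    have : clp 1 = 1 := by norm_num [clp]
    simp only [this]
    rw [(sgn _ _ _).1]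
    simp [prof]
  · intro θ t
    have : clp (-1) = -1 := by norm_num [clp]
    simp only [this]
    rw [(sgn _ _ _).2]
    simp [prof]
  · intro n θ s
    funext t
    simp only [prof]
    rw [show S.om * t - (θ - n * (2 * Real.pi)) = S.om * t - θ + n * (2 * Real.pi) by ring,
      Real.cos_add_int_mul_two_pi]
  · rintro p ⟨t1, h1⟩ ⟨t2, h2⟩
    simp only [(sgn _ _ _).1, (sgn _ _ _).2] at h1 h2
    have hρ := S.prof_sign (clp_abs _) h1 h2
    refine ⟨clp p.2 / (1 - |clp p.2|), fun t => ?_⟩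
    simp only [(sgn _ _ _).1, (sgn _ _ _).2]
    rw [show S.om * t - (p.1 + Real.pi) = S.om * t - p.1 - Real.pi by ring, Real.cos_sub_pi]
    have h3 := S.prof_sep hρ p.1 t
    rw [neg_div] at h3
    exact ⟨fun h => by linarith [h3.1 h], fun h => by linarith [h3.2 h]⟩
end Sys

/-- data: `gh` Lipschitz with one-sided derivative structure -/
theorem gs_data {g : ℝ → ℝ} (hg : ContDiffOn ℝ 2 g (Ici 0)) (hg0 : g 0 = 0) {R : ℝ} (hR : 0 < R) :
    ∃ gh gd : ℝ → ℝ, ∃ K : ℝ, 0 ≤ K ∧ Continuous gd ∧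
      (∀ x y, |gh x - gh y| ≤ K * |x - y|) ∧ (∀ x, x ≤ 0 → gh x = 0) ∧
      (∀ x, 0 < x → HasDerivAt gh (gd x) x) ∧
      (∀ q : ℝ → ℝ, ∀ t x, hExt q g R t x = q t * gh x) := by
  set dg := derivWithin g (Ici 0) with hdg
  have hdc : ContinuousOn dg (Ici 0) :=
    hg.continuousOn_derivWithin (uniqueDiffOn_Ici 0) (by norm_num)
  set gd : ℝ → ℝ := fun x => dg (max 0 (min x R)) with hgd
  have hgdc : Continuous gd := by
    apply hdc.comp_continuous (f := fun x : ℝ => max 0 (min x R)) (by fun_prop)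
    intro x; exact le_max_left (0:ℝ) (min x R)
  obtain ⟨K, hK⟩ : ∃ K, ∀ x, |gd x| ≤ K := by
    obtain ⟨K, hK⟩ := (isCompact_Icc (a := (0:ℝ)) (b := R)).exists_bound_of_continuousOn
      (hdc.mono Icc_subset_Ici_self)
    refine ⟨K, fun x => ?_⟩
    have := hK (max 0 (min x R)) ⟨le_max_left _ _, max_le hR.le (min_le_right _ _)⟩
    simpa using this
  have hK0 : 0 ≤ K := (abs_nonneg _).trans (hK 0)
  set gs : ℝ → ℝ := fun x => ∫ s in (0:ℝ)..x, gd s with hgs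
  have hgsd : ∀ x, HasDerivAt gs (gd x) x := fun x =>
    intervalIntegral.integral_hasDerivAt_right (hgdc.intervalIntegrable _ _)
      (hgdc.stronglyMeasurableAtFilter _ _) hgdc.continuousAt
  have hlip : ∀ x y, |gs x - gs y| ≤ K * |x - y| := by
    intro x y
    have := Convex.norm_image_sub_le_of_norm_hasDerivWithin_le (f := gs) (f' := gd) (s := univ)
      (C := K) (fun x _ => (hgsd x).hasDerivWithinAt) (fun x _ => by simpa using hK x)
      convex_univ (mem_univ y) (mem_univ x)
    simpa using this
  have hgs0 : gs 0 = 0 := by simp [hgs]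
  have heq : ∀ x, 0 ≤ x → x ≤ R → gs x = g x := by
    intro x hx hxR
    have hI : ∀ s ∈ uIcc 0 x, gd s = dg s := by
      intro s hs
      rw [uIcc_of_le hx] at hs
      simp only [hgd]
      rw [min_eq_left (hs.2.trans hxR), max_eq_right hs.1]
    have : ∫ s in (0:ℝ)..x, dg s = g x - g 0 := by
      apply intervalIntegral.integral_eq_sub_of_hasDerivAt_of_le hx
      · exact hg.continuousOn.mono Icc_subset_Ici_self
      · intro s hs
        have hd : DifferentiableWithinAt ℝ g (Ici 0) s :=
          (hg.differentiableOn (by norm_num)) s hs.1.le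
        exact hd.hasDerivWithinAt.hasDerivAt (Ici_mem_nhds hs.1)
      · exact (hdc.mono (by rw [uIcc_of_le hx]; exact Icc_subset_Ici_self)).intervalIntegrable
    simp only [hgs]
    rw [intervalIntegral.integral_congr hI, this, hg0, sub_zero]
  have hlin : ∀ x, R < x → gs x = g R + dg R * (x - R) := by
    intro x hx
    have h1 : gs x - gs R = ∫ s in R..x, gd s :=
      intervalIntegral.integral_interval_sub_left (hgdc.intervalIntegrable _ _)
        (hgdc.intervalIntegrable _ _)
    have h2 : ∫ s in R..x, gd s = ∫ s in R..x, dg R := by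
      apply intervalIntegral.integral_congr
      intro s hs
      rw [uIcc_of_le hx.le] at hs
      simp only [hgd]
      rw [min_eq_right hs.1, max_eq_right hR.le]
    rw [h2, intervalIntegral.integral_const, heq R hR.le le_rfl] at h1
    simp only [smul_eq_mul] at h1
    linarith
  refine ⟨fun x => gs (max x 0), gd, K, hK0, hgdc, ?_, ?_, ?_, ?_⟩
  · intro x y
    refine (hlip _ _).trans (mul_le_mul_of_nonneg_left ?_ hK0)
    have := abs_max_sub_max_le_abs x y 0
    simpa using this
  · intro x hx; simp only; rw [max_eq_right hx, hgs0]
  · intro x hx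
    refine (hgsd x).congr_of_eventuallyEq ?_
    filter_upwards [lt_mem_nhds hx] with y hy
    rw [max_eq_left hy.le]
  · intro q t x
    unfold hExt
    split_ifs with h1 h2
    · simp only; rw [max_eq_right h1.le, hgs0, mul_zero]
    · simp only; rw [max_eq_left (not_lt.1 h1), heq x (not_lt.1 h1) h2]
    · simp only; rw [max_eq_left (not_lt.1 h1), hlin x (not_le.1 h2)]

theorem deriv_nonpos_zero {gh : ℝ → ℝ} (h : ∀ x, x ≤ 0 → gh x = 0) (c : ℝ) {x : ℝ} (hx : x ≤ 0) :
    deriv (fun y => c * gh y) x = 0 := by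
  by_cases hd : DifferentiableAt ℝ (fun y => c * gh y) x
  · have h1 : HasDerivWithinAt (fun y => c * gh y) (deriv (fun y => c * gh y) x) (Iic x) x :=
      hd.hasDerivAt.hasDerivWithinAt
    have h2 : HasDerivWithinAt (fun y => c * gh y) 0 (Iic x) x := by
      refine (hasDerivWithinAt_const x (Iic x) (0:ℝ)).congr ?_ ?_
      · intro y hy; simp [h y (le_trans hy hx)]
      · simp [h x hx]
    exact (uniqueDiffWithinAt_Iic x).eq_deriv _ h1 h2
  · exact deriv_zero_of_not_differentiableAt hd

theorem IsSol.toD2 {F : ℝ → ℝ → ℝ} {u : ℝ → ℝ} (h : IsSol F u) : ∃ u', D2 u u' (fun t => -F t (u t)) := by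
  obtain ⟨u', h1, h2, h3⟩ := h
  refine ⟨u', h1, h2.neg, fun t => ?_⟩
  rw [h3 t, intervalIntegral.integral_neg]; ring

theorem D2.isSol {F : ℝ → ℝ → ℝ} {u u' : ℝ → ℝ} (h : D2 u u' (fun t => -F t (u t))) : IsSol F u := by
  obtain ⟨h1, h2, h3⟩ := h
  refine ⟨u', h1, ?_, fun t => ?_⟩
  · have := h2.neg
    rw [show (fun s => F s (u s)) = -fun t => -F t (u t) from by funext t; simp]
    exact this
  · rw [h3 t, intervalIntegral.integral_neg]; ring

theorem ustar_pos {T : ℝ} (hT : 0 < T) {q gh us : ℝ → ℝ} {K : ℝ}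
    (hq : LocallyIntegrable q volume) (hK : 0 ≤ K)
    (hlip : ∀ x y, |gh x - gh y| ≤ K * |x - y|) (hz : ∀ x, x ≤ 0 → gh x = 0)
    (hu : IsSol (fun t x => q t * gh x) us) (hup : Function.Periodic us T) {lam : ℝ} (hlam : lam < 0)
    {v : ℝ → ℝ} (hv : ∀ t, 0 < v t) (hvp : Function.Periodic v T)
    (hvs : IsSol (fun t s => (lam + deriv (fun x => q t * gh x) (us t)) * s) v) :
    ∀ t, 0 < us t := by
  by_contra hcon
  push Not at hcon
  have key : ¬ ∀ t, us t ≤ 0 := by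
    intro hall
    obtain ⟨v', hv'⟩ := hvs.toD2
    refine core (t0 := 0) (κ := -lam) hT hv' hvp (hv 0) (by linarith) ?_
    refine Eventually.of_forall fun s _ => ?_
    rw [deriv_nonpos_zero hz _ (hall s)]
    linarith
  obtain ⟨u', hu'⟩ := hu.toD2
  by_cases hneg : ∃ t0, us t0 < 0
  · obtain ⟨t0, ht0⟩ := hneg
    have := const_core (t0 := t0) hT hu'.neg (fun t => by simp only [hup t]) (by simpa using ht0)
      (Eventually.of_forall fun s hs => by
        rw [hz _ (by linarith)]; simp)
    apply key
    intro t
    have := this t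
    linarith
  · push Not at hneg
    obtain ⟨t0, ht0⟩ := hcon
    have h0 : us t0 = 0 := le_antisymm ht0 (hneg t0)
    have hmin : IsLocalMin us t0 := Eventually.of_forall fun t => by rw [h0]; exact hneg t
    have h1 : u' t0 = 0 := hmin.hasDerivAt_eq_zero (hu'.1 t0)
    have := uc (L := fun t => K * |q t|) hu' (by
        have := LI.mul_cont (LI.abs hq) (continuous_const (y := K))
        simpa only [mul_comm] using this)
      (fun t => by positivity)
      (Eventually.of_forall fun s => by
        rw [abs_neg, abs_mul]
        have := hlip (us s) 0
        rw [hz 0 le_rfl, sub_zero, sub_zero] at this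
        nlinarith [abs_nonneg (q s)]) h0 h1
    apply key
    intro t; rw [this t]

/-- concrete data of the problem -/
structure Dat where
  T : ℝ
  hT : 0 < T
  q : ℝ → ℝ
  hq : LocallyIntegrable q volume
  hqp : Function.Periodic q T
  gh : ℝ → ℝ
  gd : ℝ → ℝ
  K : ℝ
  hK : 0 ≤ K
  hgd : Continuous gd
  hlip : ∀ x y, |gh x - gh y| ≤ K * |x - y|
  hder : ∀ x, 0 < x → HasDerivAt gh (gd x) x
  us : ℝ → ℝ
  us' : ℝ → ℝ
  hus : D2 us us' (fun t => -(q t * gh (us t)))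
  hup : Function.Periodic us T
  hupos : ∀ t, 0 < us t
  v : ℝ → ℝ
  v' : ℝ → ℝ
  lam : ℝ
  hlam : lam < 0
  hv : ∀ t, 0 < v t
  hvp : Function.Periodic v T
  hvs : D2 v v' (fun t => -((lam + q t * gd (us t)) * v t))
  a : ℝ → ℝ
  a' : ℝ → ℝ
  w : ℝ → ℝ
  ha : D2 a a' w
  hap : Function.Periodic a T
  hlow : ∀ᵐ t, 0 ≤ w t + q t * gh (a t)
  halt : ∀ t, a t < us t

namespace Dat
variable (D : Dat)

theorem ghc : Continuous D.gh := by
  have : LipschitzWith ⟨D.K, D.hK⟩ D.gh :=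
    LipschitzWith.of_dist_le_mul fun x y => by
      rw [Real.dist_eq, Real.dist_eq]; exact D.hlip x y
  exact this.continuous

/-- integrand -/
noncomputable def G (M t y : ℝ) : ℝ := D.gh (D.us t + min y M) - D.gh (D.us t)

theorem Gc (M : ℝ) : Continuous (Function.uncurry (D.G M)) := by
  have := D.ghc
  have h2 := D.hus.cont
  unfold G
  simp only [Function.uncurry_def]
  fun_prop

theorem Gc1 (M t : ℝ) : Continuous (D.G M t) := by
  have := D.ghc
  unfold G
  fun_prop

noncomputable def f (M t x : ℝ) : ℝ := D.q t * D.G M t x - D.K * |D.q t| * max (x - M) 0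

noncomputable def F (M t x : ℝ) : ℝ :=
  D.q t * (∫ y in (0:ℝ)..x, D.G M t y) - D.K * |D.q t| * ∫ y in (0:ℝ)..x, max (y - M) 0

theorem per_f (M t x : ℝ) : D.f M (t + D.T) x = D.f M t x := by
  simp only [f, G, D.hqp t, D.hup t]

theorem per_F (M t x : ℝ) : D.F M (t + D.T) x = D.F M t x := by
  simp only [F, G, D.hqp t, D.hup t]

theorem hF (M t x : ℝ) : HasDerivAt (D.F M t) (D.f M t x) x := by
  have h : ∀ φ : ℝ → ℝ, Continuous φ → HasDerivAt (fun x => ∫ y in (0:ℝ)..x, φ y) (φ x) x :=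
    fun φ hφ => intervalIntegral.integral_hasDerivAt_right (hφ.intervalIntegrable _ _)
      (hφ.stronglyMeasurableAtFilter _ _) hφ.continuousAt
  exact ((h _ (D.Gc1 M t)).const_mul _).sub
    ((h (fun y => max (y - M) 0) (by fun_prop)).const_mul (D.K * |D.q t|))

/-- the concrete system -/
noncomputable def sys (k : ℕ) (hk : 1 ≤ k) (M : ℝ) (hM : 0 < M) : Sys where
  P := k * D.T
  hP := mul_pos (by exact_mod_cast hk) D.hT
  L := fun t => |D.q t| * (2 * D.K)
  hL := LI.mul_cont (LI.abs D.hq) continuous_const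
  hL0 := fun t => mul_nonneg (abs_nonneg _) (by linarith [D.hK])
  hLp := by
    have := D.hqp.nat_mul k
    intro t; simp only [this t]
  f := D.f M
  f0 := fun t => by
    unfold f G
    rw [min_eq_left hM.le, max_eq_right (by linarith)]; simp
  flip := fun t x y => by
    unfold f G
    have h1 := D.hlip (D.us t + min x M) (D.us t + min y M)
    have h2 : |D.us t + min x M - (D.us t + min y M)| ≤ |x - y| := by
      rw [add_sub_add_left_eq_sub]
      have := abs_min_sub_min_le_max x M y M
      simpa using this
    have h3 : |max (x - M) 0 - max (y - M) 0| ≤ |x - y| := by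
      have := abs_max_sub_max_le_abs (x - M) (y - M) 0
      simpa using this
    have hK := D.hK
    have h4 : |D.gh (D.us t + min x M) - D.gh (D.us t + min y M)| ≤ D.K * |x - y| :=
      h1.trans (mul_le_mul_of_nonneg_left h2 hK)
    have e : D.q t * (D.gh (D.us t + min x M) - D.gh (D.us t)) - D.K * |D.q t| * max (x - M) 0 -
      (D.q t * (D.gh (D.us t + min y M) - D.gh (D.us t)) - D.K * |D.q t| * max (y - M) 0) =
      D.q t * (D.gh (D.us t + min x M) - D.gh (D.us t + min y M)) -
        D.K * |D.q t| * (max (x - M) 0 - max (y - M) 0) := by ring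
    rw [e]
    refine (abs_sub _ _).trans ?_
    rw [abs_mul, abs_mul, abs_of_nonneg (mul_nonneg hK (abs_nonneg (D.q t)))]
    have h5 := mul_le_mul_of_nonneg_left h4 (abs_nonneg (D.q t))
    have h6 := mul_le_mul_of_nonneg_left h3 (mul_nonneg hK (abs_nonneg (D.q t)))
    linarith
  fper := fun t x => by
    have h1 := D.hqp.nat_mul k
    have h2 := D.hup.nat_mul k
    simp only [f, G, h1 t, h2 t]
  fmeas := fun u hu => by
    have h1 : Continuous fun t => D.G M t (u t) := (D.Gc M).comp (continuous_id.prodMk hu)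
    have hq := D.hq.aestronglyMeasurable
    have h2 := (LI.abs D.hq).aestronglyMeasurable
    have h3 : Continuous fun t => max (u t - M) 0 := by fun_prop
    exact (hq.mul h1.aestronglyMeasurable).sub
      ((h2.const_mul D.K).mul h3.aestronglyMeasurable)
  F := D.F M
  F0 := fun t => by simp [F]
  hF := D.hF M
  Fmeas := fun u hu => by
    have h0 : Continuous fun p : ℝ × ℝ => ∫ y in (0:ℝ)..p.2, D.G M p.1 y :=
      intervalIntegral.continuous_parametric_primitive_of_continuous (D.Gc M)
    have h1 : Continuous fun t => ∫ y in (0:ℝ)..u t, D.G M t y :=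
      h0.comp (continuous_id.prodMk hu)
    have hq := D.hq.aestronglyMeasurable
    have h2 := (LI.abs D.hq).aestronglyMeasurable
    have h3 : Continuous fun t => ∫ y in (0:ℝ)..u t, max (y - M) 0 :=
      (intervalIntegral.continuous_primitive
        (fun a b => Continuous.intervalIntegrable (by fun_prop) a b) 0).comp hu
    exact (hq.mul h1.aestronglyMeasurable).sub
      ((h2.const_mul D.K).mul h3.aestronglyMeasurable)
  al := fun t => D.a t - D.us t
  al' := _
  wl := _
  hal := D.ha.sub D.hus
  halp := by
    have h1 := D.hap.nat_mul k
    have h2 := D.hup.nat_mul k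
    intro t; simp only [h1 t, h2 t]
  hlow := by
    filter_upwards [D.hlow] with t ht
    have := D.halt t
    unfold f G
    rw [min_eq_left (by linarith), max_eq_right (by linarith)]
    rw [add_sub_cancel]
    linarith
  halneg := fun t => by linarith [D.halt t]
  be := 2 * M
  hbe := by linarith
  fbe := fun t => by
    unfold f G
    rw [min_eq_right (by linarith), max_eq_left (by linarith)]
    have h1 := D.hlip (D.us t + M) (D.us t)
    rw [add_sub_cancel_left, abs_of_pos hM] at h1
    have h2 := mul_le_mul_of_nonneg_left h1 (abs_nonneg (D.q t))
    rw [← abs_mul] at h2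
    have h3 := le_abs_self (D.q t * (D.gh (D.us t + M) - D.gh (D.us t)))
    linarith

end Dat

namespace Sys
variable (S : Sys)

theorem apriori {A0 : ℝ} (hA : ∀ t, -S.al t ≤ A0) {n : ℕ}
    (hn : ∫ s in (0:ℝ)..S.P, (1 + S.L s) ≤ n / 2) {e : ℝ → ℝ} (he : e ∈ S.E2) :
    ∀ t, |e t| ≤ 2 ^ n * A0 := by
  obtain ⟨⟨hA1, hB⟩, hPhi, -, -, tn, htn⟩ := he
  have hD := S.fix_D2 hA1 hPhi
  have hcomp := hA1.2.compact_of_continuous S.hP.ne' hA1.1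
  obtain ⟨m, ⟨⟨tm, rfl⟩, hm⟩⟩ := hcomp.exists_isLeast (range_nonempty e)
  have hmin : ∀ t, e tm ≤ e t := fun t => hm ⟨t, rfl⟩
  have hd0 : deriv e tm = 0 := by
    have : IsLocalMin e tm := Eventually.of_forall hmin
    exact this.deriv_eq_zero
  have hneg : e tm < 0 := (hmin tn).trans_lt htn
  have habs : |e tm| ≤ A0 := by
    rw [abs_of_neg hneg]
    linarith [(hB tm).1, hA tm]
  intro t
  obtain ⟨s, hs, hts⟩ := hA1.2.exists_mem_Ico S.hP t tm
  have hLI : LocallyIntegrable (fun s => 1 + S.L s) volume :=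
    (LI.of_cont continuous_const).add S.hL
  have hper : Function.Periodic (fun s => 1 + S.L s) S.P := fun t => by simp only [S.hLp t]
  have hint : ∫ s in tm..s, (1 + S.L s) ≤ n / 2 := by
    refine le_trans ?_ hn
    have := hper.intervalIntegral_add_eq tm 0
    rw [zero_add] at this
    rw [← this]
    have h2 := intervalIntegral.integral_add_adjacent_intervals (LI.ii hLI tm s)
      (LI.ii hLI s (tm + S.P))
    have h3 : 0 ≤ ∫ s in s..(tm + S.P), (1 + S.L s) :=
      intervalIntegral.integral_nonneg hs.2.le fun x _ => by linarith [S.hL0 x]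
    linarith
  have := gron hD S.hL S.hL0 (Eventually.of_forall fun s => by
    have := S.flip s (e s) 0
    rw [S.f0, sub_zero, sub_zero] at this
    rwa [abs_neg]) n s hs.1 hint
  rw [hd0, abs_zero, add_zero] at this
  rw [hts]
  have h2 : (2:ℝ) ^ n * |e tm| ≤ 2 ^ n * A0 := by gcongr
  linarith [abs_nonneg (deriv e s)]

end Sys

namespace Dat
variable (D : Dat)

theorem E2_sol {k : ℕ} {hk : 1 ≤ k} {M : ℝ} {hM : 0 < M} {e : ℝ → ℝ}
    (he : e ∈ (D.sys k hk M hM).E2) (hb : ∀ t, |e t| ≤ M) :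
    IsSol (fun t x => D.q t * D.gh x) (fun t => D.us t + e t) := by
  obtain ⟨⟨hA1, hB⟩, hPhi, -, -, -⟩ := he
  have hD := (D.sys k hk M hM).fix_D2 hA1 hPhi
  have h2 := D.hus.add hD
  refine D2.isSol (u' := fun t => D.us' t + deriv e t) ?_
  refine h2.congr_ae (Eventually.of_forall fun t => ?_)
  have h3 := (abs_le.1 (hb t)).2
  change -(D.q t * D.gh (D.us t)) + -(D.f M t (e t)) = _
  unfold f G
  rw [min_eq_left h3, max_eq_right (by linarith)]
  ring

end Dat

theorem Sys.prof_deriv (S : Sys) (σ θ t : ℝ) : HasDerivAt (S.prof σ θ)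
    (-(S.om * (1 - |σ|) * Real.sin (S.om * t - θ))) t := by
  have h1 : HasDerivAt (fun t => S.om * t - θ) S.om t := by
    simpa using ((hasDerivAt_id t).const_mul S.om).sub_const θ
  have := (h1.cos.const_mul (1 - |σ|)).const_add σ
  refine this.congr_deriv ?_
  ring

theorem Sys.prof_sq (S : Sys) (σ θ : ℝ) :
    S.P / 4 ≤ ∫ t in (0:ℝ)..S.P, S.prof σ θ t ^ 2 := by
  set ρ := 1 - |σ| with hρ
  have ho := S.om_pos
  have hP := S.om_P
  have hd : ∀ t, HasDerivAt (fun t => (σ ^ 2 + ρ ^ 2 / 2) * t +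
      2 * σ * ρ / S.om * Real.sin (S.om * t - θ) +
      ρ ^ 2 / (4 * S.om) * Real.sin (2 * (S.om * t - θ))) (S.prof σ θ t ^ 2) t := by
    intro t
    have h1 : HasDerivAt (fun t => S.om * t - θ) S.om t := by
      simpa using ((hasDerivAt_id t).const_mul S.om).sub_const θ
    have h2 := (((hasDerivAt_id t).const_mul (σ ^ 2 + ρ ^ 2 / 2)).add
      (h1.sin.const_mul (2 * σ * ρ / S.om))).add
      ((h1.const_mul 2).sin.const_mul (ρ ^ 2 / (4 * S.om)))
    refine h2.congr_deriv ?_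
    unfold prof
    rw [Real.cos_two_mul, ← hρ]
    field_simp
    ring
  have hc : Continuous fun t => S.prof σ θ t ^ 2 := by
    unfold prof; fun_prop
  rw [intervalIntegral.integral_eq_sub_of_hasDerivAt (fun t _ => hd t) (hc.intervalIntegrable _ _)]
  have e1 : Real.sin (S.om * S.P - θ) = Real.sin (S.om * 0 - θ) := by
    rw [hP, mul_zero, zero_sub, ← Real.sin_add_two_pi (-θ)]; congr 1; ring
  have e2 : Real.sin (2 * (S.om * S.P - θ)) = Real.sin (2 * (S.om * 0 - θ)) := by
    rw [hP, ← Real.sin_add_two_pi (2 * (S.om * 0 - θ)), ← Real.sin_add_two_pi (2 * (S.om * 0 - θ) + 2 * Real.pi)]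
    congr 1; ring
  rw [e1, e2]
  have h3 : (1:ℝ) / 4 ≤ σ ^ 2 + ρ ^ 2 / 2 := by
    rw [hρ, ← sq_abs σ]
    nlinarith [sq_nonneg (3 * |σ| - 1)]
  have := mul_le_mul_of_nonneg_right h3 S.hP.le
  linarith

theorem sum_int {A B u : ℝ → ℝ} (hA : LocallyIntegrable A volume) (hu : Continuous u)
    (hB : LocallyIntegrable B volume) {P c1 c2 c3 c4 : ℝ} :
    ∫ t in (0:ℝ)..P, (A t * c1 + ((u t * c2 + c3) + B t * c4)) =
      (∫ t in (0:ℝ)..P, A t) * c1 + (((∫ t in (0:ℝ)..P, u t) * c2 + P * c3) +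
        (∫ t in (0:ℝ)..P, B t) * c4) := by
  have i1 := (LI.ii hA 0 P).mul_const c1
  have i2 := ((hu.intervalIntegrable (μ := volume) 0 P)).mul_const c2
  have i3 := (continuous_const (y := c3)).intervalIntegrable (μ := volume) 0 P
  have i4 := (LI.ii hB 0 P).mul_const c4
  rw [intervalIntegral.integral_add i1 ((i2.add i3).add i4),
    intervalIntegral.integral_add (i2.add i3) i4, intervalIntegral.integral_add i2 i3,
    intervalIntegral.integral_mul_const, intervalIntegral.integral_mul_const,
    intervalIntegral.integral_mul_const, intervalIntegral.integral_const, sub_zero, smul_eq_mul]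

namespace Dat
variable (D : Dat)

theorem F_low {η : ℝ} (hη : 0 < η) : ∃ δ > 0, ∀ M, δ ≤ M → ∀ t x, |x| ≤ δ →
    1 / 2 * (D.q t * D.gd (D.us t)) * x ^ 2 - η * |D.q t| * x ^ 2 ≤ D.F M t x := by
  have hcomp := D.hup.compact_of_continuous D.hT.ne' D.hus.cont
  obtain ⟨m, ⟨⟨tm, rfl⟩, hm⟩⟩ := hcomp.exists_isLeast (range_nonempty _)
  obtain ⟨m2, ⟨⟨tM, rfl⟩, hM⟩⟩ := hcomp.exists_isGreatest (range_nonempty _)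
  set u1 := D.us tm
  set u2 := D.us tM
  have hu1 : 0 < u1 := D.hupos tm
  have hUC := (isCompact_Icc (a := (0:ℝ)) (b := u2 + u1)).uniformContinuousOn_of_continuous
    D.hgd.continuousOn
  rw [Metric.uniformContinuousOn_iff] at hUC
  obtain ⟨d, hd, hUC⟩ := hUC η hη
  refine ⟨min (d / 2) (u1 / 2), by positivity, fun M hM1 t x hx => ?_⟩
  set δ := min (d / 2) (u1 / 2)
  have hδ1 : δ ≤ d / 2 := min_le_left _ _
  have hδ2 : δ ≤ u1 / 2 := min_le_right _ _
  have ht1 : u1 ≤ D.us t := hm ⟨t, rfl⟩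
  have ht2 : D.us t ≤ u2 := hM ⟨t, rfl⟩
  have k1 : ∀ y, |y| ≤ δ → |D.gd (D.us t + y) - D.gd (D.us t)| ≤ η := by
    intro y hy
    have h := abs_le.1 hy
    have := hUC (D.us t + y) ⟨by linarith, by linarith⟩ (D.us t) ⟨by linarith, by linarith⟩
      (by rw [Real.dist_eq, add_sub_cancel_left]; linarith)
    rw [Real.dist_eq] at this
    exact this.le
  have k2 : ∀ y, |y| ≤ δ → |D.G M t y - D.gd (D.us t) * y| ≤ η * |y| := by
    intro y hy
    have hyM : y ≤ M := (le_abs_self y).trans (hy.trans hM1)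
    have := Convex.norm_image_sub_le_of_norm_hasDerivWithin_le
      (f := fun z => D.gh (D.us t + z) - D.gd (D.us t) * z)
      (f' := fun z => D.gd (D.us t + z) - D.gd (D.us t)) (s := Icc (-|y|) |y|)
      (C := η) (fun z hz => ?_) (fun z hz => ?_) (convex_Icc _ _) (x := 0) (y := y)
      ⟨by linarith [abs_nonneg y], abs_nonneg y⟩ ⟨neg_abs_le y, le_abs_self y⟩
    · simp only [Real.norm_eq_abs, add_zero, mul_zero, sub_zero] at this
      unfold G
      rw [min_eq_left hyM]
      convert this using 2
      ring
    · have hz' : |z| ≤ δ := (abs_le.2 hz).trans hy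
      have hpos : 0 < D.us t + z := by linarith [(abs_le.1 hz').1]
      have h1 := (D.hder _ hpos).comp_const_add (D.us t) z
      have h2 := (hasDerivAt_id z).const_mul (D.gd (D.us t))
      rw [mul_one] at h2
      exact (h1.sub h2).hasDerivWithinAt
    · exact k1 z ((abs_le.2 hz).trans hy)
  have k3 := Convex.norm_image_sub_le_of_norm_hasDerivWithin_le
      (f := fun z => D.F M t z - 1 / 2 * (D.q t * D.gd (D.us t)) * z ^ 2)
      (f' := fun z => D.f M t z - D.q t * D.gd (D.us t) * z) (s := Icc (-|x|) |x|)
      (C := |D.q t| * (η * |x|)) (fun z hz => ?_) (fun z hz => ?_) (convex_Icc _ _) (x := 0) (y := x)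
      ⟨by linarith [abs_nonneg x], abs_nonneg x⟩ ⟨neg_abs_le x, le_abs_self x⟩
  · have h0 : D.F M t 0 = 0 := by simp [F]
    simp only [Real.norm_eq_abs, h0] at k3
    have k4 := (abs_le.1 k3).1
    have : |x - 0| = |x| := by rw [sub_zero]
    rw [this] at k4
    have k5 : |D.q t| * (η * |x|) * |x| = η * |D.q t| * x ^ 2 := by
      rw [← sq_abs x]; ring
    rw [k5] at k4
    linarith
  · have h1 := D.hF M t z
    have h2 := ((hasDerivAt_pow 2 z).const_mul (1 / 2 * (D.q t * D.gd (D.us t))))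
    refine ((h1.sub h2).congr_deriv ?_).hasDerivWithinAt
    norm_num
    ring
  · have hz' := abs_le.2 hz
    have hz2 := hz'.trans hx
    have hzM : z ≤ M := (le_abs_self z).trans (hz2.trans hM1)
    unfold f
    rw [max_eq_right (by linarith), mul_zero, sub_zero, Real.norm_eq_abs, mul_assoc, ← mul_sub, abs_mul]
    exact mul_le_mul_of_nonneg_left ((k2 z hz2).trans (mul_le_mul_of_nonneg_left hz' hη.le))
      (abs_nonneg _)

theorem J_est {k : ℕ} {hk : 1 ≤ k} {M : ℝ} {hM : 0 < M} {v1 v2 η δ ε : ℝ} (hv1 : 0 < v1)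
    (hv1' : ∀ t, v1 ≤ D.v t) (hv2 : ∀ t, D.v t ≤ v2) (hη : 0 < η)
    (hF : ∀ t x, |x| ≤ δ →
      1 / 2 * (D.q t * D.gd (D.us t)) * x ^ 2 - η * |D.q t| * x ^ 2 ≤ D.F M t x)
    (hε : 0 < ε) (hεδ : ε * v2 ≤ δ)
    (hω : (D.sys k hk M hM).om ^ 2 * v2 ^ 2 ≤ -D.lam * v1 ^ 2 / 16)
    (hQ : η * v2 ^ 2 * (∫ t in (0:ℝ)..(k * D.T), |D.q t|) ≤ -D.lam * v1 ^ 2 * (k * D.T) / 32)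
    {σ : ℝ} (θ : ℝ) (hσ : |σ| ≤ 1) :
    (D.sys k hk M hM).J (fun t => ε * D.v t * (D.sys k hk M hM).prof σ θ t) ≤
      -(ε ^ 2 * (-D.lam) * v1 ^ 2 * (k * D.T) / 16) := by
  set S := D.sys k hk M hM with hS
  have hSP : S.P = k * D.T := rfl
  have hSF : S.F = D.F M := rfl
  set X := S.prof σ θ with hX
  set X' : ℝ → ℝ := fun t => -(S.om * (1 - |σ|) * Real.sin (S.om * t - θ)) with hX'
  have hXd : ∀ t, HasDerivAt X (X' t) t := S.prof_deriv σ θ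
  have hXc : Continuous X := by rw [hX]; unfold Sys.prof; fun_prop
  have hX'c : Continuous X' := by fun_prop
  have hX1 : ∀ t, |X t| ≤ 1 := S.prof_abs hσ θ
  have hX2 : ∀ t, X' t ^ 2 ≤ S.om ^ 2 := by
    intro t
    simp only [hX']
    have h1 : Real.sin (S.om * t - θ) ^ 2 ≤ 1 := Real.sin_sq_le_one _
    have h2 : (1 - |σ|) ^ 2 ≤ 1 := by nlinarith [abs_nonneg σ]
    have h3 : (1 - |σ|) ^ 2 * Real.sin (S.om * t - θ) ^ 2 ≤ 1 := by
      nlinarith [sq_nonneg (1 - |σ|), sq_nonneg (Real.sin (S.om * t - θ))]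
    nlinarith [sq_nonneg S.om]
  have hv2p : 0 < v2 := (D.hv 0).trans_le (hv2 0)
  have hvc := D.hvs.cont
  have hv'c := D.hvs.cont'
  have hud : ∀ t, HasDerivAt (fun t => ε * D.v t * X t) (ε * (D.v' t * X t + D.v t * X' t)) t := by
    intro t
    refine (((D.hvs.1 t).const_mul ε).mul (hXd t)).congr_deriv ?_
    ring
  have hder : deriv (fun t => ε * D.v t * X t) = fun t => ε * (D.v' t * X t + D.v t * X' t) :=
    funext fun t => (hud t).deriv
  set ρ : ℝ → ℝ := fun t => -((D.lam + D.q t * D.gd (D.us t)) * D.v t) with hρ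
  set φ : ℝ → ℝ := fun t => D.v t * X t ^ 2 with hφ
  set φ' : ℝ → ℝ := fun t => D.v' t * X t ^ 2 + D.v t * (2 * X t * X' t) with hφ'
  have hφd : ∀ t, HasDerivAt φ (φ' t) t := by
    intro t
    refine ((D.hvs.1 t).mul ((hXd t).pow 2)).congr_deriv ?_
    simp only [hφ']
    norm_num
  have hφc : Continuous φ := by fun_prop
  have hφ'c : Continuous φ' := by fun_prop
  have hI : ∫ s in (0:ℝ)..S.P, (ρ s * φ s + D.v' s * φ' s) = 0 := by
    rw [ibp D.hvs.2.1 D.hvs.2.2 hφd hφ'c]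
    have h1 : D.v S.P = D.v 0 := by
      have := D.hvp.nat_mul k 0
      rwa [zero_add] at this
    have h2 : D.v' S.P = D.v' 0 := by
      have := D.hvs.per' (D.hvp.nat_mul k) 0
      rwa [zero_add] at this
    have h3 : X S.P = X 0 := by
      simp only [hX, Sys.prof]
      rw [S.om_P, mul_zero, zero_sub, ← Real.cos_add_two_pi (-θ)]
      congr 3; ring
    simp only [hφ, h1, h2, h3, sub_self]
  have hrLI : LocallyIntegrable (fun s => ρ s * φ s + D.v' s * φ' s) volume :=
    (LI.mul_cont D.hvs.2.1 hφc).add (LI.of_cont (hv'c.mul hφ'c))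
  unfold Sys.J
  rw [hder, hSF]
  have hle : ∫ t in (0:ℝ)..S.P, (1 / 2 * (ε * (D.v' t * X t + D.v t * X' t)) ^ 2 -
      D.F M t (ε * D.v t * X t)) ≤ ∫ t in (0:ℝ)..S.P,
      ((ρ t * φ t + D.v' t * φ' t) * (ε ^ 2 / 2) + ((X t ^ 2 * (ε ^ 2 / 2 * D.lam * v1 ^ 2) +
        ε ^ 2 / 2 * (v2 ^ 2 * S.om ^ 2)) + |D.q t| * (ε ^ 2 * (η * v2 ^ 2)))) := by
    apply int_mono_ae _ _ S.hP.le
    · refine Eventually.of_forall fun t _ => ?_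
      have hb : |ε * D.v t * X t| ≤ δ := by
        rw [abs_mul, abs_of_pos (mul_pos hε (D.hv t))]
        calc ε * D.v t * |X t| ≤ ε * v2 * 1 :=
              mul_le_mul (mul_le_mul_of_nonneg_left (hv2 t) hε.le) (hX1 t) (abs_nonneg _)
                (mul_pos hε hv2p).le
          _ ≤ δ := by linarith
      have h1 := hF t _ hb
      have hv := D.hv t
      have s1 : v1 ^ 2 ≤ D.v t ^ 2 := by nlinarith [hv1' t]
      have s2 : D.v t ^ 2 ≤ v2 ^ 2 := by nlinarith [hv2 t]
      have s3 : X t ^ 2 ≤ 1 := (sq_le_one_iff_abs_le_one _).2 (hX1 t)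
      have s4 : D.v t ^ 2 * X' t ^ 2 ≤ v2 ^ 2 * S.om ^ 2 :=
        mul_le_mul s2 (hX2 t) (sq_nonneg _) (sq_nonneg _)
      have s5 : D.v t ^ 2 * X t ^ 2 ≤ v2 ^ 2 := by
        nlinarith [sq_nonneg (D.v t), sq_nonneg (X t)]
      have s6 : D.lam * (D.v t ^ 2 * X t ^ 2) ≤ D.lam * (v1 ^ 2 * X t ^ 2) :=
        mul_le_mul_of_nonpos_left (mul_le_mul_of_nonneg_right s1 (sq_nonneg _)) D.hlam.le
      have s7 : η * |D.q t| * (D.v t ^ 2 * X t ^ 2) ≤ η * |D.q t| * v2 ^ 2 :=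
        mul_le_mul_of_nonneg_left s5 (mul_nonneg hη.le (abs_nonneg _))
      have e2 : 0 ≤ ε ^ 2 := sq_nonneg ε
      have s8 : ε ^ 2 * (1 / 2 * (D.v t ^ 2 * X' t ^ 2) + 1 / 2 * (D.lam * (D.v t ^ 2 * X t ^ 2)) +
          η * |D.q t| * (D.v t ^ 2 * X t ^ 2)) ≤ ε ^ 2 * (1 / 2 * (v2 ^ 2 * S.om ^ 2) +
          1 / 2 * (D.lam * (v1 ^ 2 * X t ^ 2)) + η * |D.q t| * v2 ^ 2) :=
        mul_le_mul_of_nonneg_left (by linarith) e2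
      simp only [hρ, hφ, hφ']
      linarith
    · exact (LI.of_cont (by fun_prop)).sub (S.FLI (u := fun t => ε * D.v t * X t) (by fun_prop))
    · exact (LI.mul_cont hrLI continuous_const).add ((LI.of_cont (by fun_prop)).add
        (LI.mul_cont (LI.abs D.hq) continuous_const))
  refine hle.trans ?_
  rw [sum_int hrLI (u := fun t => X t ^ 2) (by fun_prop) (LI.abs D.hq), hI]
  have hsq := S.prof_sq σ θ
  rw [← hX] at hsq
  have hP := S.hP
  rw [← hSP] at hQ ⊢
  set I2 := ∫ t in (0:ℝ)..S.P, X t ^ 2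
  set Q := ∫ t in (0:ℝ)..S.P, |D.q t|
  simp only [zero_mul, zero_add]
  have hlam := D.hlam
  have b1 : D.lam * v1 ^ 2 * I2 ≤ D.lam * v1 ^ 2 * (S.P / 4) :=
    mul_le_mul_of_nonpos_left hsq (mul_nonpos_of_nonpos_of_nonneg hlam.le (sq_nonneg _))
  have b2 := mul_le_mul_of_nonneg_right hω hP.le
  have b3 : ε ^ 2 * (1 / 2 * (D.lam * v1 ^ 2 * I2) + 1 / 2 * (S.om ^ 2 * v2 ^ 2 * S.P) +
      η * v2 ^ 2 * Q) ≤ ε ^ 2 * (1 / 2 * (D.lam * v1 ^ 2 * (S.P / 4)) +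
      1 / 2 * (-D.lam * v1 ^ 2 / 16 * S.P) + -D.lam * v1 ^ 2 * S.P / 32) :=
    mul_le_mul_of_nonneg_left (by linarith) (sq_nonneg ε)
  linarith

end Dat

theorem per_minmax {u : ℝ → ℝ} {T : ℝ} (hT : 0 < T) (hu : Continuous u) (hp : Function.Periodic u T) :
    ∃ s r, ∀ t, u s ≤ u t ∧ u t ≤ u r := by
  have hcomp := hp.compact_of_continuous hT.ne' hu
  obtain ⟨m, ⟨⟨tm, rfl⟩, hm⟩⟩ := hcomp.exists_isLeast (range_nonempty _)
  obtain ⟨m2, ⟨⟨tM, rfl⟩, hM⟩⟩ := hcomp.exists_isGreatest (range_nonempty _)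
  exact ⟨tm, tM, fun t => ⟨hm ⟨t, rfl⟩, hM ⟨t, rfl⟩⟩⟩

namespace Dat
variable (D : Dat)

theorem J_shift {k : ℕ} {hk : 1 ≤ k} {M : ℝ} {hM : 0 < M} {e : ℝ → ℝ}
    (he : e ∈ (D.sys k hk M hM).E2) (l : ℤ) :
    (D.sys k hk M hM).J (fun t => e (t + l * D.T)) = (D.sys k hk M hM).J e := by
  obtain ⟨⟨hA1, hB⟩, hPhi, -, -, -⟩ := he
  have hD := (D.sys k hk M hM).fix_D2 hA1 hPhi
  have hFp : ∀ x, Function.Periodic (fun t => D.F M t x) D.T := fun x t => D.per_F M t x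
  unfold Sys.J
  change ∫ t in (0:ℝ)..(k * D.T), (1 / 2 * (deriv (fun t => e (t + l * D.T)) t) ^ 2 -
    D.F M t (e (t + l * D.T))) = ∫ t in (0:ℝ)..(k * D.T), (1 / 2 * (deriv e t) ^ 2 - D.F M t (e t))
  have h1 : ∀ t, (1 / 2 * (deriv (fun t => e (t + l * D.T)) t) ^ 2 -
    D.F M t (e (t + l * D.T))) = (fun t => 1 / 2 * (deriv e t) ^ 2 - D.F M t (e t)) (t + l * D.T) := by
    intro t
    have h2 := (hFp (e (t + l * D.T))).int_mul l t
    simp only [deriv_comp_add_const, h2]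
  have hper : Function.Periodic (fun t => 1 / 2 * (deriv e t) ^ 2 - D.F M t (e t)) (k * D.T) := by
    intro t
    have h2 := (hFp (e t)).nat_mul k t
    have h3 : deriv e (t + k * D.T) = deriv e t := hD.per' hA1.2 t
    have h4 : e (t + k * D.T) = e t := hA1.2 t
    simp only [h3, h4, h2]
  simp only [h1]
  rw [intervalIntegral.integral_comp_add_right
    (fun t => 1 / 2 * (deriv e t) ^ 2 - D.F M t (e t)) (l * D.T)]
  have := hper.intervalIntegral_add_eq (l * D.T) 0
  rw [zero_add] at this
  rw [zero_add, add_comm, this]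

theorem main : ∃ ks : ℕ, 1 ≤ ks ∧ ∀ k : ℕ, ks ≤ k → ∃ hk : 1 ≤ k, ∃ M, ∃ hM : 0 < M,
    (∀ e ∈ (D.sys k hk M hM).E2, ∀ t, |e t| ≤ M) ∧
    ∃ e0 ∈ (D.sys k hk M hM).E2, ∃ e1 ∈ (D.sys k hk M hM).E2,
      ¬ ∃ l : ℤ, ∀ t, e1 t = e0 (t + l * D.T) := by
  have hT := D.hT
  obtain ⟨s1, s2, hv12⟩ := per_minmax hT D.hvs.cont D.hvp
  set v1 := D.v s1 with hv1d
  set v2 := D.v s2 with hv2d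
  have hv1 : 0 < v1 := D.hv s1
  have hv2 : 0 < v2 := D.hv s2
  obtain ⟨s3, s4, hA⟩ := per_minmax hT (D.hus.cont.sub D.ha.cont)
    (fun t => by simp only [D.hup t, D.hap t] : Function.Periodic (fun t => D.us t - D.a t) D.T)
  simp only [Pi.sub_apply] at hA
  set a0 := D.us s3 - D.a s3 with ha0d
  set A0 := D.us s4 - D.a s4 with hA0d
  have ha0 : 0 < a0 := by linarith [D.halt s3]
  have hA0 : 0 < A0 := by linarith [D.halt s4]
  have hlam := D.hlam
  have hc : 0 < -D.lam * v1 ^ 2 := mul_pos (by linarith) (by positivity)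
  refine ⟨⌈16 * (2 * Real.pi / D.T) ^ 2 * v2 ^ 2 / (-D.lam * v1 ^ 2)⌉₊ + 1, by omega, ?_⟩
  intro k hks
  have hk : 1 ≤ k := by omega
  have hkC : 16 * (2 * Real.pi / D.T) ^ 2 * v2 ^ 2 / (-D.lam * v1 ^ 2) ≤ k := by
    refine (Nat.le_ceil _).trans ?_
    exact_mod_cast (by omega : ⌈16 * (2 * Real.pi / D.T) ^ 2 * v2 ^ 2 / (-D.lam * v1 ^ 2)⌉₊ ≤ k)
  have hk1 : (1:ℝ) ≤ k := by exact_mod_cast hk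
  obtain ⟨n, hn⟩ := exists_nat_ge (2 * ∫ s in (0:ℝ)..(k * D.T), (1 + |D.q s| * (2 * D.K)))
  set Q := ∫ t in (0:ℝ)..(k * D.T), |D.q t| with hQ
  have hQ0 : 0 ≤ Q := intervalIntegral.integral_nonneg (by positivity) fun t _ => abs_nonneg _
  set η := (-D.lam * v1 ^ 2 * (k * D.T) / 32) / (v2 ^ 2 * Q + 1) with hηd
  have hden : 0 < v2 ^ 2 * Q + 1 := by positivity
  have hη : 0 < η := by
    apply div_pos _ hden
    have : 0 < (k:ℝ) * D.T := by positivity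
    positivity
  have hηQ : η * v2 ^ 2 * Q ≤ -D.lam * v1 ^ 2 * (k * D.T) / 32 := by
    have : η * (v2 ^ 2 * Q + 1) = -D.lam * v1 ^ 2 * (k * D.T) / 32 := by
      rw [hηd]; field_simp
    linarith
  obtain ⟨δ, hδ, hF⟩ := D.F_low hη
  set M := max (2 ^ n * A0) δ with hMd
  have hM : 0 < M := hδ.trans_le (le_max_right _ _)
  set ε := min δ a0 / v2 with hεd
  have hε : 0 < ε := by positivity
  have hεv : ε * v2 = min δ a0 := by rw [hεd]; field_simp
  refine ⟨hk, M, hM, ?_, ?_⟩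
  · intro e he t
    refine ((D.sys k hk M hM).apriori (A0 := A0) (n := n) ?_ ?_ he t).trans (le_max_left _ _)
    · intro t
      change -(D.a t - D.us t) ≤ A0
      linarith [(hA t).2]
    · change ∫ s in (0:ℝ)..(k * D.T), (1 + |D.q s| * (2 * D.K)) ≤ n / 2
      linarith
  · by_contra hcon
    push Not at hcon
    have hω : (D.sys k hk M hM).om ^ 2 * v2 ^ 2 ≤ -D.lam * v1 ^ 2 / 16 := by
      have e1 : (D.sys k hk M hM).om = 2 * Real.pi / D.T / k := by
        change 2 * Real.pi / (k * D.T) = _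
        field_simp
      rw [e1]
      rw [div_le_iff₀ hc] at hkC
      have hk2 : (0:ℝ) < (k:ℝ) ^ 2 := by positivity
      rw [div_pow, div_mul_eq_mul_div, div_le_iff₀ hk2]
      have : (k:ℝ) ≤ (k:ℝ) ^ 2 := by nlinarith
      nlinarith
    have fin : ∀ c, (D.sys k hk M hM).E2.Countable →
        (∀ e ∈ (D.sys k hk M hM).E2, (D.sys k hk M hM).J e = c) → False := by
      intro c h1 h2
      refine (D.sys k hk M hM).no_single_class (v := D.v) (v' := D.v') (ε := ε) (v2 := v2)
        (j0 := ε ^ 2 * (-D.lam) * v1 ^ 2 * (k * D.T) / 16) (c := c) ?_ D.hv (fun t => (hv12 t).2)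
        D.hvs.1 D.hvs.cont' (D.hvp.nat_mul k) hε ?_ ?_ ?_ h1 h2
      · have : 0 < (k:ℝ) * D.T := by positivity
        have : 0 < -D.lam := by linarith
        positivity
      · intro t
        change D.a t - D.us t ≤ _
        rw [hεv]
        linarith [(hA t).1, min_le_right δ a0]
      · change _ ≤ 2 * M
        rw [hεv]
        linarith [min_le_left δ a0, le_max_right (2 ^ n * A0) δ]
      · intro σ θ hσ
        exact D.J_est hv1 (fun t => (hv12 t).1) (fun t => (hv12 t).2) hη (hF M (le_max_right _ _)) hε
          (by rw [hεv]; exact min_le_left _ _) hω hηQ θ hσ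
    rcases (D.sys k hk M hM).E2.eq_empty_or_nonempty with h0 | ⟨e0, he0⟩
    · exact fin 0 (by rw [h0]; exact countable_empty) (by rw [h0]; simp)
    · have hsh : ∀ e ∈ (D.sys k hk M hM).E2, ∃ l : ℤ, e = fun t => e0 (t + l * D.T) := by
        intro e he
        obtain ⟨l, hl⟩ := hcon e0 he0 e he
        exact ⟨l, funext hl⟩
      refine fin ((D.sys k hk M hM).J e0) ?_ ?_
      · refine (countable_range fun l : ℤ => fun t : ℝ => e0 (t + l * D.T)).mono ?_
        intro e he
        obtain ⟨l, rfl⟩ := hsh e he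
        exact ⟨l, rfl⟩
      · intro e he
        obtain ⟨l, rfl⟩ := hsh e he
        exact D.J_shift he0 l

theorem E2_all {k : ℕ} {hk : 1 ≤ k} {M : ℝ} {hM : 0 < M} {e : ℝ → ℝ}
    (he : e ∈ (D.sys k hk M hM).E2) (hb : ∀ t, |e t| ≤ M) :
    IsSol (fun t x => D.q t * D.gh x) (fun t => D.us t + e t) ∧
    IsSubharmonic (fun t => D.us t + e t) D.T k ∧
    {t | t ∈ Set.Ico (0:ℝ) ((k:ℝ) * D.T) ∧ D.us t + e t = D.us t}.ncard = 2 ∧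
    ∀ t, D.a t ≤ D.us t + e t := by
  refine ⟨D.E2_sol he hb, ⟨?_, ?_⟩, ?_, ?_⟩
  · intro t
    have h1 : e (t + k * D.T) = e t := he.1.1.2 t
    have h2 := D.hup.nat_mul k t
    simp only [h1, h2]
  · intro l hl1 hlk hper
    have hl : (0:ℝ) < l := by exact_mod_cast hl1
    refine (D.sys k hk M hM).E2_order he (D := l * D.T) (mul_pos hl D.hT) ?_ ?_
    · change (l:ℝ) * D.T < k * D.T
      exact mul_lt_mul_of_pos_right (by exact_mod_cast hlk) D.hT
    · intro t
      have h1 := hper t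
      have h2 := D.hup.nat_mul l t
      simp only at h1
      linarith
  · have := (D.sys k hk M hM).E2_zeros he
    change {t | t ∈ Set.Ico (0:ℝ) ((k:ℝ) * D.T) ∧ e t = 0}.ncard = 2 at this
    simpa using this
  · intro t
    have : D.a t - D.us t ≤ e t := (he.1.2 t).1
    linarith

end Dat

theorem stmt4 (T : ℝ) (hT : 0 < T) (q : ℝ → ℝ)
    (hqper : Function.Periodic q T)
    (hqloc : MeasureTheory.LocallyIntegrable q MeasureTheory.volume)
    (g : ℝ → ℝ) (hgC2 : ContDiffOn ℝ 2 g (Set.Ici 0))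
    (hg0 : g 0 = 0) (hgpos : ∀ s : ℝ, 0 < s → 0 < g s)
    (R : ℝ) (hR : 0 < R)
    (ustar : ℝ → ℝ)
    (hustar : IsSol (hExt q g R) ustar) (hustarper : Function.Periodic ustar T)
    -- (i) the principal eigenvalue of `v'' + (λ + ∂ₛ h(t,u*(t))) v = 0` is negative:
    (heig : ∃ lam : ℝ, lam < 0 ∧ ∃ v : ℝ → ℝ, (∀ t, 0 < v t) ∧ Function.Periodic v T ∧
      IsSol (fun t s => (lam + deriv (fun x => hExt q g R t x) (ustar t)) * s) v)
    -- (ii) a `T`-periodic lower solution `α` of class `W²·¹_loc` with `α < u*`: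
    (α : ℝ → ℝ) (hαper : Function.Periodic α T)
    (hαlow : ∃ α' w : ℝ → ℝ,
      (∀ t, HasDerivAt α (α' t) t) ∧
      MeasureTheory.LocallyIntegrable w MeasureTheory.volume ∧
      (∀ t, α' t = α' 0 + ∫ s in (0:ℝ)..t, w s) ∧
      (∀ᵐ t ∂MeasureTheory.volume, 0 ≤ w t + hExt q g R t (α t)))
    (hαlt : ∀ t, α t < ustar t) :
    ∃ kstar : ℕ, 1 ≤ kstar ∧ ∀ k : ℕ, kstar ≤ k →
      ∃ mk : ℕ, 1 ≤ mk ∧ ∀ j : ℕ, Nat.Coprime j k → 1 ≤ j → j ≤ mk →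
        ∃ u₁ u₂ : ℝ → ℝ,
          (IsSol (hExt q g R) u₁ ∧ IsSubharmonic u₁ T k ∧
            {t | t ∈ Set.Ico (0:ℝ) ((k:ℝ) * T) ∧ u₁ t = ustar t}.ncard = 2 * j ∧
            ∀ t, α t ≤ u₁ t) ∧
          (IsSol (hExt q g R) u₂ ∧ IsSubharmonic u₂ T k ∧
            {t | t ∈ Set.Ico (0:ℝ) ((k:ℝ) * T) ∧ u₂ t = ustar t}.ncard = 2 * j ∧
            ∀ t, α t ≤ u₂ t) ∧
          ¬ SameClass u₁ u₂ T := by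
  obtain ⟨gh, gd, K, hK, hgd, hlip, hz, hder, hh⟩ := gs_data hgC2 hg0 hR
  have hhe : hExt q g R = fun t x => q t * gh x := by
    funext t x; exact hh q t x
  simp only [hhe] at hustar heig hαlow ⊢
  obtain ⟨lam, hlam, v, hv, hvp, hvs⟩ := heig
  have hpos := ustar_pos hT hqloc hK hlip hz hustar hustarper hlam hv hvp hvs
  have hdd : ∀ t, deriv (fun x => q t * gh x) (ustar t) = q t * gd (ustar t) := fun t =>
    ((hder _ (hpos t)).const_mul (q t)).deriv
  simp only [hdd] at hvs
  obtain ⟨v', hv'⟩ := hvs.toD2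
  obtain ⟨us', hus'⟩ := hustar.toD2
  obtain ⟨α', w, ha1, ha2, ha3, ha4⟩ := hαlow
  let D : Dat := ⟨T, hT, q, hqloc, hqper, gh, gd, K, hK, hgd, hlip, hder, ustar, us', hus', hustarper,
    hpos, v, v', lam, hlam, hv, hvp, hv', α, α', w, ⟨ha1, ha2, ha3⟩, hαper, ha4, hαlt⟩
  obtain ⟨ks, hks, hmain⟩ := D.main
  refine ⟨ks, hks, fun k hk => ⟨1, le_rfl, fun j _ hj1 hj2 => ?_⟩⟩
  obtain rfl : j = 1 := le_antisymm hj2 hj1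
  obtain ⟨hk1, M, hM, hb, e0, he0, e1, he1, hne⟩ := hmain k hk
  refine ⟨fun t => ustar t + e0 t, fun t => ustar t + e1 t, D.E2_all he0 (hb e0 he0),
    D.E2_all he1 (hb e1 he1), ?_⟩
  rintro ⟨l, hl⟩
  refine hne ⟨l, fun t => ?_⟩
  have h1 := hl t
  have h2 := hustarper.int_mul l t
  simp only at h1
  change e1 t = e0 (t + l * T)
  linarith
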